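/- arXiv:2407.16980 — 3 statements merged into one kernel-verified Lean document; each statement's English description precedes it below -/
import Mathlib

section
/- There is a universal constant C such that for every square-integrable martingale difference sequence {Y_m}_{m=1}^n, W_3(X_n, N) ≤ C ( L_3 + ‖V_n² − 1‖_{3/2}^{1/2} ), where N is a standard normal random variable. -/
open MeasureTheory ProbabilityTheory Real Filter

noncomputable section

/-- `E[|U|^q]^{1/q}`. -/
def rnorm {Ω : Type*} [MeasurableSpace Ω] (μ : Measure Ω) (q : ℝ) (U : Ω → ℝ) : ℝ :=
  (∫ ω, |U ω| ^ q ∂μ) ^ (1 / q)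

/-- Wasserstein distance of order `r` between two laws on `ℝ`, defined as the infimum of
`E[|U'-V'|^r]^{1/r}` over all couplings. -/
def wassersteinDist (r : ℝ) (μ ν : Measure ℝ) : ℝ :=
  sInf { d : ℝ | ∃ cpl : Measure (ℝ × ℝ), IsProbabilityMeasure cpl ∧
    cpl.map Prod.fst = μ ∧ cpl.map Prod.snd = ν ∧
    d = (∫ p, |p.1 - p.2| ^ r ∂cpl) ^ (1 / r) }

/-- The standard normal law on `ℝ`. -/
def stdGaussian : Measure ℝ := gaussianReal 0 1

/-- `{Y_i}_{i=1}^n` is a square-integrable martingale difference sequence w.r.t. `F`. -/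
structure IsMDS {Ω : Type*} [m0 : MeasurableSpace Ω] (μ : Measure Ω)
    (F : ℕ → MeasurableSpace Ω) (n : ℕ) (Y : ℕ → Ω → ℝ) : Prop where
  protected le : ∀ i, F i ≤ m0
  protected mono : Monotone F
  protected adapted : ∀ i, 1 ≤ i → i ≤ n → Measurable[F i] (Y i)
  protected memL2 : ∀ i, 1 ≤ i → i ≤ n → MemLp (Y i) 2 μ
  protected mdiff : ∀ i, 1 ≤ i → i ≤ n → μ[Y i | F (i - 1)] =ᵐ[μ] 0

/-- An N-function. -/
def IsNFunction (φ : ℝ → ℝ) : Prop :=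
  ConvexOn ℝ (Set.Ici 0) φ ∧ (∀ x, 0 ≤ x → 0 ≤ φ x) ∧
  Tendsto (fun x => φ x / x) (nhdsWithin 0 (Set.Ioi 0)) (nhds 0) ∧
  Tendsto (fun x => φ x / x) atTop atTop ∧
  (∀ x, 0 < x → 0 < φ x)

/-- `φ₁ ≼ φ₂` : the ratio `φ₂/φ₁` is non-decreasing on `(0,∞)`. -/
def Dominates (φ₁ φ₂ : ℝ → ℝ) : Prop :=
  MonotoneOn (fun x => φ₂ x / φ₁ x) (Set.Ioi (0 : ℝ))

/-- Generalized inverse of `φ` on `[0,∞)`. -/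
def ninv (φ : ℝ → ℝ) (y : ℝ) : ℝ := sInf {x : ℝ | 0 ≤ x ∧ y ≤ φ x}

/-- Orlicz norm of the finite sequence `{Y_i}_{i=1}^n`. -/
def orliczSeqNorm {Ω : Type*} [MeasurableSpace Ω] (μ : Measure Ω) (φ : ℝ → ℝ)
    (n : ℕ) (Y : ℕ → Ω → ℝ) : ℝ :=
  sInf {c : ℝ | 0 < c ∧ (1 / n : ℝ) * ∑ i ∈ Finset.Icc 1 n, ∫ ω, φ (|Y i ω| / c) ∂μ ≤ 1}


open scoped ENNReal

/-- Zolotarev's ideal distance of integer order `r`: the supremum of `E f(U) - E f(V)` over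
`(r-1)`-times differentiable `f` whose `(r-1)`-st derivative is `1`-Lipschitz. -/
def zolotarev {Ω : Type*} [MeasurableSpace Ω] (r : ℕ) (μ : Measure Ω) (U : Ω → ℝ)
    (ν : Measure ℝ) : ℝ :=
  sSup { d : ℝ | ∃ f : ℝ → ℝ, ContDiff ℝ (r - 1 : ℕ) f ∧
    LipschitzWith 1 (iteratedDeriv (r - 1) f) ∧
    d = (∫ ω, f (U ω) ∂μ) - ∫ x, f x ∂ν }

/-- The Fenchel–Legendre transform of `φ` (with the supremum over `y ≥ 0`). -/
def fenchel (φ : ℝ → ℝ) (x : ℝ) : ℝ := sSup ((fun y => x * y - φ y) '' Set.Ici 0)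

/-- `C_φ = sup_{x,y>0} (φ⁻¹(x)φ_*⁻¹(x)/x) / (φ⁻¹(y)φ_*⁻¹(y)/y)`. -/
def nratioConst (φ : ℝ → ℝ) : ℝ :=
  sSup { r : ℝ | ∃ x > (0:ℝ), ∃ y > (0:ℝ),
    r = (ninv φ x * ninv (fenchel φ) x / x) / (ninv φ y * ninv (fenchel φ) y / y) }

/-- `λ_m = ( Σ_{i=m+1}^n σ_i²(Y) + β² s_n² )^{1/2}`. -/
def lamCV {Ω : Type*} [MeasurableSpace Ω] (μ : Measure Ω) (F : ℕ → MeasurableSpace Ω)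
    (n : ℕ) (Y : ℕ → Ω → ℝ) (sn β : ℝ) (m : ℕ) (ω : Ω) : ℝ :=
  Real.sqrt ((∑ j ∈ Finset.Icc (m + 1) n, (μ[fun ω' => Y j ω' ^ 2 | F (j - 1)]) ω)
    + β ^ 2 * sn ^ 2)

/-- left end of the gap of `O` around `x` -/
def lend (O : Set ℝ) (x : ℝ) : ℝ := sSup {z | z ≤ x ∧ z ∉ O}
def rend (O : Set ℝ) (x : ℝ) : ℝ := sInf {z | x ≤ z ∧ z ∉ O}
def qf (O : Set ℝ) (x : ℝ) : ℝ := (x - lend O x) * (rend O x - x) / (rend O x - lend O x)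
def qd (O : Set ℝ) (x : ℝ) : ℝ := (lend O x + rend O x - 2 * x) / (rend O x - lend O x)

structure GoodO (O : Set ℝ) (R : ℝ) : Prop where
  op : IsOpen O
  sub : ∀ x ∈ O, |x| < R

lemma lend_bdd (O : Set ℝ) (x : ℝ) : BddAbove {z | z ≤ x ∧ z ∉ O} := ⟨x, fun _ h => h.1⟩
lemma rend_bdd (O : Set ℝ) (x : ℝ) : BddBelow {z | x ≤ z ∧ z ∉ O} := ⟨x, fun _ h => h.1⟩


lemma lend_ne {O : Set ℝ} {R : ℝ} (h : GoodO O R) (x : ℝ) : {z | z ≤ x ∧ z ∉ O}.Nonempty := by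
  refine ⟨min x (-R), min_le_left _ _, fun hx => ?_⟩
  have := h.sub _ hx
  have := (abs_lt.1 this).1
  exact absurd this (not_lt.2 (min_le_right _ _))

lemma rend_ne {O : Set ℝ} {R : ℝ} (h : GoodO O R) (x : ℝ) : {z | x ≤ z ∧ z ∉ O}.Nonempty := by
  refine ⟨max x R, le_max_left _ _, fun hx => ?_⟩
  have := h.sub _ hx
  have := (abs_lt.1 this).2
  exact absurd this (not_lt.2 (le_max_right _ _))

lemma lend_mem {O : Set ℝ} {R : ℝ} (h : GoodO O R) (x : ℝ) : lend O x ≤ x ∧ lend O x ∉ O := by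
  have hc : IsClosed {z | z ≤ x ∧ z ∉ O} :=
    (isClosed_Iic (a := x)).inter h.op.isClosed_compl
  exact hc.csSup_mem (lend_ne h x) (lend_bdd O x)

lemma rend_mem {O : Set ℝ} {R : ℝ} (h : GoodO O R) (x : ℝ) : x ≤ rend O x ∧ rend O x ∉ O := by
  have hc : IsClosed {z | x ≤ z ∧ z ∉ O} :=
    (isClosed_Ici (a := x)).inter h.op.isClosed_compl
  exact hc.csInf_mem (rend_ne h x) (rend_bdd O x)

lemma le_lend {O : Set ℝ} {x z : ℝ} (hz : z ≤ x) (hO : z ∉ O) : z ≤ lend O x := le_csSup (lend_bdd O x) ⟨hz, hO⟩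
lemma rend_le {O : Set ℝ} {x z : ℝ} (hz : x ≤ z) (hO : z ∉ O) : rend O x ≤ z := csInf_le (rend_bdd O x) ⟨hz, hO⟩

lemma qf_nonneg {O : Set ℝ} {R : ℝ} (h : GoodO O R) (x : ℝ) : 0 ≤ qf O x := by
  have h1 := (lend_mem h x).1
  have h2 := (rend_mem h x).1
  unfold qf
  apply div_nonneg (mul_nonneg _ _) <;> linarith

lemma qf_le {O : Set ℝ} {R : ℝ} (h : GoodO O R) {x z : ℝ} (hz : z ∉ O) : qf O x ≤ |x - z| := by
  have h1 := (lend_mem h x).1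
  have h2 := (rend_mem h x).1
  unfold qf
  rcases eq_or_lt_of_le (h1.trans h2) with e | e
  · rw [e]; simp
  rw [div_le_iff₀ (by linarith)]
  rcases le_total z x with hzx | hzx
  · have := le_lend hzx hz
    rw [abs_of_nonneg (by linarith)]
    nlinarith
  · have := rend_le hzx hz
    rw [abs_of_nonpos (by linarith)]
    nlinarith

lemma qd_le {O : Set ℝ} {R : ℝ} (h : GoodO O R) (x : ℝ) : |qd O x| ≤ 1 := by
  have h1 := (lend_mem h x).1
  have h2 := (rend_mem h x).1
  unfold qd
  rw [abs_div, abs_of_nonneg (by linarith : 0 ≤ rend O x - lend O x)]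
  apply div_le_one_of_le₀ _ (by linarith)
  rw [abs_le]; constructor <;> linarith

lemma lend_eq {O : Set ℝ} {x y : ℝ} (hxy : x ≤ y) (hO : Set.Icc x y ⊆ O) : lend O x = lend O y := by
  unfold lend
  congr 1
  ext z
  constructor
  · rintro ⟨a, b⟩; exact ⟨a.trans hxy, b⟩
  · rintro ⟨a, b⟩
    refine ⟨?_, b⟩
    by_contra hc
    exact b (hO ⟨(not_le.1 hc).le, a⟩)

lemma rend_eq {O : Set ℝ} {x y : ℝ} (hxy : x ≤ y) (hO : Set.Icc x y ⊆ O) : rend O x = rend O y := by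
  unfold rend
  congr 1
  ext z
  constructor
  · rintro ⟨a, b⟩
    refine ⟨?_, b⟩
    by_contra hc
    exact b (hO ⟨a, (not_le.1 hc).le⟩)
  · rintro ⟨a, b⟩; exact ⟨hxy.trans a, b⟩

lemma taylor2 {O : Set ℝ} {R : ℝ} (h : GoodO O R) (x y : ℝ) :
    |qf O y ^ 2 - qf O x ^ 2 - 2 * qf O x * qd O x * (y - x)| ≤ 4 * (y - x) ^ 2 := by
  by_cases hc : Set.uIcc x y ⊆ O
  · have e : lend O x = lend O y ∧ rend O x = rend O y := by
      rcases le_total x y with hxy | hxy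
      · rw [Set.uIcc_of_le hxy] at hc
        exact ⟨lend_eq hxy hc, rend_eq hxy hc⟩
      · rw [Set.uIcc_of_ge hxy] at hc
        exact ⟨(lend_eq hxy hc).symm, (rend_eq hxy hc).symm⟩
    have hx : x ∈ O := hc Set.left_mem_uIcc
    have h1 := (lend_mem h x).1
    have h2 := (rend_mem h x).1
    have h3 := (lend_mem h y).1
    have h4 := (rend_mem h y).1
    have h5 : lend O x ≠ x := fun e => (lend_mem h x).2 (by rw [e]; exact hx)
    have h1' : lend O x < x := lt_of_le_of_ne h1 h5
    unfold qf qd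
    rw [← e.1] at h3 ⊢
    rw [← e.2] at h4 ⊢
    set a := lend O x
    set b := rend O x
    have hL : 0 < b - a := by linarith
    set L := b - a with hLdef
    have key : ((y - a) * (b - y) / L) ^ 2 - ((x - a) * (b - x) / L) ^ 2
        - 2 * ((x - a) * (b - x) / L) * ((a + b - 2 * x) / L) * (y - x)
        = (y - x) ^ 2 * (((a + b - x - y) / L) ^ 2 - 2 * ((x - a) / L * ((b - x) / L))) := by
      field_simp
      ring
    rw [key, abs_mul, abs_of_nonneg (sq_nonneg _), mul_comm]
    have f1 : |(a + b - x - y) / L| ≤ 1 := by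
      rw [abs_div, abs_of_pos hL]
      apply div_le_one_of_le₀ _ hL.le
      rw [abs_le]; constructor <;> linarith
    have f1' := (sq_le_one_iff_abs_le_one _).2 f1
    have f2 : 0 ≤ (x - a) / L := div_nonneg (by linarith) hL.le
    have f3 : 0 ≤ (b - x) / L := div_nonneg (by linarith) hL.le
    have f4 : (x - a) / L ≤ 1 := div_le_one_of_le₀ (by linarith) hL.le
    have f5 : (b - x) / L ≤ 1 := div_le_one_of_le₀ (by linarith) hL.le
    have f6 : (x - a) / L * ((b - x) / L) ≤ 1 := mul_le_one₀ f4 f3 f5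
    have f7 := mul_nonneg f2 f3
    apply mul_le_mul_of_nonneg_right _ (sq_nonneg _)
    rw [abs_le]
    constructor <;> nlinarith [sq_nonneg ((a + b - x - y) / L)]
  · obtain ⟨z, hz, hzO⟩ := Set.not_subset.1 hc
    have a1 : |x - z| ≤ |y - x| := by
      have := Set.abs_sub_left_of_mem_uIcc hz
      rwa [abs_sub_comm] 
    have a2 : |y - z| ≤ |y - x| := Set.abs_sub_right_of_mem_uIcc hz
    have b1 := (qf_le h (x := x) hzO).trans a1
    have b2 := (qf_le h (x := y) hzO).trans a2
    have c1 := qf_nonneg h x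
    have c2 := qf_nonneg h y
    have hd := qd_le h x
    rw [← sq_abs (y - x)]
    have e1 : qf O y ^ 2 ≤ |y - x| ^ 2 := pow_le_pow_left₀ c2 b2 2
    have e2 : qf O x ^ 2 ≤ |y - x| ^ 2 := pow_le_pow_left₀ c1 b1 2
    have e3 : |2 * qf O x * qd O x * (y - x)| ≤ 2 * |y - x| ^ 2 := by
      rw [abs_mul, abs_mul, abs_mul, abs_of_nonneg c1, abs_two]
      calc 2 * qf O x * |qd O x| * |y - x| ≤ 2 * |y - x| * 1 * |y - x| := by gcongr
        _ = _ := by ring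
    have := abs_le.1 e3
    rw [abs_le]
    constructor <;> nlinarith [sq_nonneg (qf O y), sq_nonneg (qf O x)]

lemma qf_ge {O : Set ℝ} {R : ℝ} (h : GoodO O R) {u v x : ℝ} (hO : Set.Ioo v u ⊆ O) (hx : x ∈ Set.Ioo v u) :
    (x - v) * (u - x) / (u - v) ≤ qf O x := by
  have h1 := lend_mem h x
  have h2 := rend_mem h x
  have h3 : lend O x ≤ v := by
    by_contra hc
    rcases eq_or_lt_of_le h1.1 with e | e
    · exact h1.2 (by rw [e]; exact hO hx)
    · exact h1.2 (hO ⟨not_le.1 hc, e.trans hx.2⟩)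
  have h4 : u ≤ rend O x := by
    by_contra hc
    rcases eq_or_lt_of_le h2.1 with e | e
    · exact h2.2 (by rw [← e]; exact hO hx)
    · exact h2.2 (hO ⟨hx.1.trans e, not_le.1 hc⟩)
  unfold qf
  have := hx.1
  have := hx.2
  rw [div_le_div_iff₀ (by linarith) (by linarith)]
  set a := lend O x
  set b := rend O x
  obtain ⟨p, hp⟩ : ∃ p, p = x - v := ⟨_, rfl⟩
  obtain ⟨q, hq⟩ : ∃ p, p = u - x := ⟨_, rfl⟩
  obtain ⟨c, hc⟩ : ∃ p, p = v - a := ⟨_, rfl⟩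
  obtain ⟨d, hd⟩ : ∃ p, p = b - u := ⟨_, rfl⟩
  have e1 : x - a = p + c := by linarith
  have e2 : b - x = q + d := by linarith
  have e3 : b - a = p + c + q + d := by linarith
  have e4 : u - v = p + q := by linarith
  rw [e1, e2, e3, e4, ← hp, ← hq]
  have hp0 : 0 ≤ p := by linarith
  have hq0 : 0 ≤ q := by linarith
  have hc0 : 0 ≤ c := by linarith
  have hd0 : 0 ≤ d := by linarith
  have : 0 ≤ p^2*d + c * q^2 + c*d*p + c*d*q := by positivity
  nlinarith

structure TestF (f p1 p2 : ℝ → ℝ) (B : ℝ) : Prop where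
  mf : Measurable f
  m1 : Measurable p1
  m2 : Measurable p2
  bf : ∀ x, |f x| ≤ B
  b1 : ∀ x, |p1 x| ≤ B
  b2 : ∀ x, |p2 x| ≤ B
  taylor : ∀ x y, |f (x + y) - f x - p1 x * y - p2 x * y ^ 2 / 2| ≤ 3 * |y| ^ 3

lemma qf_zero {O : Set ℝ} {R : ℝ} (h : GoodO O R) {x : ℝ} (hx : x ∉ O) : qf O x = 0 := by
  have := qf_le h (x := x) hx
  simp at this
  exact le_antisymm this (qf_nonneg h x)

lemma qf_bdd {O : Set ℝ} {R : ℝ} (hR : 0 < R) (h : GoodO O R) (x : ℝ) : qf O x ≤ 2 * R := by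
  by_cases hx : x ∈ O
  · have h1 : R ∉ O := fun hc => by
      have := h.sub _ hc
      rw [abs_of_pos hR] at this
      exact lt_irrefl _ this
    have h2 := abs_lt.1 (h.sub _ hx)
    refine (qf_le h h1).trans ?_
    rw [abs_le]; constructor <;> linarith
  · rw [qf_zero h hx]; linarith

lemma qf_deriv {O : Set ℝ} {R : ℝ} (h : GoodO O R) (x : ℝ) :
    HasDerivAt (fun t => qf O t ^ 2) (2 * qf O x * qd O x) x := by
  rw [hasDerivAt_iff_isLittleO]
  refine Asymptotics.IsBigO.trans_isLittleO ?_
    (Asymptotics.isLittleO_pow_sub_sub x (m := 2) (by norm_num))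
  refine Asymptotics.IsBigO.of_bound 4 (Eventually.of_forall fun y => ?_)
  have := taylor2 h x y
  simp only [Real.norm_eq_abs, smul_eq_mul]
  rw [abs_of_nonneg (sq_nonneg |y - x|), sq_abs]
  convert this using 3
  ring

lemma int_poly (u v : ℝ) (huv : v < u) :
    ∫ x in v..u, ((x - v) * (u - x) / (u - v)) ^ 2 = (u - v) ^ 3 / 30 := by
  have hne : u - v ≠ 0 := by linarith
  have hd : ∀ x ∈ Set.uIcc v u, HasDerivAt (fun x => ((x - v) ^ 3 * (u - v) ^ 2 / 3
      - (x - v) ^ 4 * (u - v) / 2 + (x - v) ^ 5 / 5) / (u - v) ^ 2)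
      (((x - v) * (u - x) / (u - v)) ^ 2) x := by
    intro x _
    have h1 : HasDerivAt (fun x : ℝ => x - v) 1 x := (hasDerivAt_id x).sub_const v
    have h3 := ((h1.pow 3).mul_const ((u - v) ^ 2)).div_const 3
    have h4 := ((h1.pow 4).mul_const (u - v)).div_const 2
    have h5 := (h1.pow 5).div_const 5
    have := ((h3.sub h4).add h5).div_const ((u - v) ^ 2)
    refine this.congr_deriv ?_
    field_simp
    push_cast
    ring
  rw [intervalIntegral.integral_eq_sub_of_hasDerivAt hd]
  · field_simp
    ring
  · apply Continuous.intervalIntegrable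
    fun_prop

lemma prim_taylor {ψ g : ℝ → ℝ} (hψc : Continuous ψ)
    (ht : ∀ x y, |ψ y - ψ x - g x * (y - x)| ≤ 8 * (y - x) ^ 2) (x y : ℝ) :
    |(∫ t in x..x + y, ψ t) - ψ x * y - g x * y ^ 2 / 2| ≤ 3 * |y| ^ 3 := by
  have hψi : ∀ a b, IntervalIntegrable ψ volume a b := fun a b => hψc.intervalIntegrable a b
  have e : (∫ t in x..x + y, ψ t) - ψ x * y - g x * y ^ 2 / 2
      = ∫ t in x..x+y, (ψ t - ψ x - g x * (t - x)) := by
    have h1 : ∫ t in x..x+y, g x * (t - x) = g x * y ^ 2 / 2 := by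
      rw [intervalIntegral.integral_const_mul,
        intervalIntegral.integral_comp_sub_right (fun t => t)]
      simp; ring
    rw [intervalIntegral.integral_sub (f := fun t => ψ t - ψ x) (g := fun t => g x * (t - x))
      (Continuous.intervalIntegrable (by fun_prop) _ _)
      (Continuous.intervalIntegrable (by fun_prop) _ _),
      intervalIntegral.integral_sub (hψi _ _) (by simp), h1]
    simp; ring
  rw [e]
  have h1 : |∫ t in x..x+y, (ψ t - ψ x - g x * (t - x))| ≤ |∫ t in x..x+y, 8 * (t-x)^2| := by
    have := intervalIntegral.norm_integral_le_abs_of_norm_le (μ := volume) (a := x) (b := x+y)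
      (f := fun t => ψ t - ψ x - g x * (t - x)) (g := fun t => 8 * (t - x)^2)
      (Filter.Eventually.of_forall fun t => ht x t) (Continuous.intervalIntegrable (by fun_prop) _ _)
    exact this
  refine h1.trans ?_
  rw [intervalIntegral.integral_const_mul, intervalIntegral.integral_comp_sub_right (fun t => t^2)]
  simp only [sub_self, add_sub_cancel_left, integral_pow]
  norm_num
  rw [abs_div, abs_pow]
  norm_num
  have : 0 ≤ |y| ^ 3 := by positivity
  linarith

lemma rio_f (T : ℝ → ℝ) (hT : Monotone T) (R : ℝ) (hR : 0 < R) :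
    ∃ f p1 p2 B, TestF f p1 p2 B ∧ (∀ y, f y ≤ f (T y)) ∧
      ∀ y, |y| < R → |T y| < R → |T y - y| ^ 3 / 30 ≤ f (T y) - f y := by
  set O₁ : Set ℝ := ⋃ y ∈ {y : ℝ | |y| < R ∧ |T y| < R}, Set.Ioo y (T y) with hO₁
  set O₂ : Set ℝ := ⋃ y ∈ {y : ℝ | |y| < R ∧ |T y| < R}, Set.Ioo (T y) y with hO₂
  have g1 : GoodO O₁ R := by
    refine ⟨isOpen_biUnion fun _ _ => isOpen_Ioo, fun x hx => ?_⟩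
    simp only [hO₁, Set.mem_iUnion, Set.mem_ofPred_eq, exists_prop] at hx
    obtain ⟨y, ⟨a, b⟩, c, d⟩ := hx
    rw [abs_lt] at *
    constructor <;> linarith
  have g2 : GoodO O₂ R := by
    refine ⟨isOpen_biUnion fun _ _ => isOpen_Ioo, fun x hx => ?_⟩
    simp only [hO₂, Set.mem_iUnion, Set.mem_ofPred_eq, exists_prop] at hx
    obtain ⟨y, ⟨a, b⟩, c, d⟩ := hx
    rw [abs_lt] at *
    constructor <;> linarith
  have d1 : ∀ y z, z ∈ Set.Ioo y (T y) → z ∉ O₂ := by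
    intro y z hz hzO
    simp only [hO₂, Set.mem_iUnion, Set.mem_ofPred_eq, exists_prop] at hzO
    obtain ⟨y', _, c, d⟩ := hzO
    have := hT (hz.1.trans d).le
    linarith [hz.2]
  have d2 : ∀ y z, z ∈ Set.Ioo (T y) y → z ∉ O₁ := by
    intro y z hz hzO
    simp only [hO₁, Set.mem_iUnion, Set.mem_ofPred_eq, exists_prop] at hzO
    obtain ⟨y', _, c, d⟩ := hzO
    have := hT (c.trans hz.2).le
    linarith [hz.1]
  set ψ : ℝ → ℝ := fun x => qf O₁ x ^ 2 - qf O₂ x ^ 2 with hψ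
  set g : ℝ → ℝ := fun x => 2 * qf O₁ x * qd O₁ x - 2 * qf O₂ x * qd O₂ x with hg
  have hder : ∀ x, HasDerivAt ψ (g x) x := fun x => (qf_deriv g1 x).sub (qf_deriv g2 x)
  have hψc : Continuous ψ := continuous_iff_continuousAt.2 fun x => (hder x).continuousAt
  have hq1c : Continuous (fun x => qf O₁ x ^ 2) :=
    continuous_iff_continuousAt.2 fun x => (qf_deriv g1 x).continuousAt
  have hψi : ∀ a b, IntervalIntegrable ψ volume a b := fun a b => hψc.intervalIntegrable a b
  have hgm : Measurable g := by
    have : g = deriv ψ := funext fun x => ((hder x).deriv).symm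
    rw [this]; exact measurable_deriv _
  have hsupp : HasCompactSupport ψ := by
    apply HasCompactSupport.intro (isCompact_Icc (a := -R) (b := R))
    intro x hx
    have h1 : ¬ |x| < R := fun h => hx (by rw [abs_lt] at h; exact ⟨h.1.le, h.2.le⟩)
    simp only [hψ]
    rw [qf_zero g1 fun h => h1 (g1.sub _ h), qf_zero g2 fun h => h1 (g2.sub _ h)]
    simp
  have hIntg : Integrable ψ := hψc.integrable_of_hasCompactSupport hsupp
  have ht : ∀ x y, |ψ y - ψ x - g x * (y - x)| ≤ 8 * (y - x) ^ 2 := by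
    intro x y
    have h1 := abs_le.1 (taylor2 g1 x y)
    have h2 := abs_le.1 (taylor2 g2 x y)
    simp only [hψ, hg]
    rw [abs_le]; constructor <;> linarith [h1.1, h1.2, h2.1, h2.2]
  have hsub : ∀ a b, (∫ t in (0:ℝ)..b, ψ t) - (∫ t in (0:ℝ)..a, ψ t) = ∫ t in a..b, ψ t :=
    fun a b => intervalIntegral.integral_interval_sub_left (hψi _ _) (hψi _ _)
  have hpos : ∀ y, y < T y → ∀ z ∈ Set.Ioo y (T y), ψ z = qf O₁ z ^ 2 := by
    intro y _ z hz
    simp only [hψ]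
    rw [qf_zero g2 (d1 y z hz)]; ring
  have hneg : ∀ y, T y < y → ∀ z ∈ Set.Ioo (T y) y, ψ z = - qf O₂ z ^ 2 := by
    intro y _ z hz
    simp only [hψ]
    rw [qf_zero g1 (d2 y z hz)]; ring
  refine ⟨fun x => ∫ t in (0:ℝ)..x, ψ t, ψ, g,
    (∫ t, |ψ t|) + (2 * R) ^ 2 + 2 * (2 * (2 * R)), ⟨?_, hψc.measurable, hgm, ?_, ?_, ?_, ?_⟩, ?_, ?_⟩
  · exact (intervalIntegral.continuous_primitive (fun a b => hψi a b) 0).measurable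
  · intro x
    have h1 := intervalIntegral.norm_integral_le_integral_norm_uIoc (f := ψ) (a := 0) (b := x)
      (μ := volume)
    have h2 : ∫ t in Set.uIoc 0 x, ‖ψ t‖ ≤ ∫ t, ‖ψ t‖ :=
      setIntegral_le_integral hIntg.norm (Eventually.of_forall fun _ => norm_nonneg _)
    simp only [Real.norm_eq_abs] at h1 h2
    have : 0 ≤ (2 * R) ^ 2 := by positivity
    linarith
  · intro x
    have h0 : 0 ≤ ∫ t, |ψ t| := integral_nonneg fun _ => abs_nonneg _
    have a1 := pow_le_pow_left₀ (qf_nonneg g1 x) (qf_bdd hR g1 x) 2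
    have a2 := pow_le_pow_left₀ (qf_nonneg g2 x) (qf_bdd hR g2 x) 2
    simp only [hψ]
    rw [abs_le]; constructor <;> nlinarith [sq_nonneg (qf O₁ x), sq_nonneg (qf O₂ x)]
  · intro x
    have h0 : 0 ≤ ∫ t, |ψ t| := integral_nonneg fun _ => abs_nonneg _
    have a0 : 0 ≤ (2 * R) ^ 2 := by positivity
    have key : ∀ O, GoodO O R → |2 * qf O x * qd O x| ≤ 2 * (2 * R) := by
      intro O h
      rw [abs_mul, abs_mul, abs_of_nonneg (qf_nonneg h x), abs_two]
      calc 2 * qf O x * |qd O x| ≤ 2 * (2 * R) * 1 := by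
            gcongr
            · exact qf_bdd hR h x
            · exact qd_le h x
        _ = _ := by ring
    have k1 := abs_le.1 (key _ g1)
    have k2 := abs_le.1 (key _ g2)
    simp only [hg]
    rw [abs_le]; constructor <;> linarith [k1.1, k1.2, k2.1, k2.2]
  · intro x y
    rw [hsub]
    exact prim_taylor hψc ht x y
  · intro y
    beta_reduce
    rw [← sub_nonneg, hsub]
    rcases lt_trichotomy y (T y) with h | h | h
    · have := intervalIntegral.integral_mono_on_of_le_Ioo (μ := volume) (f := fun _ => (0:ℝ)) (g := ψ) h.le
        (by simp) (hψi _ _) (fun z hz => by rw [hpos y h z hz]; positivity)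
      simpa using this
    · rw [← h]; simp
    · have := intervalIntegral.integral_mono_on_of_le_Ioo (μ := volume) (g := fun _ => (0:ℝ)) (f := ψ) h.le
        (hψi _ _) (by simp) (fun z hz => by rw [hneg y h z hz]; nlinarith [sq_nonneg (qf O₂ z)])
      rw [intervalIntegral.integral_symm]
      simpa using this
  · intro y hy hTy
    beta_reduce
    rw [hsub]
    rcases lt_trichotomy y (T y) with h | h | h
    · have hin : Set.Ioo y (T y) ⊆ O₁ :=
        Set.subset_biUnion_of_mem (u := fun y => Set.Ioo y (T y)) (show y ∈ {y : ℝ | |y| < R ∧ |T y| < R} from ⟨hy, hTy⟩)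
      have := intervalIntegral.integral_mono_on_of_le_Ioo (μ := volume) (f := fun x => ((x - y) * (T y - x) / (T y - y)) ^ 2)
        (g := ψ) h.le (Continuous.intervalIntegrable (by fun_prop) _ _) (hψi _ _)
        (fun z hz => by
          rw [hpos y h z hz]
          refine pow_le_pow_left₀ ?_ (qf_ge g1 hin hz) 2
          have := hz.1
          have := hz.2
          apply div_nonneg (mul_nonneg _ _) <;> linarith)
      rw [int_poly _ _ h] at this
      rwa [abs_of_pos (by linarith)]
    · rw [← h]; simp
    · have hin : Set.Ioo (T y) y ⊆ O₂ :=
        Set.subset_biUnion_of_mem (u := fun y => Set.Ioo (T y) y) (show y ∈ {y : ℝ | |y| < R ∧ |T y| < R} from ⟨hy, hTy⟩)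
      have := intervalIntegral.integral_mono_on_of_le_Ioo (μ := volume) (f := fun x => ((x - T y) * (y - x) / (y - T y)) ^ 2)
        (g := fun z => - ψ z) h.le (Continuous.intervalIntegrable (by fun_prop) _ _) (hψi _ _).neg
        (fun z hz => by
          rw [hneg y h z hz, neg_neg]
          refine pow_le_pow_left₀ ?_ (qf_ge g2 hin hz) 2
          have := hz.1
          have := hz.2
          apply div_nonneg (mul_nonneg _ _) <;> linarith)
      rw [int_poly _ _ h, intervalIntegral.integral_neg] at this
      rw [intervalIntegral.integral_symm, abs_sub_comm]
      rwa [abs_of_pos (by linarith)]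

lemma gcdf_strictMono : StrictMono (cdf (gaussianReal 0 1)) := by
  intro a b hab
  rw [cdf_eq_real, cdf_eq_real]
  have h1 : Set.Iic b = Set.Iic a ∪ Set.Ioc a b := (Set.Iic_union_Ioc_eq_Iic hab.le).symm
  rw [h1, measureReal_union (Set.Iic_disjoint_Ioc le_rfl) measurableSet_Ioc]
  have h2 : (gaussianReal 0 1) (Set.Ioc a b) ≠ 0 := by
    intro hc
    have := gaussianReal_absolutelyContinuous' 0 (v := 1) one_ne_zero hc
    rw [Real.volume_Ioc] at this
    simp at this
    linarith
  have h3 : 0 < (gaussianReal 0 1).real (Set.Ioc a b) :=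
    ENNReal.toReal_pos h2 (measure_ne_top _ _)
  linarith

lemma gcdf_cont : Continuous (cdf (gaussianReal 0 1)) := by
  rw [continuous_iff_continuousAt]
  intro x
  rw [(monotone_cdf _).continuousAt_iff_leftLim_eq_rightLim, StieltjesFunction.rightLim_eq]
  have h := StieltjesFunction.measure_singleton (cdf (gaussianReal 0 1)) x
  rw [measure_cdf] at h
  have : NullSingletonClass (gaussianReal 0 1) := nullSingletonClass_gaussianReal one_ne_zero
  rw [measure_singleton] at h
  have h1 := ENNReal.ofReal_eq_zero.1 h.symm
  have h2 := (monotone_cdf (gaussianReal 0 1)).leftLim_le (le_refl x)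
  linarith

lemma gcdf_pos (x : ℝ) : 0 < cdf (gaussianReal 0 1) x :=
  (cdf_nonneg _ (x - 1)).trans_lt (gcdf_strictMono (by linarith))
lemma gcdf_lt_one (x : ℝ) : cdf (gaussianReal 0 1) x < 1 :=
  (gcdf_strictMono (by linarith : x < x + 1)).trans_le (cdf_le_one _ _)

lemma gcdf_meas (p : ℝ) (h0 : 0 ≤ p) (h1 : p ≤ 1) :
    (gaussianReal 0 1) {y | cdf (gaussianReal 0 1) y ≤ p} = ENNReal.ofReal p := by
  rcases eq_or_lt_of_le h0 with e | h0
  · have : {y | cdf (gaussianReal 0 1) y ≤ p} = ∅ := by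
      ext y
      simp [← e, gcdf_pos y]
    rw [this, ← e]; simp
  rcases eq_or_lt_of_le h1 with e | h1
  · have : {y | cdf (gaussianReal 0 1) y ≤ p} = Set.univ := by
      ext y
      simp [e, cdf_le_one]
    rw [this, e]; simp
  obtain ⟨a, ha⟩ := ((tendsto_cdf_atBot (gaussianReal 0 1)).eventually_lt_const h0).exists
  obtain ⟨b, hb⟩ := ((tendsto_cdf_atTop (gaussianReal 0 1)).eventually_const_lt h1).exists
  obtain ⟨c, hc⟩ := mem_range_of_exists_le_of_exists_ge gcdf_cont ⟨a, ha.le⟩ ⟨b, hb.le⟩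
  have : {y | cdf (gaussianReal 0 1) y ≤ p} = Set.Iic c := by
    ext y
    simp only [Set.mem_ofPred_eq, Set.mem_Iic]
    rw [← hc, gcdf_strictMono.le_iff_le]
  rw [this, ← hc, ofReal_cdf]

lemma exists_mono (ν : Measure ℝ) [IsProbabilityMeasure ν] :
    ∃ T : ℝ → ℝ, Monotone T ∧ (gaussianReal 0 1).map T = ν := by
  set F := cdf ν with hF
  set G := cdf (gaussianReal 0 1) with hG
  set T : ℝ → ℝ := fun y => sInf {x | G y ≤ F x} with hT
  have ne : ∀ y, {x | G y ≤ F x}.Nonempty := by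
    intro y
    obtain ⟨b, hb⟩ := ((tendsto_cdf_atTop ν).eventually_const_lt (gcdf_lt_one y)).exists
    exact ⟨b, hb.le⟩
  have bd : ∀ y, BddBelow {x | G y ≤ F x} := by
    intro y
    obtain ⟨a, ha⟩ := ((tendsto_cdf_atBot ν).eventually_lt_const (gcdf_pos y)).exists
    refine ⟨a, fun x hx => ?_⟩
    by_contra hc
    have := monotone_cdf ν (not_le.1 hc).le
    have hx : G y ≤ F x := hx
    linarith
  have gal : ∀ y x, T y ≤ x ↔ G y ≤ F x := by
    intro y x
    refine ⟨fun h => ?_, fun h => csInf_le (bd y) h⟩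
    have h1 : Tendsto F (nhdsWithin x (Set.Ioi x)) (nhds (F x)) :=
      (F.right_continuous x).mono_left (nhdsWithin_mono _ Set.Ioi_subset_Ici_self)
    refine ge_of_tendsto h1 ?_
    filter_upwards [self_mem_nhdsWithin] with x' hx'
    have hx' : x < x' := hx'
    obtain ⟨s, hs, hs'⟩ := exists_lt_of_csInf_lt (ne y) (h.trans_lt hx')
    have hs : G y ≤ F s := hs
    exact hs.trans (monotone_cdf ν hs'.le)
  have hmono : Monotone T := by
    intro a b hab
    rw [gal]
    exact (monotone_cdf _ hab).trans ((gal b _).1 le_rfl)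
  refine ⟨T, hmono, ?_⟩
  have : IsProbabilityMeasure ((gaussianReal 0 1).map T) :=
    Measure.isProbabilityMeasure_map hmono.measurable.aemeasurable
  refine Measure.ext_of_Iic _ _ fun x => ?_
  rw [Measure.map_apply hmono.measurable measurableSet_Iic]
  have : T ⁻¹' Set.Iic x = {y | G y ≤ F x} := by
    ext y
    simp [gal]
  rw [this, gcdf_meas _ (cdf_nonneg _ _) (cdf_le_one _ _), ofReal_cdf]

lemma rio (ν : Measure ℝ) [IsProbabilityMeasure ν] (K : ℝ)
    (hK : ∀ f p1 p2 B, TestF f p1 p2 B → ∫ x, f x ∂ν - ∫ x, f x ∂(gaussianReal 0 1) ≤ K) :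
    ∃ T : ℝ → ℝ, Measurable T ∧ (gaussianReal 0 1).map T = ν ∧
      ∫⁻ y, ENNReal.ofReal (|T y - y| ^ 3) ∂(gaussianReal 0 1) ≤ ENNReal.ofReal (30 * K) := by
  obtain ⟨T, hT, hmap⟩ := exists_mono ν
  refine ⟨T, hT.measurable, hmap, ?_⟩
  have hTm := hT.measurable
  have hS : ∀ R : ℝ, MeasurableSet {y : ℝ | |y| < R ∧ |T y| < R} := fun R => by
    have h1 : MeasurableSet {y : ℝ | |y| < R} := measurableSet_lt (by fun_prop) measurable_const
    have h2 : MeasurableSet {y : ℝ | |T y| < R} := measurableSet_lt (by fun_prop) measurable_const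
    exact h1.inter h2
  set φ : ℕ → ℝ → ENNReal := fun N => Set.indicator {y : ℝ | |y| < N ∧ |T y| < N}
    (fun y => ENNReal.ofReal (|T y - y| ^ 3)) with hφ
  have hlim : ∀ y, ENNReal.ofReal (|T y - y| ^ 3) ≤ liminf (fun N => φ N y) atTop := by
    intro y
    apply le_liminf_of_le
    · isBoundedDefault
    obtain ⟨N, hN⟩ := exists_nat_gt (max |y| |T y|)
    filter_upwards [eventually_ge_atTop N] with M hM
    have hM' : (N : ℝ) ≤ M := by exact_mod_cast hM
    simp only [hφ]
    rw [Set.indicator_of_mem]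
    exact ⟨((le_max_left _ _).trans_lt hN).trans_le hM', ((le_max_right _ _).trans_lt hN).trans_le hM'⟩
  refine (lintegral_mono hlim).trans ((lintegral_liminf_le fun N => ?_).trans ?_)
  · exact Measurable.indicator (by fun_prop) (hS _)
  apply liminf_le_of_frequently_le'
  apply Eventually.frequently
  filter_upwards [eventually_gt_atTop 0] with N hN
  have hN' : (0:ℝ) < N := by exact_mod_cast hN
  obtain ⟨f, p1, p2, B, hf, hmon, hlow⟩ := rio_f T hT N hN'
  have hfi : ∀ (m : Measure ℝ) [IsProbabilityMeasure m], Integrable f m := fun m _ =>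
    Integrable.of_bound hf.mf.aestronglyMeasurable B (Eventually.of_forall hf.bf)
  have hfT : Integrable (fun y => f (T y)) (gaussianReal 0 1) :=
    Integrable.of_bound (hf.mf.comp hTm).aestronglyMeasurable B (Eventually.of_forall fun x => hf.bf _)
  have h1 := hK f p1 p2 B hf
  rw [← hmap, integral_map hTm.aemeasurable hf.mf.aestronglyMeasurable,
    ← integral_sub hfT (hfi _)] at h1
  calc ∫⁻ y, φ N y ∂(gaussianReal 0 1)
      ≤ ∫⁻ y, ENNReal.ofReal (30 * (f (T y) - f y)) ∂(gaussianReal 0 1) := by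
        apply lintegral_mono
        intro y
        simp only [hφ]
        by_cases hy : y ∈ {y : ℝ | |y| < N ∧ |T y| < N}
        · rw [Set.indicator_of_mem hy]
          apply ENNReal.ofReal_le_ofReal
          have := hlow y hy.1 hy.2
          linarith
        · rw [Set.indicator_of_notMem hy]
          exact zero_le
    _ = ENNReal.ofReal (∫ y, 30 * (f (T y) - f y) ∂(gaussianReal 0 1)) := by
        have hi : Integrable (fun y => 30 * (f (T y) - f y)) (gaussianReal 0 1) :=
          (hfT.sub (hfi _)).const_mul 30
        rw [ofReal_integral_eq_lintegral_ofReal hi]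
        exact Eventually.of_forall fun y => by
          have := hmon y
          simp only [Pi.zero_apply]
          linarith
    _ ≤ ENNReal.ofReal (30 * K) := by
        apply ENNReal.ofReal_le_ofReal
        rw [integral_const_mul]
        linarith

structure MD {Ω : Type*} [m0 : MeasurableSpace Ω] (μ : Measure Ω) (F : ℕ → MeasurableSpace Ω)
    (n : ℕ) (y s : ℕ → Ω → ℝ) : Prop where
  le : ∀ i, F i ≤ m0
  mono : Monotone F
  my : ∀ k < n, Measurable[F (k + 1)] (y k)
  ly : ∀ k < n, Integrable (fun ω => |y k ω| ^ 3) μ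
  ms : ∀ k < n, Measurable[F k] (s k)
  s0 : ∀ k ω, 0 ≤ s k ω
  ls : ∀ k < n, Integrable (fun ω => √(s k ω) ^ 3) μ
  h1 : ∀ k < n, ∀ g : Ω → ℝ, Measurable[F k] g → Integrable (fun ω => g ω * y k ω) μ →
    ∫ ω, g ω * y k ω ∂μ = 0
  h2 : ∀ k < n, ∀ g : Ω → ℝ, Measurable[F k] g → Integrable (fun ω => g ω * y k ω ^ 2) μ →
    Integrable (fun ω => g ω * s k ω) μ → ∫ ω, g ω * y k ω ^ 2 ∂μ = ∫ ω, g ω * s k ω ∂μ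

/-- partial sums -/
def psum {Ω : Type*} (y : ℕ → Ω → ℝ) (k : ℕ) (ω : Ω) : ℝ := ∑ i ∈ Finset.range k, y i ω

lemma psum_succ {Ω : Type*} (y : ℕ → Ω → ℝ) (k : ℕ) (ω : Ω) :
    psum y (k + 1) ω = psum y k ω + y k ω := Finset.sum_range_succ _ _
lemma psum_zero {Ω : Type*} (y : ℕ → Ω → ℝ) (ω : Ω) : psum y 0 ω = 0 := by simp [psum]

lemma cube_add (a b : ℝ) (ha : 0 ≤ a) (hb : 0 ≤ b) : (a + b) ^ 3 ≤ 4 * (a ^ 3 + b ^ 3) := by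
  nlinarith [mul_nonneg (add_nonneg ha hb) (sq_nonneg (a - b))]

lemma abs_cube_add (a b : ℝ) : |a + b| ^ 3 ≤ 4 * (|a| ^ 3 + |b| ^ 3) :=
  (pow_le_pow_left₀ (abs_nonneg _) (abs_add_le a b) 3).trans
    (cube_add _ _ (abs_nonneg _) (abs_nonneg _))

lemma sqrt_cube_add (a b : ℝ) (ha : 0 ≤ a) (hb : 0 ≤ b) :
    √(a + b) ^ 3 ≤ 4 * (√a ^ 3 + √b ^ 3) := by
  refine (pow_le_pow_left₀ (sqrt_nonneg _) ?_ 3).trans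
    (cube_add _ _ (sqrt_nonneg _) (sqrt_nonneg _))
  rw [Real.sqrt_le_left (by positivity)]
  nlinarith [sq_sqrt ha, sq_sqrt hb, mul_nonneg (sqrt_nonneg a) (sqrt_nonneg b)]

lemma ab2 (a b : ℝ) (ha : 0 ≤ a) (hb : 0 ≤ b) : a * b ^ 2 ≤ a ^ 3 + b ^ 3 := by
  rcases le_total a b with h | h
  · have : 0 ≤ a ^ 3 := by positivity
    nlinarith [mul_le_mul_of_nonneg_right h (sq_nonneg b)]
  · have : 0 ≤ b ^ 3 := by positivity
    nlinarith [mul_le_mul_of_nonneg_left (pow_le_pow_left₀ hb h 2) ha]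

lemma young3 (a b : ℝ) (ha : 0 ≤ a) (hb : 0 ≤ b) : 3 * (a * b ^ 2) ≤ a ^ 3 / 2 + 8 * b ^ 3 := by
  rcases le_total (2.5 * b) a with h | h
  · have h1 : (2.5 * b) ^ 2 ≤ a ^ 2 := pow_le_pow_left₀ (by positivity) h 2
    have : 0 ≤ b ^ 3 := by positivity
    nlinarith [mul_le_mul_of_nonneg_left h1 ha, mul_nonneg ha (sq_nonneg b)]
  · have : 0 ≤ a ^ 3 := by positivity
    nlinarith [mul_le_mul_of_nonneg_right h (sq_nonneg b), pow_nonneg hb 3]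

lemma cube_expand_aux (x y : ℝ) (hx : 0 ≤ x) :
    |x + y| ^ 3 ≤ x ^ 3 + 3 * (x * x * y) + 3 * (x * y ^ 2) + |y| ^ 3 := by
  have h3 : y ^ 3 ≤ |y| ^ 3 := by rw [← abs_pow]; exact le_abs_self _
  have h4 : - y ^ 3 ≤ |y| ^ 3 := by rw [← abs_pow]; exact neg_le_abs _
  rcases le_total 0 (x + y) with h | h
  · rw [abs_of_nonneg h]; nlinarith
  · rw [abs_of_nonpos h]
    have : 0 ≤ x * (2 * x ^ 2 + 6 * x * y + 6 * y ^ 2) := by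
      apply mul_nonneg hx
      nlinarith [sq_nonneg (x + 2 * y), sq_nonneg (x + y)]
    nlinarith

lemma cube_expand (x y : ℝ) : |x + y| ^ 3 ≤ |x| ^ 3 + 3 * (x * |x| * y) + 3 * (|x| * y ^ 2) + |y| ^ 3 := by
  rcases le_total 0 x with hx | hx
  · rw [abs_of_nonneg hx]; exact cube_expand_aux x y hx
  · have := cube_expand_aux (-x) (-y) (by linarith)
    rw [abs_of_nonpos hx, ← abs_neg (x + y), neg_add, ← abs_neg y]
    nlinarith

section
variable {Ω : Type*} [m0 : MeasurableSpace Ω] {μ : Measure Ω} {F : ℕ → MeasurableSpace Ω}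
    {n : ℕ} {y s : ℕ → Ω → ℝ}

lemma MD.my' (h : MD μ F n y s) {k : ℕ} (hk : k < n) : Measurable (y k) :=
  (h.my k hk).mono (h.le _) le_rfl
lemma MD.ms' (h : MD μ F n y s) {k : ℕ} (hk : k < n) : Measurable (s k) :=
  (h.ms k hk).mono (h.le _) le_rfl

lemma MD.mS (h : MD μ F n y s) {k : ℕ} (hk : k ≤ n) : Measurable[F k] (psum y k) := by
  refine Finset.measurable_sum _ fun i hi => ?_
  rw [Finset.mem_range] at hi
  exact (h.my i (by omega)).mono (h.mono (by omega)) le_rfl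
lemma MD.mS' (h : MD μ F n y s) {k : ℕ} (hk : k ≤ n) : Measurable (psum y k) :=
  (h.mS hk).mono (h.le _) le_rfl
lemma MD.mA (h : MD μ F n y s) {k : ℕ} (hk : k < n) : Measurable[F k] (psum s (k + 1)) := by
  refine Finset.measurable_sum _ fun i hi => ?_
  rw [Finset.mem_range] at hi
  exact (h.ms i (by omega)).mono (h.mono (by omega)) le_rfl
lemma MD.mA' (h : MD μ F n y s) {k : ℕ} (hk : k ≤ n) : Measurable (psum s k) := by
  refine Finset.measurable_sum _ fun i hi => ?_
  rw [Finset.mem_range] at hi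
  exact h.ms' (by omega)
lemma MD.A0 (h : MD μ F n y s) (k : ℕ) (ω : Ω) : 0 ≤ psum s k ω :=
  Finset.sum_nonneg fun i _ => h.s0 i ω

lemma MD.lS (h : MD μ F n y s) {k : ℕ} (hk : k ≤ n) : Integrable (fun ω => |psum y k ω| ^ 3) μ := by
  induction k with
  | zero => simp [psum]
  | succ k ih =>
    refine Integrable.mono' (((ih (by omega)).add (h.ly k (by omega))).const_mul 4)
      (((h.mS' hk).abs.pow_const 3).aestronglyMeasurable) (Eventually.of_forall fun ω => ?_)
    rw [Real.norm_of_nonneg (by positivity), psum_succ]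
    exact abs_cube_add _ _

lemma MD.lA (h : MD μ F n y s) {k : ℕ} (hk : k ≤ n) : Integrable (fun ω => √(psum s k ω) ^ 3) μ := by
  induction k with
  | zero => simp [psum]
  | succ k ih =>
    refine Integrable.mono' (((ih (by omega)).add (h.ls k (by omega))).const_mul 4)
      (((h.mA' hk).sqrt.pow_const 3).aestronglyMeasurable) (Eventually.of_forall fun ω => ?_)
    rw [Real.norm_of_nonneg (by positivity), psum_succ]
    exact sqrt_cube_add _ _ (h.A0 _ _) (h.s0 _ _)

lemma int_ab2 {a b : Ω → ℝ} (ha : Measurable a) (hb : Measurable b)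
    (ia : Integrable (fun ω => |a ω| ^ 3) μ) (ib : Integrable (fun ω => |b ω| ^ 3) μ) :
    Integrable (fun ω => a ω * b ω ^ 2) μ := by
  refine Integrable.mono' (ia.add ib) (by fun_prop) (Eventually.of_forall fun ω => ?_)
  rw [Real.norm_eq_abs, abs_mul, abs_pow]
  exact ab2 _ _ (abs_nonneg _) (abs_nonneg _)

lemma int_as {a b : Ω → ℝ} (ha : Measurable a) (hb : Measurable b) (hb0 : ∀ ω, 0 ≤ b ω)
    (ia : Integrable (fun ω => |a ω| ^ 3) μ) (ib : Integrable (fun ω => √(b ω) ^ 3) μ) :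
    Integrable (fun ω => a ω * b ω) μ := by
  refine Integrable.mono' (ia.add ib) (by fun_prop) (Eventually.of_forall fun ω => ?_)
  rw [Real.norm_eq_abs, abs_mul, abs_of_nonneg (hb0 ω)]
  have := ab2 (|a ω|) (√(b ω)) (abs_nonneg _) (sqrt_nonneg _)
  rwa [sq_sqrt (hb0 ω)] at this

lemma int_add4 {a b c d : Ω → ℝ} (ha : Integrable a μ) (hb : Integrable b μ)
    (hc : Integrable c μ) (hd : Integrable d μ) :
    ∫ ω, (a ω + b ω + c ω + d ω) ∂μ = ∫ ω, a ω ∂μ + ∫ ω, b ω ∂μ + ∫ ω, c ω ∂μ + ∫ ω, d ω ∂μ := by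
  have hab : Integrable (fun ω => a ω + b ω) μ := ha.add hb
  have habc : Integrable (fun ω => a ω + b ω + c ω) μ := hab.add hc
  rw [integral_add habc hd, integral_add hab hc, integral_add ha hb]

lemma MD.step1 (h : MD μ F n y s) {k : ℕ} (hk : k < n) :
    ∫ ω, |psum y (k + 1) ω| ^ 3 ∂μ ≤ ∫ ω, |psum y k ω| ^ 3 ∂μ + 3 * ∫ ω, |psum y k ω| * s k ω ∂μ
      + ∫ ω, |y k ω| ^ 3 ∂μ := by
  have i0 := h.lS hk.le
  have m0' := h.mS' hk.le
  have my := h.my' hk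
  have i1 : Integrable (fun ω => psum y k ω * |psum y k ω| * y k ω) μ := by
    have := int_ab2 my m0' (h.ly k hk) i0
    refine Integrable.mono this (by fun_prop) (Eventually.of_forall fun ω => ?_)
    simp only [Real.norm_eq_abs, abs_mul, abs_pow, abs_abs]
    apply le_of_eq; ring
  have i2 : Integrable (fun ω => |psum y k ω| * y k ω ^ 2) μ :=
    int_ab2 m0'.abs my (by simpa using i0) (h.ly k hk)
  have i3 : Integrable (fun ω => |psum y k ω| * s k ω) μ :=
    int_as m0'.abs (h.ms' hk) (h.s0 k) (by simpa using i0) (h.ls k hk)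
  have e1 := h.h1 k hk (fun ω => psum y k ω * |psum y k ω|)
    ((h.mS hk.le).mul (continuous_abs.measurable.comp (h.mS hk.le))) i1
  have e2 := h.h2 k hk (fun ω => |psum y k ω|) (continuous_abs.measurable.comp (h.mS hk.le)) i2 i3
  calc ∫ ω, |psum y (k + 1) ω| ^ 3 ∂μ
      ≤ ∫ ω, (|psum y k ω| ^ 3 + 3 * (psum y k ω * |psum y k ω| * y k ω)
        + 3 * (|psum y k ω| * y k ω ^ 2) + |y k ω| ^ 3) ∂μ := by
        apply integral_mono (h.lS hk) (((i0.add (i1.const_mul 3)).add (i2.const_mul 3)).add (h.ly k hk))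
        intro ω
        simp only [psum_succ]
        exact cube_expand _ _
    _ = _ := by
        rw [int_add4 i0 (i1.const_mul 3) (i2.const_mul 3) (h.ly k hk),
          integral_const_mul, integral_const_mul, e1, e2]
        ring

lemma MD.step2 (h : MD μ F n y s) {k : ℕ} (hk : k < n) :
    ∫ ω, |psum y k ω| * s k ω ∂μ ≤ ∫ ω, |psum y n ω| * s k ω ∂μ := by
  classical
  set g : Ω → ℝ := fun ω => if 0 ≤ psum y k ω then 1 else -1 with hg
  have gm : Measurable[F k] g :=
    Measurable.ite (measurableSet_le measurable_const (h.mS hk.le)) measurable_const measurable_const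
  have gm' : Measurable g := gm.mono (h.le _) le_rfl
  have gb : ∀ ω, |g ω| = 1 := by intro ω; simp only [hg]; split_ifs <;> simp
  have gs : ∀ ω, g ω * psum y k ω = |psum y k ω| := by
    intro ω; simp only [hg]; split_ifs with hc
    · rw [abs_of_nonneg hc]; simp
    · rw [abs_of_neg (not_le.1 hc)]; simp
  have ms := h.ms' hk
  have int : ∀ (a : Ω → ℝ), Measurable a → Integrable (fun ω => |a ω| ^ 3) μ →
      Integrable (fun ω => g ω * s k ω * a ω) μ := by
    intro a ha ia
    have := int_as ha (h.ms' hk) (h.s0 k) ia (h.ls k hk)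
    refine this.mono (by fun_prop) (Eventually.of_forall fun ω => ?_)
    simp only [Real.norm_eq_abs, abs_mul, gb]
    apply le_of_eq; ring
  have key : ∀ m, k ≤ m → m ≤ n → ∫ ω, g ω * s k ω * psum y m ω ∂μ = ∫ ω, |psum y k ω| * s k ω ∂μ := by
    intro m hm
    induction m, hm using Nat.le_induction with
    | base =>
      intro _
      congr 1; ext ω; rw [← gs]; ring
    | succ m hm ih =>
      intro hmn
      rw [← ih (by omega)]
      have e := h.h1 m (by omega) (fun ω => g ω * s k ω)
        ((gm.mul (h.ms k hk)).mono (h.mono hm) le_rfl) (int _ (h.my' (by omega)) (h.ly m (by omega)))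
      simp only [psum_succ, mul_add]
      rw [integral_add (int _ (h.mS' (by omega)) (h.lS (by omega)))
        (int _ (h.my' (by omega)) (h.ly m (by omega))), e, add_zero]
  rw [← key n hk.le le_rfl]
  apply integral_mono (int _ (h.mS' le_rfl) (h.lS le_rfl))
  · exact int_as (h.mS' le_rfl).abs (h.ms' hk) (h.s0 k) (by simpa using h.lS le_rfl) (h.ls k hk)
  intro ω
  refine (le_abs_self _).trans ?_
  simp only [abs_mul, gb, abs_of_nonneg (h.s0 k ω)]
  apply le_of_eq; ring

lemma MD.rosenthal (h : MD μ F n y s) :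
    ∫ ω, |psum y n ω| ^ 3 ∂μ ≤ 16 * ∫ ω, √(psum s n ω) ^ 3 ∂μ
      + 2 * ∑ k ∈ Finset.range n, ∫ ω, |y k ω| ^ 3 ∂μ := by
  have hIntg : ∀ k < n, Integrable (fun ω => |psum y n ω| * s k ω) μ := fun k hk =>
    int_as (h.mS' le_rfl).abs (h.ms' hk) (h.s0 k) (by simpa using h.lS le_rfl) (h.ls k hk)
  have key : ∀ m ≤ n, ∫ ω, |psum y m ω| ^ 3 ∂μ ≤
      3 * ∑ k ∈ Finset.range m, ∫ ω, |psum y n ω| * s k ω ∂μ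
      + ∑ k ∈ Finset.range m, ∫ ω, |y k ω| ^ 3 ∂μ := by
    intro m
    induction m with
    | zero => intro _; simp [psum]
    | succ m ih =>
      intro hm
      rw [Finset.sum_range_succ, Finset.sum_range_succ]
      linarith [ih (by omega), h.step1 (k := m) (by omega), h.step2 (k := m) (by omega)]
  have k1 := key n le_rfl
  rw [← integral_finsetSum _ (fun k hk => hIntg k (Finset.mem_range.1 hk))] at k1
  have e : ∀ ω, ∑ k ∈ Finset.range n, |psum y n ω| * s k ω = |psum y n ω| * psum s n ω := by
    intro ω; rw [← Finset.mul_sum]; rfl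
  simp only [e] at k1
  have k2 : 3 * ∫ ω, |psum y n ω| * psum s n ω ∂μ ≤
      (∫ ω, |psum y n ω| ^ 3 ∂μ) / 2 + 8 * ∫ ω, √(psum s n ω) ^ 3 ∂μ := by
    rw [← integral_const_mul, ← integral_const_mul, ← integral_div, ← integral_add]
    · apply integral_mono
      · exact (int_as (h.mS' le_rfl).abs (h.mA' le_rfl) (h.A0 n) (by simpa using h.lS le_rfl)
          (h.lA le_rfl)).const_mul 3
      · exact ((h.lS le_rfl).div_const 2).add ((h.lA le_rfl).const_mul 8)
      · intro ω
        have := young3 (|psum y n ω|) (√(psum s n ω)) (abs_nonneg _) (sqrt_nonneg _)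
        rwa [sq_sqrt (h.A0 n ω)] at this
    · exact (h.lS le_rfl).div_const 2
    · exact (h.lA le_rfl).const_mul 8
  linarith

/-- multiply by a predictable indicator -/
lemma MD.ind (h : MD μ F n y s) (χ : ℕ → Ω → ℝ) (hχ : ∀ k < n, Measurable[F k] (χ k))
    (h01 : ∀ k ω, χ k ω = 0 ∨ χ k ω = 1) :
    MD μ F n (fun k ω => χ k ω * y k ω) (fun k ω => χ k ω * s k ω) where
  le := h.le
  mono := h.mono
  my k hk := ((hχ k hk).mono (h.mono (by omega)) le_rfl).mul (h.my k hk)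
  ly k hk := by
    have m1 := (hχ k hk).mono (h.le _) le_rfl
    have m2 := h.my' hk
    refine (h.ly k hk).mono' (by fun_prop) (Eventually.of_forall fun ω => ?_)
    rcases h01 k ω with e | e <;> simp [e]
  ms k hk := (hχ k hk).mul (h.ms k hk)
  s0 k ω := by rcases h01 k ω with e | e <;> simp [e, h.s0]
  ls k hk := by
    have m1 := (hχ k hk).mono (h.le _) le_rfl
    have m2 := h.ms' hk
    refine (h.ls k hk).mono' (by fun_prop) (Eventually.of_forall fun ω => ?_)
    rw [Real.norm_of_nonneg (by positivity)]
    rcases h01 k ω with e | e <;> simp [e]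
  h1 k hk g hg hi := by
    have := h.h1 k hk (fun ω => g ω * χ k ω) (hg.mul (hχ k hk)) (by simpa only [mul_assoc] using hi)
    simpa only [mul_assoc] using this
  h2 k hk g hg hi hi' := by
    have e : ∀ ω, (χ k ω * y k ω) ^ 2 = χ k ω * y k ω ^ 2 := by
      intro ω; rcases h01 k ω with e | e <;> simp [e]
    simp only [e] at hi ⊢
    have := h.h2 k hk (fun ω => g ω * χ k ω) (hg.mul (hχ k hk)) (by simpa only [mul_assoc] using hi)
      (by simpa only [mul_assoc] using hi')
    simpa only [mul_assoc] using this

end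

def sm (f : ℝ → ℝ) (x v : ℝ) : ℝ := ∫ z, f (x + √v * z) ∂(gaussianReal 0 1)

lemma sm_meas {f : ℝ → ℝ} (hf : Measurable f) : Measurable (fun p : ℝ × ℝ => sm f p.1 p.2) := by
  have : StronglyMeasurable (fun q : (ℝ × ℝ) × ℝ => f (q.1.1 + √q.1.2 * q.2)) := by
    apply Measurable.stronglyMeasurable
    fun_prop
  exact (this.integral_prod_right (ν := gaussianReal 0 1)).measurable

lemma sm_int {f : ℝ → ℝ} (hf : Measurable f) {B : ℝ} (hB : ∀ x, |f x| ≤ B) (x v : ℝ) :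
    Integrable (fun z => f (x + √v * z)) (gaussianReal 0 1) :=
  Integrable.of_bound (Measurable.aestronglyMeasurable (by fun_prop)) B (Eventually.of_forall fun z => hB _)

lemma sm_bdd {f : ℝ → ℝ} {B : ℝ} (hB : ∀ x, |f x| ≤ B) (x v : ℝ) :
    |sm f x v| ≤ B := by
  have := norm_integral_le_of_norm_le_const (μ := gaussianReal 0 1) (f := fun z => f (x + √v * z))
    (C := B) (Eventually.of_forall fun z => hB _)
  simpa [sm] using this

lemma sm_taylor {f p1 p2 : ℝ → ℝ} {B : ℝ} (h : TestF f p1 p2 B) (x y v : ℝ) :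
    |sm f (x + y) v - sm f x v - sm p1 x v * y - sm p2 x v * y ^ 2 / 2| ≤ 3 * |y| ^ 3 := by
  have i1 := sm_int h.mf h.bf (x + y) v
  have i2 := sm_int h.mf h.bf x v
  have i3 := (sm_int h.m1 h.b1 x v).mul_const y
  have i4 := ((sm_int h.m2 h.b2 x v).mul_const (y ^ 2)).div_const 2
  have e : sm f (x + y) v - sm f x v - sm p1 x v * y - sm p2 x v * y ^ 2 / 2
      = ∫ z, (f (x + y + √v * z) - f (x + √v * z) - p1 (x + √v * z) * y
        - p2 (x + √v * z) * y ^ 2 / 2) ∂(gaussianReal 0 1) := by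
    rw [integral_sub (f := fun z => f (x + y + √v * z) - f (x + √v * z) - p1 (x + √v * z) * y)
      ((i1.sub i2).sub i3) i4,
      integral_sub (f := fun z => f (x + y + √v * z) - f (x + √v * z)) (i1.sub i2) i3,
      integral_sub i1 i2, integral_div, integral_mul_const, integral_mul_const]
    rfl
  rw [e]
  have := norm_integral_le_of_norm_le_const (μ := gaussianReal 0 1)
    (f := fun z => f (x + y + √v * z) - f (x + √v * z) - p1 (x + √v * z) * y
        - p2 (x + √v * z) * y ^ 2 / 2)
    (C := 3 * |y| ^ 3) (Eventually.of_forall fun z => by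
      have := h.taylor (x + √v * z) y
      rw [show x + √v * z + y = x + y + √v * z by ring] at this
      exact this)
  simpa using this

lemma g_map {v : ℝ} (hv : 0 ≤ v) :
    (gaussianReal 0 1).map (fun z => √v * z) = gaussianReal 0 v.toNNReal := by
  rw [gaussianReal_map_const_mul]
  congr 1
  · simp
  · apply NNReal.eq
    simp [sq_sqrt hv, Real.coe_toNNReal v hv]

lemma sm_eq {f : ℝ → ℝ} (hf : Measurable f) (x : ℝ) {v : ℝ} (hv : 0 ≤ v) :
    sm f x v = ∫ t, f (x + t) ∂(gaussianReal 0 v.toNNReal) := by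
  rw [← g_map hv, integral_map (by fun_prop) (Measurable.aestronglyMeasurable (by fun_prop))]
  rfl

lemma sm_semi {f : ℝ → ℝ} (hf : Measurable f) {B : ℝ} (hB : ∀ x, |f x| ≤ B) (x : ℝ) {v s : ℝ}
    (hv : 0 ≤ v) (hs : 0 ≤ s) :
    ∫ w, sm f (x + √s * w) v ∂(gaussianReal 0 1) = sm f x (v + s) := by
  have hm : Measurable (fun t => sm f (x + t) v) := (sm_meas hf).comp (by fun_prop : Measurable fun t : ℝ => (x + t, v))
  have h1 : ∫ w, sm f (x + √s * w) v ∂(gaussianReal 0 1)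
      = ∫ t, sm f (x + t) v ∂(gaussianReal 0 s.toNNReal) := by
    rw [← g_map hs, integral_map (by fun_prop) hm.aestronglyMeasurable]
  rw [h1, sm_eq hf x (add_nonneg hv hs)]
  have h2 : gaussianReal 0 (v + s).toNNReal = gaussianReal 0 s.toNNReal ∗ gaussianReal 0 v.toNNReal := by
    rw [gaussianReal_conv_gaussianReal, Real.toNNReal_add hv hs, add_comm v.toNNReal]
    simp
  rw [h2]
  unfold Measure.conv
  rw [integral_map (by fun_prop) (Measurable.aestronglyMeasurable (by fun_prop)), integral_prod]
  · congr 1; ext t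
    rw [sm_eq hf _ hv]
    simp only [add_assoc]
  · exact Integrable.of_bound (Measurable.aestronglyMeasurable (by fun_prop)) B (Eventually.of_forall fun z => hB _)

def c3 : ℝ := ∫ z, |z| ^ 3 ∂(gaussianReal 0 1)
lemma c3_nonneg : 0 ≤ c3 := integral_nonneg fun z => by positivity

lemma g_int3 : Integrable (fun z : ℝ => |z| ^ 3) (gaussianReal 0 1) := by
  have := (memLp_id_gaussianReal (μ := 0) (v := 1) 3).integrable_norm_pow (by norm_num)
  simpa using this
lemma g_int2 : Integrable (fun z : ℝ => z ^ 2) (gaussianReal 0 1) := by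
  have := (memLp_id_gaussianReal (μ := 0) (v := 1) 2).integrable_sq
  simpa using this
lemma g_int1 : Integrable (fun z : ℝ => z) (gaussianReal 0 1) := by
  have := (memLp_id_gaussianReal (μ := 0) (v := 1) 1)
  exact this.integrable (by simp)
lemma g_sq : ∫ z, z ^ 2 ∂(gaussianReal 0 1) = 1 := by
  have h := variance_id_gaussianReal (μ := 0) (v := 1)
  rw [variance_eq_integral (by fun_prop)] at h
  simpa using h

lemma sm_lower {f p1 p2 : ℝ → ℝ} {B : ℝ} (h : TestF f p1 p2 B) (x : ℝ) {v s : ℝ}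
    (hv : 0 ≤ v) (hs : 0 ≤ s) :
    sm f x v + sm p2 x v * s / 2 - 3 * c3 * √s ^ 3 ≤ sm f x (v + s) := by
  rw [← sm_semi h.mf h.bf x hv hs]
  have hm : Measurable (fun t => sm f (x + t) v) :=
    (sm_meas h.mf).comp (by fun_prop : Measurable fun t : ℝ => (x + t, v))
  have j0 : Integrable (fun _ : ℝ => sm f x v) (gaussianReal 0 1) := integrable_const _
  have j1 : Integrable (fun w : ℝ => sm p1 x v * √s * w) (gaussianReal 0 1) := g_int1.const_mul _
  have j2 : Integrable (fun w : ℝ => sm p2 x v * s / 2 * w ^ 2) (gaussianReal 0 1) := g_int2.const_mul _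
  have j3 : Integrable (fun w : ℝ => (-3 * √s ^ 3) * |w| ^ 3) (gaussianReal 0 1) := g_int3.const_mul _
  have e : sm f x v + sm p2 x v * s / 2 - 3 * c3 * √s ^ 3 =
      ∫ w, (sm f x v + sm p1 x v * √s * w + sm p2 x v * s / 2 * w ^ 2 + (-3 * √s ^ 3) * |w| ^ 3)
        ∂(gaussianReal 0 1) := by
    rw [int_add4 j0 j1 j2 j3, integral_const_mul, integral_const_mul, integral_const_mul, g_sq,
      integral_id_gaussianReal, ← c3]
    simp
    ring
  rw [e]
  apply integral_mono (((j0.add j1).add j2).add j3)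
  · exact Integrable.of_bound (hm.comp (by fun_prop : Measurable fun w : ℝ => √s * w)).aestronglyMeasurable B
      (Eventually.of_forall fun z => sm_bdd h.bf _ _)
  intro w
  have := (abs_le.1 (sm_taylor h x (√s * w) v)).1
  rw [mul_pow, sq_sqrt hs, abs_mul, mul_pow, abs_of_nonneg (sqrt_nonneg s)] at this
  simp only [Pi.add_apply]
  linarith

section
variable {Ω : Type*} [m0 : MeasurableSpace Ω] {μ : Measure Ω} [IsProbabilityMeasure μ]
    {F : ℕ → MeasurableSpace Ω} {n : ℕ} {y s : ℕ → Ω → ℝ}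

lemma MD.lind_step (h : MD μ F n y s) (hA : ∀ ω, psum s n ω ≤ 1) {f p1 p2 : ℝ → ℝ} {B : ℝ}
    (hf : TestF f p1 p2 B) {k : ℕ} (hk : k < n) :
    ∫ ω, sm f (psum y (k + 1) ω) (1 - psum s (k + 1) ω) ∂μ ≤
    ∫ ω, sm f (psum y k ω) (1 - psum s k ω) ∂μ + 3 * ∫ ω, |y k ω| ^ 3 ∂μ
      + 3 * c3 * ∫ ω, √(s k ω) ^ 3 ∂μ := by
  have hA' : ∀ m ≤ n, ∀ ω, psum s m ω ≤ 1 := fun m hm ω =>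
    (Finset.sum_le_sum_of_subset_of_nonneg (Finset.range_subset_range.2 hm)
      fun i _ _ => h.s0 i ω).trans (hA ω)
  have mp : Measurable[F k] (fun ω => (psum y k ω, 1 - psum s (k + 1) ω)) :=
    (h.mS hk.le).prodMk ((measurable_const).sub (h.mA hk))
  have mP : ∀ {p : ℝ → ℝ}, Measurable p →
      Measurable[F k] (fun ω => sm p (psum y k ω) (1 - psum s (k + 1) ω)) :=
    fun hp => (sm_meas hp).comp mp
  have mP' : ∀ {p : ℝ → ℝ}, Measurable p →
      Measurable (fun ω => sm p (psum y k ω) (1 - psum s (k + 1) ω)) :=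
    fun hp => (mP hp).mono (h.le _) le_rfl
  have mU : ∀ {p : ℝ → ℝ}, Measurable p → ∀ i j, i ≤ n → j ≤ n →
      Measurable (fun ω => sm p (psum y i ω) (1 - psum s j ω)) :=
    fun hp i j hi hj => (sm_meas hp).comp ((h.mS' hi).prodMk ((h.mA' hj).const_sub 1))
  have iU : ∀ {p : ℝ → ℝ}, Measurable p → (∀ x, |p x| ≤ B) → ∀ i j, i ≤ n → j ≤ n →
      Integrable (fun ω => sm p (psum y i ω) (1 - psum s j ω)) μ :=
    fun hp hb i j hi hj => Integrable.of_bound (mU hp i j hi hj).aestronglyMeasurable B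
      (Eventually.of_forall fun z => sm_bdd hb _ _)
  have my := h.my' hk
  have ms := h.ms' hk
  have c1 : Integrable (fun _ : Ω => |(1:ℝ)| ^ 3) μ := integrable_const _
  have iy2 : Integrable (fun ω => y k ω ^ 2) μ := by
    simpa using int_ab2 (measurable_const (a := (1:ℝ))) my c1 (h.ly k hk)
  have iy1 : Integrable (fun ω => y k ω) μ := by
    simpa using int_ab2 my (measurable_const (a := (1:ℝ))) (h.ly k hk) c1
  have is1 : Integrable (fun ω => s k ω) μ := by
    simpa using int_as (measurable_const (a := (1:ℝ))) ms (h.s0 k) c1 (h.ls k hk)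
  have iP1 : Integrable (fun ω => sm p1 (psum y k ω) (1 - psum s (k + 1) ω) * y k ω) μ :=
    iy1.bdd_mul (mP' hf.m1).aestronglyMeasurable (Eventually.of_forall fun ω => sm_bdd hf.b1 _ _)
  have iP2 : Integrable (fun ω => sm p2 (psum y k ω) (1 - psum s (k + 1) ω) * y k ω ^ 2) μ :=
    iy2.bdd_mul (mP' hf.m2).aestronglyMeasurable (Eventually.of_forall fun ω => sm_bdd hf.b2 _ _)
  have iP3 : Integrable (fun ω => sm p2 (psum y k ω) (1 - psum s (k + 1) ω) * s k ω) μ :=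
    is1.bdd_mul (mP' hf.m2).aestronglyMeasurable (Eventually.of_forall fun ω => sm_bdd hf.b2 _ _)
  have e1 := h.h1 k hk _ (mP hf.m1) iP1
  have e2 := h.h2 k hk _ (mP hf.m2) iP2 iP3
  have iH := iU hf.mf hf.bf k (k + 1) (by omega) (by omega)
  have up : ∫ ω, sm f (psum y (k + 1) ω) (1 - psum s (k + 1) ω) ∂μ ≤
      ∫ ω, sm f (psum y k ω) (1 - psum s (k + 1) ω) ∂μ
      + (∫ ω, sm p2 (psum y k ω) (1 - psum s (k + 1) ω) * s k ω ∂μ) / 2 + 3 * ∫ ω, |y k ω| ^ 3 ∂μ := by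
    have := int_add4 iH iP1 (iP2.div_const 2) ((h.ly k hk).const_mul 3)
    rw [e1, integral_div, integral_const_mul, e2, add_zero] at this
    rw [← this]
    apply integral_mono (iU hf.mf hf.bf _ _ (by omega) (by omega))
      (((iH.add iP1).add (iP2.div_const 2)).add ((h.ly k hk).const_mul 3))
    intro ω
    have := (abs_le.1 (sm_taylor hf (psum y k ω) (y k ω) (1 - psum s (k + 1) ω))).2
    simp only [Pi.add_apply]
    rw [psum_succ y]
    linarith
  have lo : ∫ ω, sm f (psum y k ω) (1 - psum s (k + 1) ω) ∂μ
      + (∫ ω, sm p2 (psum y k ω) (1 - psum s (k + 1) ω) * s k ω ∂μ) / 2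
      - 3 * c3 * ∫ ω, √(s k ω) ^ 3 ∂μ ≤ ∫ ω, sm f (psum y k ω) (1 - psum s k ω) ∂μ := by
    have j0 : Integrable (fun _ : Ω => (0:ℝ)) μ := integrable_const _
    have := int_add4 iH (iP3.div_const 2) ((h.ls k hk).const_mul (-(3 * c3))) j0
    rw [integral_div, integral_const_mul, integral_zero, add_zero] at this
    have e : ∫ ω, sm f (psum y k ω) (1 - psum s (k + 1) ω) ∂μ
      + (∫ ω, sm p2 (psum y k ω) (1 - psum s (k + 1) ω) * s k ω ∂μ) / 2
      - 3 * c3 * ∫ ω, √(s k ω) ^ 3 ∂μ = ∫ ω, sm f (psum y k ω) (1 - psum s (k + 1) ω) ∂μ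
      + (∫ ω, sm p2 (psum y k ω) (1 - psum s (k + 1) ω) * s k ω ∂μ) / 2
      + (-(3 * c3)) * ∫ ω, √(s k ω) ^ 3 ∂μ := by ring
    rw [e, ← this]
    apply integral_mono (((iH.add (iP3.div_const 2)).add ((h.ls k hk).const_mul (-(3 * c3)))).add j0)
      (iU hf.mf hf.bf _ _ (by omega) (by omega))
    intro ω
    have := sm_lower hf (psum y k ω) (v := 1 - psum s (k + 1) ω) (s := s k ω)
      (by linarith [hA' (k + 1) hk ω]) (h.s0 k ω)
    have e' : 1 - psum s (k + 1) ω + s k ω = 1 - psum s k ω := by rw [psum_succ]; ring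
    rw [e'] at this
    simp only [Pi.add_apply]
    linarith
  linarith

lemma MD.lind (h : MD μ F n y s) (hA : ∀ ω, psum s n ω ≤ 1) {f p1 p2 : ℝ → ℝ} {B : ℝ}
    (hf : TestF f p1 p2 B) :
    ∫ ω, sm f (psum y n ω) (1 - psum s n ω) ∂μ - ∫ x, f x ∂(gaussianReal 0 1) ≤
      3 * ∑ k ∈ Finset.range n, ∫ ω, |y k ω| ^ 3 ∂μ
      + 3 * c3 * ∑ k ∈ Finset.range n, ∫ ω, √(s k ω) ^ 3 ∂μ := by
  have key : ∀ m ≤ n, ∫ ω, sm f (psum y m ω) (1 - psum s m ω) ∂μ - ∫ x, f x ∂(gaussianReal 0 1) ≤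
      3 * ∑ k ∈ Finset.range m, ∫ ω, |y k ω| ^ 3 ∂μ
      + 3 * c3 * ∑ k ∈ Finset.range m, ∫ ω, √(s k ω) ^ 3 ∂μ := by
    intro m
    induction m with
    | zero => intro _; simp [psum, sm]
    | succ m ih =>
      intro hm
      rw [Finset.sum_range_succ, Finset.sum_range_succ, mul_add, mul_add]
      linarith [ih (by omega), h.lind_step hA hf (k := m) (by omega)]
  exact key n le_rfl

end

lemma trunc_aux (s χ : ℕ → ℝ) (hs : ∀ k, 0 ≤ s k)
    (hχ : ∀ k, (∑ i ∈ Finset.range (k + 1), s i ≤ 1 ∧ χ k = 1) ∨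
      (1 < ∑ i ∈ Finset.range (k + 1), s i ∧ χ k = 0)) (m : ℕ) :
    (∑ i ∈ Finset.range m, s i ≤ 1 ∧
      ∑ i ∈ Finset.range m, χ i * s i = ∑ i ∈ Finset.range m, s i) ∨
    (1 < ∑ i ∈ Finset.range m, s i ∧ ∑ i ∈ Finset.range m, χ i * s i ≤ 1 ∧
      ∃ k ∈ Finset.range m, 1 - s k ≤ ∑ i ∈ Finset.range m, χ i * s i) := by
  induction m with
  | zero => left; simp
  | succ m ih =>
    have e1 := Finset.sum_range_succ s m
    have e2 := Finset.sum_range_succ (fun i => χ i * s i) m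
    have h0 := hs m
    rcases hχ m with ⟨h1, h2⟩ | ⟨h1, h2⟩
    · left
      refine ⟨h1, ?_⟩
      rcases ih with ⟨i1, i2⟩ | ⟨i1, i2⟩
      · rw [e2, e1, i2, h2, one_mul]
      · exfalso; linarith
    · right
      refine ⟨h1, ?_⟩
      rw [h2, zero_mul, add_zero] at e2
      rw [e2]
      rcases ih with ⟨i1, i2⟩ | ⟨i1, i2, k, hk, i3⟩
      · exact ⟨by linarith, m, by simp, by linarith⟩
      · exact ⟨i2, k, by simp at hk ⊢; omega, i3⟩

lemma trunc_est (s χ : ℕ → ℝ) (hs : ∀ k, 0 ≤ s k)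
    (hχ : ∀ k, (∑ i ∈ Finset.range (k + 1), s i ≤ 1 ∧ χ k = 1) ∨
      (1 < ∑ i ∈ Finset.range (k + 1), s i ∧ χ k = 0)) (n : ℕ) :
    ∑ i ∈ Finset.range n, χ i * s i ≤ 1 ∧
    √(1 - ∑ i ∈ Finset.range n, χ i * s i) ^ 3 ≤
      √|∑ i ∈ Finset.range n, s i - 1| ^ 3 + ∑ i ∈ Finset.range n, √(s i) ^ 3 ∧
    √(∑ i ∈ Finset.range n, (1 - χ i) * s i) ^ 3 ≤
      4 * (√|∑ i ∈ Finset.range n, s i - 1| ^ 3 + ∑ i ∈ Finset.range n, √(s i) ^ 3) := by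
  have hq : ∑ i ∈ Finset.range n, (1 - χ i) * s i =
      ∑ i ∈ Finset.range n, s i - ∑ i ∈ Finset.range n, χ i * s i := by
    rw [← Finset.sum_sub_distrib]; congr 1; ext i; ring
  have hS : 0 ≤ ∑ i ∈ Finset.range n, √(s i) ^ 3 := Finset.sum_nonneg fun i _ => by positivity
  have hk' : ∀ k ∈ Finset.range n, √(s k) ^ 3 ≤ ∑ i ∈ Finset.range n, √(s i) ^ 3 := fun k hk =>
    Finset.single_le_sum (f := fun i => √(s i) ^ 3) (fun i _ => by positivity) hk
  have h3 : 0 ≤ √|∑ i ∈ Finset.range n, s i - 1| ^ 3 := by positivity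
  rw [hq]
  rcases trunc_aux s χ hs hχ n with ⟨i1, i2⟩ | ⟨i1, i2, k, hk, i3⟩
  · rw [i2]
    refine ⟨i1, ?_, ?_⟩
    · rw [abs_sub_comm, abs_of_nonneg (sub_nonneg.2 i1)]
      linarith
    · rw [sub_self, sqrt_zero, zero_pow (by norm_num)]
      linarith
  · refine ⟨i2, ?_, ?_⟩
    · have : √(1 - ∑ i ∈ Finset.range n, χ i * s i) ^ 3 ≤ √(s k) ^ 3 :=
        pow_le_pow_left₀ (sqrt_nonneg _) (sqrt_le_sqrt (by linarith)) 3
      linarith [hk' k hk]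
    · have : √(∑ i ∈ Finset.range n, s i - ∑ i ∈ Finset.range n, χ i * s i) ^ 3 ≤
          √(|∑ i ∈ Finset.range n, s i - 1| + s k) ^ 3 :=
        pow_le_pow_left₀ (sqrt_nonneg _) (sqrt_le_sqrt (by
          linarith [le_abs_self (∑ i ∈ Finset.range n, s i - 1)])) 3
      have h4 := sqrt_cube_add (|∑ i ∈ Finset.range n, s i - 1|) (s k) (abs_nonneg _) (hs k)
      linarith [hk' k hk]

/-- gluing a transport map with a coupling -/
lemma glue (ρ : Measure (ℝ × ℝ)) [IsProbabilityMeasure ρ] (T : ℝ → ℝ) (hT : Measurable T)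
    (h : (gaussianReal 0 1).map T = ρ.fst) :
    ∃ cp : Measure (ℝ × ℝ), IsProbabilityMeasure cp ∧ cp.map Prod.snd = gaussianReal 0 1 ∧
      cp.map (fun p => (T p.2, p.1)) = ρ := by
  let κ : Kernel ℝ ℝ := ρ.condKernel.comap T hT
  let cp := (gaussianReal 0 1) ⊗ₘ κ
  have hcp : cp.map (fun p => (T p.1, p.2)) = ρ := by
    conv_rhs => rw [← ρ.disintegrate ρ.condKernel, ← h]
    ext S hS
    rw [Measure.map_apply (by fun_prop) hS, Measure.compProd_apply (hS.preimage (by fun_prop)),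
      Measure.compProd_apply hS, lintegral_map (Kernel.measurable_kernel_prodMk_left hS) hT]
    rfl
  refine ⟨cp.map Prod.swap, Measure.isProbabilityMeasure_map (by fun_prop), ?_, ?_⟩
  · rw [Measure.map_map (by fun_prop) (by fun_prop)]
    change cp.map Prod.fst = _
    exact Measure.fst_compProd _ _
  · rw [Measure.map_map (by fun_prop) (by fun_prop)]
    exact hcp

section
variable {Ω : Type*} [m0 : MeasurableSpace Ω] {μ : Measure Ω} [IsProbabilityMeasure μ]
    {F : ℕ → MeasurableSpace Ω} {n : ℕ} {y s : ℕ → Ω → ℝ}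

lemma MD.coupling (h : MD μ F n y s)
    (js : ∀ k < n, ∫ ω, √(s k ω) ^ 3 ∂μ ≤ ∫ ω, |y k ω| ^ 3 ∂μ) :
    ∃ cp : Measure (ℝ × ℝ), IsProbabilityMeasure cp ∧ cp.map Prod.fst = μ.map (psum y n) ∧
      cp.map Prod.snd = gaussianReal 0 1 ∧
      ∫⁻ p, ENNReal.ofReal (|p.1 - p.2| ^ 3) ∂cp ≤
        ENNReal.ofReal (2000 * (1 + c3) * (∑ k ∈ Finset.range n, ∫ ω, |y k ω| ^ 3 ∂μ
          + ∫ ω, √|psum s n ω - 1| ^ 3 ∂μ)) := by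
  classical
  set L := ∑ k ∈ Finset.range n, ∫ ω, |y k ω| ^ 3 ∂μ with hL
  set J := ∫ ω, √|psum s n ω - 1| ^ 3 ∂μ with hJ
  have c0 := c3_nonneg
  have L0 : 0 ≤ L := Finset.sum_nonneg fun k _ => integral_nonneg fun ω => by positivity
  have J0 : 0 ≤ J := integral_nonneg fun ω => by positivity
  let χ : ℕ → Ω → ℝ := fun k ω => if psum s (k + 1) ω ≤ 1 then 1 else 0
  have hχ01 : ∀ k ω, χ k ω = 0 ∨ χ k ω = 1 := by
    intro k ω; simp only [χ]; split_ifs <;> simp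
  have hχm : ∀ k < n, Measurable[F k] (χ k) := fun k hk =>
    Measurable.ite (measurableSet_le (h.mA hk) measurable_const) measurable_const measurable_const
  have hψ01 : ∀ k ω, (1 - χ k ω) = 0 ∨ (1 - χ k ω) = 1 := by
    intro k ω; rcases hχ01 k ω with h | h <;> simp [h]
  have hψm : ∀ k < n, Measurable[F k] (fun ω => 1 - χ k ω) := fun k hk =>
    measurable_const.sub (hχm k hk)
  have H1 := h.ind χ hχm hχ01
  have H2 := h.ind (fun k ω => 1 - χ k ω) hψm hψ01
  set y' : ℕ → Ω → ℝ := fun k ω => χ k ω * y k ω with hy'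
  set s' : ℕ → Ω → ℝ := fun k ω => χ k ω * s k ω with hs'
  set d : ℕ → Ω → ℝ := fun k ω => (1 - χ k ω) * y k ω with hd
  set q : ℕ → Ω → ℝ := fun k ω => (1 - χ k ω) * s k ω with hq
  have est := fun ω => trunc_est (fun k => s k ω) (fun k => χ k ω) (fun k => h.s0 k ω) (by
    intro k
    change (psum s (k + 1) ω ≤ 1 ∧ χ k ω = 1) ∨ (1 < psum s (k + 1) ω ∧ χ k ω = 0)
    simp only [χ]
    split_ifs with h1
    · left; exact ⟨h1, rfl⟩
    · right; exact ⟨not_le.1 h1, rfl⟩) n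
  have e1 : ∀ ω, psum s' n ω ≤ 1 := fun ω => (est ω).1
  have e2 : ∀ ω, √(1 - psum s' n ω) ^ 3 ≤
    √|psum s n ω - 1| ^ 3 + ∑ i ∈ Finset.range n, √(s i ω) ^ 3 := fun ω => (est ω).2.1
  have e3 : ∀ ω, √(psum q n ω) ^ 3 ≤
    4 * (√|psum s n ω - 1| ^ 3 + ∑ i ∈ Finset.range n, √(s i ω) ^ 3) := fun ω => (est ω).2.2
  have iS : Integrable (fun ω => ∑ i ∈ Finset.range n, √(s i ω) ^ 3) μ :=
    integrable_finset_sum _ fun i hi => h.ls i (Finset.mem_range.1 hi)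
  have S_le : ∫ ω, ∑ i ∈ Finset.range n, √(s i ω) ^ 3 ∂μ ≤ L := by
    rw [integral_finset_sum _ fun i hi => h.ls i (Finset.mem_range.1 hi)]
    exact Finset.sum_le_sum fun i hi => js i (Finset.mem_range.1 hi)
  have mAn : Measurable (psum s n) := h.mA' le_rfl
  have iA : Integrable (fun ω => √|psum s n ω - 1| ^ 3) μ := by
    have i1 : Integrable (fun ω => 4 * (√(psum s n ω) ^ 3 + √1 ^ 3)) μ :=
      ((h.lA le_rfl).add (integrable_const _)).const_mul 4
    refine i1.mono' (by fun_prop) (Eventually.of_forall fun ω => ?_)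
    rw [Real.norm_of_nonneg (by positivity)]
    have a0 := h.A0 n ω
    refine le_trans ?_ (sqrt_cube_add _ _ a0 zero_le_one)
    refine pow_le_pow_left₀ (sqrt_nonneg _) (sqrt_le_sqrt ?_) 3
    rw [abs_le]; constructor <;> linarith
  have mB : Measurable (psum s' n) := H1.mA' le_rfl
  have mY' : Measurable (psum y' n) := H1.mS' le_rfl
  have mY : Measurable (psum y n) := h.mS' le_rfl
  have iR : Integrable (fun ω => √(1 - psum s' n ω) ^ 3) μ := by
    refine (iA.add iS).mono' (by fun_prop) (Eventually.of_forall fun ω => ?_)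
    rw [Real.norm_of_nonneg (by positivity)]
    exact e2 ω
  have R_le : ∫ ω, √(1 - psum s' n ω) ^ 3 ∂μ ≤ J + L := by
    have : ∫ ω, √(1 - psum s' n ω) ^ 3 ∂μ ≤ ∫ ω, (√|psum s n ω - 1| ^ 3 +
      ∑ i ∈ Finset.range n, √(s i ω) ^ 3) ∂μ := integral_mono iR (iA.add iS) e2
    rw [integral_add iA iS] at this
    linarith
  have Q_le : ∫ ω, √(psum q n ω) ^ 3 ∂μ ≤ 4 * (J + L) := by
    have : ∫ ω, √(psum q n ω) ^ 3 ∂μ ≤ ∫ ω, 4 * (√|psum s n ω - 1| ^ 3 +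
      ∑ i ∈ Finset.range n, √(s i ω) ^ 3) ∂μ :=
      integral_mono (H2.lA le_rfl) ((iA.add iS).const_mul 4) e3
    rw [integral_const_mul, integral_add iA iS] at this
    linarith
  have mulle : ∀ (c : ℝ), (c = 0 ∨ c = 1) → ∀ x, |c * x| ^ 3 ≤ |x| ^ 3 := by
    rintro c (rfl | rfl) x
    · simp
    · simp
  have y_le : ∑ k ∈ Finset.range n, ∫ ω, |y' k ω| ^ 3 ∂μ ≤ L :=
    Finset.sum_le_sum fun k hk => integral_mono (H1.ly k (Finset.mem_range.1 hk))
      (h.ly k (Finset.mem_range.1 hk)) fun ω => mulle _ (hχ01 k ω) _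
  have d_le : ∑ k ∈ Finset.range n, ∫ ω, |d k ω| ^ 3 ∂μ ≤ L :=
    Finset.sum_le_sum fun k hk => integral_mono (H2.ly k (Finset.mem_range.1 hk))
      (h.ly k (Finset.mem_range.1 hk)) fun ω => mulle _ (hψ01 k ω) _
  have s_le : ∑ k ∈ Finset.range n, ∫ ω, √(s' k ω) ^ 3 ∂μ ≤ L :=
    Finset.sum_le_sum fun k hk => (integral_mono (H1.ls k (Finset.mem_range.1 hk))
      (h.ls k (Finset.mem_range.1 hk)) (fun ω => by
        change √(χ k ω * s k ω) ^ 3 ≤ √(s k ω) ^ 3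
        rcases hχ01 k ω with h | h
        · rw [h]; simp
        · rw [h, one_mul])).trans (js k (Finset.mem_range.1 hk))
  have ros : ∫ ω, |psum d n ω| ^ 3 ∂μ ≤ 66 * (J + L) := by
    have := H2.rosenthal
    linarith
  let X' : Ω × ℝ → ℝ := fun p => psum y' n p.1 + √(1 - psum s' n p.1) * p.2
  have mX' : Measurable X' := by
    have a1 : Measurable fun p : Ω × ℝ => psum y' n p.1 := mY'.comp measurable_fst
    have a2 : Measurable fun p : Ω × ℝ => psum s' n p.1 := mB.comp measurable_fst
    fun_prop
  let P := μ.prod (gaussianReal 0 1)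
  let ρ : Measure (ℝ × ℝ) := P.map (fun p => (X' p, psum y n p.1))
  have mρ : Measurable (fun p : Ω × ℝ => (X' p, psum y n p.1)) :=
    mX'.prodMk (mY.comp measurable_fst)
  have : IsProbabilityMeasure ρ := Measure.isProbabilityMeasure_map mρ.aemeasurable
  have hfst : ρ.fst = P.map X' := by
    rw [Measure.fst, Measure.map_map measurable_fst mρ]; rfl
  obtain ⟨T, mT, hT, cost⟩ := rio ρ.fst (3 * (1 + c3) * L) (by
    intro f p1 p2 B hf
    have hh := H1.lind e1 hf
    have : ∫ x, f x ∂ρ.fst = ∫ ω, sm f (psum y' n ω) (1 - psum s' n ω) ∂μ := by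
      rw [hfst, integral_map mX'.aemeasurable hf.mf.aestronglyMeasurable, integral_prod]
      · rfl
      · exact Integrable.of_bound (hf.mf.comp mX').aestronglyMeasurable B
          (Eventually.of_forall fun z => hf.bf _)
    rw [this]
    refine hh.trans ?_
    nlinarith [mul_le_mul_of_nonneg_left s_le c0])
  obtain ⟨cp, hcp, cp2, hcρ⟩ := glue ρ T mT hT
  have m2 : Measurable (fun p : ℝ × ℝ => (T p.2, p.1)) := by fun_prop
  refine ⟨cp, hcp, ?_, cp2, ?_⟩
  · have : cp.map Prod.fst = ρ.map Prod.snd := by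
      rw [← hcρ, Measure.map_map measurable_snd m2]; rfl
    rw [this, Measure.map_map measurable_snd mρ]
    have : (Prod.snd ∘ fun p : Ω × ℝ => (X' p, psum y n p.1)) = psum y n ∘ Prod.fst := rfl
    rw [this, ← Measure.map_map mY measurable_fst]
    congr 1
    change (μ.prod (gaussianReal 0 1)).fst = μ
    simp
  ·
    have k1 : ∫⁻ p, ENNReal.ofReal (|p.1 - T p.2| ^ 3) ∂cp ≤
        ENNReal.ofReal (4 * ((66 + c3) * (J + L))) := by
      have a1 : ∫⁻ p, ENNReal.ofReal (|p.1 - T p.2| ^ 3) ∂cp =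
          ∫⁻ r, ENNReal.ofReal (|r.2 - r.1| ^ 3) ∂ρ := by
        rw [← hcρ, lintegral_map (by fun_prop) m2]
      have a2 : ∫⁻ r, ENNReal.ofReal (|r.2 - r.1| ^ 3) ∂ρ =
          ∫⁻ p, ENNReal.ofReal (|psum y n p.1 - X' p| ^ 3) ∂P := by
        rw [lintegral_map (by fun_prop) mρ]
      have iD : Integrable (fun ω => |psum d n ω| ^ 3) μ := H2.lS le_rfl
      have b1 : Integrable (fun p : Ω × ℝ => |psum d n p.1| ^ 3) P := iD.comp_fst _
      have b2 : Integrable (fun p : Ω × ℝ => √(1 - psum s' n p.1) ^ 3 * |p.2| ^ 3) P :=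
        iR.mul_prod g_int3
      have b3 : Integrable (fun p : Ω × ℝ => 4 * (|psum d n p.1| ^ 3 +
        √(1 - psum s' n p.1) ^ 3 * |p.2| ^ 3)) P := (b1.add b2).const_mul 4
      have b4 : ∫ p, 4 * (|psum d n p.1| ^ 3 +
        √(1 - psum s' n p.1) ^ 3 * |p.2| ^ 3) ∂P ≤ 4 * ((66 + c3) * (J + L)) := by
        rw [integral_const_mul, integral_add b1 b2]
        have f1 : ∫ p, |psum d n p.1| ^ 3 ∂P = ∫ ω, |psum d n ω| ^ 3 ∂μ := by
          have := integral_fun_fst (μ := μ) (ν := gaussianReal 0 1) (fun ω => |psum d n ω| ^ 3)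
          simpa using this
        have f2 : ∫ p, √(1 - psum s' n p.1) ^ 3 * |p.2| ^ 3 ∂P =
            (∫ ω, √(1 - psum s' n ω) ^ 3 ∂μ) * c3 :=
          integral_prod_mul (fun ω => √(1 - psum s' n ω) ^ 3) (fun z : ℝ => |z| ^ 3)
        rw [f1, f2]
        nlinarith [mul_le_mul_of_nonneg_right R_le c0]
      rw [a1, a2]
      refine le_trans ?_ (ENNReal.ofReal_le_ofReal b4)
      rw [ofReal_integral_eq_lintegral_ofReal b3 (Eventually.of_forall fun p => by positivity)]
      refine lintegral_mono fun p => ENNReal.ofReal_le_ofReal ?_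
      have hdec : psum y n p.1 - X' p = psum d n p.1 + (-(√(1 - psum s' n p.1) * p.2)) := by
        have : psum y n p.1 = psum y' n p.1 + psum d n p.1 := by
          simp only [psum, y', d, ← Finset.sum_add_distrib]
          congr 1; ext i; ring
        simp only [X']
        rw [this]; ring
      rw [hdec]
      refine (abs_cube_add _ _).trans ?_
      rw [abs_neg, abs_mul, abs_of_nonneg (sqrt_nonneg _), mul_pow]
    have k2 : ∫⁻ p, ENNReal.ofReal (|T p.2 - p.2| ^ 3) ∂cp ≤
        ENNReal.ofReal (30 * (3 * (1 + c3) * L)) := by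
      refine le_trans (le_of_eq ?_) cost
      rw [← cp2, lintegral_map (by fun_prop) measurable_snd]
    have k3 : ∫⁻ p, ENNReal.ofReal (|p.1 - p.2| ^ 3) ∂cp ≤
        ∫⁻ p, (ENNReal.ofReal 4 * ENNReal.ofReal (|p.1 - T p.2| ^ 3)
          + ENNReal.ofReal 4 * ENNReal.ofReal (|T p.2 - p.2| ^ 3)) ∂cp := by
      refine lintegral_mono fun p => ?_
      beta_reduce
      rw [← ENNReal.ofReal_mul (by norm_num), ← ENNReal.ofReal_mul (by norm_num),
        ← ENNReal.ofReal_add (by positivity) (by positivity)]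
      refine ENNReal.ofReal_le_ofReal ?_
      have := abs_cube_add (p.1 - T p.2) (T p.2 - p.2)
      rw [sub_add_sub_cancel] at this
      linarith
    refine k3.trans ?_
    rw [lintegral_add_left (by fun_prop), lintegral_const_mul _ (by fun_prop),
      lintegral_const_mul _ (by fun_prop)]
    refine (add_le_add (mul_le_mul_right k1 _) (mul_le_mul_right k2 _)).trans ?_
    rw [← ENNReal.ofReal_mul (by norm_num), ← ENNReal.ofReal_mul (by norm_num),
        ← ENNReal.ofReal_add (by positivity) (by positivity)]
    refine ENNReal.ofReal_le_ofReal ?_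
    nlinarith [mul_nonneg c0 L0, mul_nonneg c0 J0]
end

lemma sqrt_cube_rpow (x : ℝ) (hx : 0 ≤ x) : x ^ (3 / 2 : ℝ) = √x ^ 3 := by
  rw [Real.sqrt_eq_rpow, ← Real.rpow_natCast, ← Real.rpow_mul hx]
  norm_num

lemma e32 : (3 / 2 : ℝ≥0∞).toReal = 3 / 2 := by simp

lemma sqrt_sq_cube (x : ℝ) : √(x ^ 2) ^ 3 = |x| ^ 3 := by rw [Real.sqrt_sq_eq_abs]

section
variable {Ω : Type*} [m0 : MeasurableSpace Ω] {μ : Measure Ω} [IsProbabilityMeasure μ]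

lemma memLp3_iff {f : Ω → ℝ} (hf : AEStronglyMeasurable f μ) :
    Integrable (fun ω => |f ω| ^ 3) μ ↔ MemLp f 3 μ := by
  have := integrable_norm_rpow_iff (p := 3) hf (by norm_num) (by norm_num)
  rw [← this]
  have e : (3 : ℝ≥0∞).toReal = (3 : ℕ) := by simp
  simp only [e, Real.rpow_natCast, Real.norm_eq_abs]

lemma memLp32_iff {f : Ω → ℝ} (hf : AEStronglyMeasurable f μ) :
    Integrable (fun ω => √|f ω| ^ 3) μ ↔ MemLp f (3 / 2) μ := by
  have := integrable_norm_rpow_iff (p := 3 / 2) hf (by simp) (by finiteness)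
  rw [← this]
  simp only [e32, Real.norm_eq_abs, fun ω => sqrt_cube_rpow |f ω| (abs_nonneg _)]

lemma jensen32 {m : MeasurableSpace Ω} {f : Ω → ℝ} (hf : MemLp f (3 / 2) μ) :
    MemLp (μ[f | m]) (3 / 2) μ ∧
    ∫ ω, √|(μ[f | m]) ω| ^ 3 ∂μ ≤ ∫ ω, √|f ω| ^ 3 ∂μ := by
  have h1 : (1 : ℝ≥0∞) ≤ 3 / 2 := by
    rw [ENNReal.le_div_iff_mul_le (by simp) (by simp)]; norm_num
  have hc := hf.condExp (m := m) h1
  refine ⟨hc, ?_⟩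
  have h := eLpNorm_condExp_le_eLpNorm (m := m) (μ := μ) f h1
  rw [hc.eLpNorm_eq_integral_rpow_norm (by simp) (by finiteness),
    hf.eLpNorm_eq_integral_rpow_norm (by simp) (by finiteness), e32] at h
  simp only [Real.norm_eq_abs, fun x : ℝ => sqrt_cube_rpow |x| (abs_nonneg _)] at h
  have p1 : 0 ≤ ∫ ω, √|f ω| ^ 3 ∂μ := integral_nonneg fun ω => by positivity
  have p2 : 0 ≤ ∫ ω, √|(μ[f | m]) ω| ^ 3 ∂μ := integral_nonneg fun ω => by positivity
  rw [ENNReal.ofReal_le_ofReal_iff (by positivity)] at h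
  exact (Real.rpow_le_rpow_iff p2 p1 (by norm_num)).1 h

variable {F : ℕ → MeasurableSpace Ω} {n : ℕ} {Y : ℕ → Ω → ℝ}

lemma mds_MD (hY : IsMDS μ F n Y) {sn : ℝ} (hsn : 0 < sn)
    (hI : ∀ i, 1 ≤ i → i ≤ n → Integrable (fun ω => |Y i ω| ^ 3) μ) :
    MD μ F n (fun k ω => Y (k + 1) ω / sn)
      (fun k ω => max 0 ((μ[fun ω' => Y (k + 1) ω' ^ 2 | F k]) ω) / sn ^ 2) ∧
    ∀ k < n, ∫ ω, √(max 0 ((μ[fun ω' => Y (k + 1) ω' ^ 2 | F k]) ω) / sn ^ 2) ^ 3 ∂μ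
      ≤ ∫ ω, |Y (k + 1) ω / sn| ^ 3 ∂μ := by
  have hsq : ∀ k < n, MemLp (fun ω => Y (k + 1) ω ^ 2) (3 / 2) μ := by
    intro k hk
    have mY := (hY.adapted (k + 1) (by omega) (by omega)).mono (hY.le _) le_rfl
    rw [← memLp32_iff (mY.pow_const 2).aestronglyMeasurable]
    simp only [abs_pow, sqrt_sq_cube, abs_abs]
    exact hI _ (by omega) (by omega)
  have hsq1 : ∀ k < n, Integrable (fun ω => Y (k + 1) ω ^ 2) μ := fun k hk =>
    (hY.memL2 (k + 1) (by omega) (by omega)).integrable_sq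
  have hY1 : ∀ k < n, Integrable (Y (k + 1)) μ := fun k hk =>
    (hY.memL2 (k + 1) (by omega) (by omega)).integrable (by norm_num)
  have hpos : ∀ k, ∀ᵐ ω ∂μ, 0 ≤ (μ[fun ω' => Y (k + 1) ω' ^ 2 | F k]) ω := fun k =>
    condExp_nonneg (Eventually.of_forall fun ω => sq_nonneg _)
  have hms : ∀ k, Measurable[F k] (μ[fun ω' => Y (k + 1) ω' ^ 2 | F k]) := fun k =>
    stronglyMeasurable_condExp.measurable
  have hae : ∀ k, (fun ω => √(max 0 ((μ[fun ω' => Y (k + 1) ω' ^ 2 | F k]) ω) / sn ^ 2) ^ 3) =ᵐ[μ]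
      fun ω => √|(μ[fun ω' => Y (k + 1) ω' ^ 2 | F k]) ω| ^ 3 / sn ^ 3 := by
    intro k
    filter_upwards [hpos k] with ω h
    rw [max_eq_right h, abs_of_nonneg h, Real.sqrt_div h, Real.sqrt_sq hsn.le, div_pow]
  constructor
  · refine ⟨hY.le, hY.mono, ?_, ?_, ?_, ?_, ?_, ?_, ?_⟩
    · intro k hk
      exact (hY.adapted (k + 1) (by omega) (by omega)).div_const _
    · intro k hk
      simp only [abs_div, div_pow]
      exact (hI _ (by omega) (by omega)).div_const _
    · intro k hk
      exact (measurable_const.max (hms k)).div_const _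
    · intro k ω
      positivity
    · intro k hk
      refine Integrable.congr ?_ (hae k).symm
      exact ((memLp32_iff (jensen32 (hsq k hk)).1.1).2 (jensen32 (hsq k hk)).1).div_const _
    · intro k hk g hg hi
      have e : (fun ω => g ω * (Y (k + 1) ω / sn)) = (fun ω => g ω / sn) * Y (k + 1) := by
        ext ω; simp only [Pi.mul_apply]; ring
      rw [e] at hi ⊢
      have hgs : StronglyMeasurable[F k] (fun ω => g ω / sn) := (hg.div_const _).stronglyMeasurable
      rw [← integral_condExp (hY.le k)]
      have h0 := hY.mdiff (k + 1) (by omega) (by omega)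
      rw [Nat.add_sub_cancel] at h0
      rw [integral_congr_ae (g := 0), Pi.zero_def, integral_zero]
      filter_upwards [condExp_mul_of_stronglyMeasurable_left hgs hi (hY1 k hk), h0] with ω h1 h2
      rw [h1, Pi.mul_apply, h2]; simp
    · intro k hk g hg hi _
      have e : (fun ω => g ω * (Y (k + 1) ω / sn) ^ 2) =
          (fun ω => g ω / sn ^ 2) * fun ω => Y (k + 1) ω ^ 2 := by
        ext ω; simp only [Pi.mul_apply]; ring
      rw [e] at hi ⊢
      have hgs : StronglyMeasurable[F k] (fun ω => g ω / sn ^ 2) :=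
        (hg.div_const _).stronglyMeasurable
      rw [← integral_condExp (hY.le k)]
      refine integral_congr_ae ?_
      filter_upwards [condExp_mul_of_stronglyMeasurable_left hgs hi (hsq1 k hk), hpos k] with ω h1 h2
      rw [h1, Pi.mul_apply, max_eq_right h2]; ring
  · intro k hk
    rw [integral_congr_ae (hae k)]
    simp only [abs_div, div_pow, abs_of_pos hsn]
    rw [integral_div, integral_div]
    refine div_le_div_of_nonneg_right ?_ (by positivity)
    have := (jensen32 (m := F k) (hsq k hk)).2
    simpa only [abs_pow, sqrt_sq_cube, abs_abs] using this

lemma mds_condExp (hY : IsMDS μ F n Y) {k m : ℕ} (hkm : k ≤ m) (hm : m ≤ n) :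
    μ[psum (fun k => Y (k + 1)) m | F k] =ᵐ[μ] psum (fun k => Y (k + 1)) k := by
  have hY1 : ∀ k < n, Integrable (Y (k + 1)) μ := fun k hk =>
    (hY.memL2 (k + 1) (by omega) (by omega)).integrable (by norm_num)
  have hps : ∀ m ≤ n, Integrable (psum (fun k => Y (k + 1)) m) μ := fun m hm =>
    integrable_finsetSum _ fun i hi => hY1 i (by rw [Finset.mem_range] at hi; omega)
  induction m, hkm using Nat.le_induction with
  | base =>
    rw [condExp_of_stronglyMeasurable (hY.le k) _ (hps k hm)]
    apply Measurable.stronglyMeasurable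
    refine Finset.measurable_sum _ fun i hi => ?_
    rw [Finset.mem_range] at hi
    exact (hY.adapted (i + 1) (by omega) (by omega)).mono (hY.mono (by omega)) le_rfl
  | succ m hkm ih =>
    have e : psum (fun k => Y (k + 1)) (m + 1) = psum (fun k => Y (k + 1)) m + Y (m + 1) := by
      ext ω; exact psum_succ _ _ _
    rw [e]
    have h0 := hY.mdiff (m + 1) (by omega) (by omega)
    rw [Nat.add_sub_cancel] at h0
    have h1 := condExp_congr_ae (m := F k) h0
    have h2 := condExp_condExp_of_le (μ := μ) (f := Y (m + 1)) (hY.mono hkm) (hY.le m)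
    filter_upwards [condExp_add (hps m (by omega)) (hY1 m (by omega)) (F k), ih (by omega), h1, h2]
      with ω a1 a2 a3 a4
    rw [a1, Pi.add_apply, a2, ← a4, a3, condExp_zero]
    simp

lemma mds_L3 (hY : IsMDS μ F n Y) (h : MemLp (psum (fun k => Y (k + 1)) n) 3 μ) :
    ∀ i, 1 ≤ i → i ≤ n → Integrable (fun ω => |Y i ω| ^ 3) μ := by
  have hk : ∀ k ≤ n, MemLp (psum (fun k => Y (k + 1)) k) 3 μ := fun k hk =>
    (h.condExp (m := F k) (by norm_num)).ae_eq (mds_condExp hY hk le_rfl)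
  intro i h1 hi
  obtain ⟨k, rfl⟩ : ∃ k, i = k + 1 := ⟨i - 1, by omega⟩
  have mY := (hY.adapted (k + 1) (by omega) (by omega)).mono (hY.le _) le_rfl
  rw [memLp3_iff mY.aestronglyMeasurable]
  have := (hk (k + 1) hi).sub (hk k (by omega))
  convert this using 1
  ext ω
  simp [psum_succ]

end

lemma wass_le (cpl : Measure (ℝ × ℝ)) (h : IsProbabilityMeasure cpl) (μ ν : Measure ℝ)
    (h1 : cpl.map Prod.fst = μ) (h2 : cpl.map Prod.snd = ν) :
    wassersteinDist 3 μ ν ≤ (∫ p, |p.1 - p.2| ^ 3 ∂cpl) ^ ((1 : ℝ) / 3) := by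
  refine csInf_le ⟨0, ?_⟩ ⟨cpl, h, h1, h2, ?_⟩
  · rintro d ⟨c, -, -, -, rfl⟩
    exact Real.rpow_nonneg (integral_nonneg fun p => Real.rpow_nonneg (abs_nonneg _) _) _
  · norm_cast

lemma psum_Icc {Ω : Type*} (Y : ℕ → Ω → ℝ) (n : ℕ) (ω : Ω) :
    ∑ i ∈ Finset.Icc 1 n, Y i ω = psum (fun k => Y (k + 1)) n ω := by
  rw [psum, Finset.range_eq_Ico, Finset.sum_Ico_add' (fun i => Y i ω) 0 n 1]
  rfl

lemma sum_Icc_range (a : ℕ → ℝ) (n : ℕ) :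
    ∑ i ∈ Finset.Icc 1 n, a i = ∑ k ∈ Finset.range n, a (k + 1) := by
  rw [Finset.range_eq_Ico, Finset.sum_Ico_add' a 0 n 1]
  rfl

theorem w3_bound :
    ∃ C : ℝ, 0 < C ∧
      ∀ (Ω : Type) (m0 : MeasurableSpace Ω) (μ : Measure Ω), IsProbabilityMeasure μ →
      ∀ (F : ℕ → MeasurableSpace Ω) (n : ℕ) (Y : ℕ → Ω → ℝ) (sn : ℝ),
        1 ≤ n → IsMDS μ F n Y → 0 < sn →
        sn ^ 2 = ∑ i ∈ Finset.Icc 1 n, ∫ ω, (Y i ω) ^ 2 ∂μ →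
        wassersteinDist 3 (μ.map fun ω => (∑ i ∈ Finset.Icc 1 n, Y i ω) / sn) stdGaussian ≤
          C * (((∑ i ∈ Finset.Icc 1 n, ∫ ω, |Y i ω| ^ 3 ∂μ) ^ ((1 : ℝ) / 3) / sn) + rnorm μ (3 / 2) (fun ω => (∑ i ∈ Finset.Icc 1 n, (μ[fun ω' => (Y i ω') ^ 2 | F (i - 1)]) ω) / sn ^ 2 - 1) ^ ((1 : ℝ) / 2)) := by
  have c0 := c3_nonneg
  refine ⟨(2000 * (1 + c3)) ^ ((1 : ℝ) / 3), by positivity, ?_⟩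
  intro Ω m0 μ hμ F n Y sn hn hY hsn _
  have hL0 : 0 ≤ ∑ i ∈ Finset.Icc 1 n, ∫ ω, |Y i ω| ^ 3 ∂μ :=
    Finset.sum_nonneg fun i _ => integral_nonneg fun ω => by positivity
  have hJ0 : ∀ U : Ω → ℝ, 0 ≤ ∫ ω, |U ω| ^ (3 / 2 : ℝ) ∂μ := fun U =>
    integral_nonneg fun ω => by positivity
  have hXm : Measurable (fun ω => (∑ i ∈ Finset.Icc 1 n, Y i ω) / sn) := by
    refine Measurable.div_const (Finset.measurable_sum _ fun i hi => ?_) _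
    rw [Finset.mem_Icc] at hi
    exact (hY.adapted i hi.1 hi.2).mono (hY.le _) le_rfl
  by_cases hI : ∀ i, 1 ≤ i → i ≤ n → Integrable (fun ω => |Y i ω| ^ 3) μ
  · obtain ⟨hMD, js⟩ := mds_MD hY hsn hI
    obtain ⟨cp, hcp, cp1, cp2, cost⟩ := hMD.coupling js
    have hX : psum (fun k ω => Y (k + 1) ω / sn) n = fun ω => (∑ i ∈ Finset.Icc 1 n, Y i ω) / sn := by
      ext ω
      rw [psum_Icc, psum, psum, Finset.sum_div]
    rw [hX] at cp1
    refine (wass_le cp hcp _ _ cp1 cp2).trans ?_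
    set L := ∑ i ∈ Finset.Icc 1 n, ∫ ω, |Y i ω| ^ 3 ∂μ with hL
    set V : Ω → ℝ := fun ω => (∑ i ∈ Finset.Icc 1 n,
      (μ[fun ω' => (Y i ω') ^ 2 | F (i - 1)]) ω) / sn ^ 2 - 1 with hV
    have eL : ∑ k ∈ Finset.range n, ∫ ω, |Y (k + 1) ω / sn| ^ 3 ∂μ = L / sn ^ 3 := by
      rw [hL, sum_Icc_range, Finset.sum_div]
      refine Finset.sum_congr rfl fun k _ => ?_
      simp only [abs_div, div_pow, abs_of_pos hsn]
      rw [integral_div]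
    have eJ : ∫ ω, √|psum (fun k ω => max 0 ((μ[fun ω' => Y (k + 1) ω' ^ 2 | F k]) ω) / sn ^ 2) n ω
        - 1| ^ 3 ∂μ = ∫ ω, |V ω| ^ (3 / 2 : ℝ) ∂μ := by
      refine integral_congr_ae ?_
      have hall : ∀ᵐ ω ∂μ, ∀ k, 0 ≤ (μ[fun ω' => Y (k + 1) ω' ^ 2 | F k]) ω :=
        ae_all_iff.2 fun k => condExp_nonneg (Eventually.of_forall fun ω => sq_nonneg _)
      filter_upwards [hall] with ω hω
      rw [sqrt_cube_rpow _ (abs_nonneg _)]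
      congr 3
      simp only [hV]
      rw [sum_Icc_range (fun i => (μ[fun ω' => (Y i ω') ^ 2 | F (i - 1)]) ω), psum, Finset.sum_div]
      congr 1
      refine Finset.sum_congr rfl fun k _ => ?_
      rw [max_eq_right (hω k), Nat.add_sub_cancel]
    rw [eL, eJ] at cost
    set J := ∫ ω, |V ω| ^ (3 / 2 : ℝ) ∂μ with hJ
    have J0 : 0 ≤ J := hJ0 V
    have hIntg : ∫ p, |p.1 - p.2| ^ 3 ∂cp ≤ 2000 * (1 + c3) * (L / sn ^ 3 + J) := by
      rw [integral_eq_lintegral_of_nonneg_ae (Eventually.of_forall fun p => by positivity)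
        (by fun_prop)]
      refine ENNReal.toReal_le_of_le_ofReal (by positivity) cost
    refine (Real.rpow_le_rpow (integral_nonneg fun p => by positivity) hIntg (by norm_num)).trans ?_
    rw [Real.mul_rpow (by positivity) (by positivity)]
    refine mul_le_mul_of_nonneg_left ?_ (by positivity)
    refine (Real.rpow_add_le_add_rpow (by positivity) J0 (by norm_num) (by norm_num)).trans ?_
    have t1 : (L / sn ^ 3) ^ ((1 : ℝ) / 3) = L ^ ((1 : ℝ) / 3) / sn := by
      rw [Real.div_rpow hL0 (by positivity), ← Real.rpow_natCast, ← Real.rpow_mul hsn.le]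
      norm_num
    have t2 : J ^ ((1 : ℝ) / 3) = rnorm μ (3 / 2) V ^ ((1 : ℝ) / 2) := by
      rw [rnorm, ← hJ, ← Real.rpow_mul J0]
      norm_num
    rw [t1, t2]
  · have hnX : ¬ MemLp (fun ω => (∑ i ∈ Finset.Icc 1 n, Y i ω) / sn) 3 μ := by
      intro h
      apply hI
      apply mds_L3 hY
      convert h.mul_const sn using 1
      ext ω
      rw [← psum_Icc]
      field_simp
    have hr : 0 ≤ rnorm μ (3 / 2) (fun ω => (∑ i ∈ Finset.Icc 1 n,
        (μ[fun ω' => (Y i ω') ^ 2 | F (i - 1)]) ω) / sn ^ 2 - 1) :=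
      Real.rpow_nonneg (hJ0 _) _
    refine le_trans ?_ (by positivity : (0:ℝ) ≤ _)
    have : IsProbabilityMeasure (μ.map fun ω => (∑ i ∈ Finset.Icc 1 n, Y i ω) / sn) :=
      Measure.isProbabilityMeasure_map hXm.aemeasurable
    set ν := μ.map fun ω => (∑ i ∈ Finset.Icc 1 n, Y i ω) / sn with hν
    have : IsProbabilityMeasure _root_.stdGaussian := by unfold _root_.stdGaussian; infer_instance
    have p1 : (ν.prod _root_.stdGaussian).map Prod.fst = ν := by
      change (ν.prod _root_.stdGaussian).fst = ν
      simp
    have p2 : (ν.prod _root_.stdGaussian).map Prod.snd = _root_.stdGaussian := by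
      change (ν.prod _root_.stdGaussian).snd = _root_.stdGaussian
      simp
    refine (wass_le (ν.prod _root_.stdGaussian) inferInstance _ _ p1 p2).trans (le_of_eq ?_)
    rw [integral_undef, Real.zero_rpow (by norm_num)]
    intro hi
    apply hnX
    have h1 : MemLp (fun p : ℝ × ℝ => p.1 - p.2) 3 (ν.prod _root_.stdGaussian) :=
      (memLp3_iff (by fun_prop)).1 hi
    have h2 : MemLp (fun p : ℝ × ℝ => p.2) 3 (ν.prod _root_.stdGaussian) := by
      have hg : MemLp (id : ℝ → ℝ) 3 ((ν.prod _root_.stdGaussian).map Prod.snd) := by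
        rw [p2]; exact memLp_id_gaussianReal 3
      exact (memLp_map_measure_iff hg.1 (by fun_prop)).1 hg
    have h3 : MemLp (fun p : ℝ × ℝ => p.1) 3 (ν.prod _root_.stdGaussian) := by
      convert h1.add h2 using 1
      ext p; simp
    have h4 : MemLp (id : ℝ → ℝ) 3 ν := by
      rw [← p1, memLp_map_measure_iff (by fun_prop) (by fun_prop)]
      exact h3
    rw [hν, memLp_map_measure_iff (by fun_prop) hXm.aemeasurable] at h4
    exact h4
end
end

section
/- For every p > 2 there exist constants N₀, c, C, all depending only on p, such that for every integer n > N₀ there exists a square-integrable martingale difference sequence {Y_i}_{i=1}^n (on some probability space, with some filtration) satisfying: V_n² = 1 almost surely; L_p ≤ C (log n)^{-1}; and c · L_p ≤ W_1(X_n, N) ≤ C · L_p, where N is a standard normal random variable. -/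
open MeasureTheory ProbabilityTheory Real Filter

noncomputable section

open scoped ENNReal

/-! ### Auxiliary lemmas -/

def gsg (w : ℝ) : ℝ := if w < 0 then -1 else 1

def gfn (c w : ℝ) : ℝ := if c < 0 then gsg w else w

lemma gsg_meas : Measurable gsg :=
  Measurable.ite (measurableSet_lt measurable_id measurable_const) measurable_const measurable_const

lemma gfn_meas : Measurable (fun q : ℝ × ℝ => gfn q.1 q.2) :=
  Measurable.ite (measurableSet_lt measurable_fst measurable_const)
    (gsg_meas.comp measurable_snd) measurable_snd

lemma gsg_abs (w : ℝ) : |gsg w| = 1 := by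
  unfold gsg; split_ifs <;> simp

lemma gsg_sq (w : ℝ) : gsg w ^ 2 = 1 := by
  unfold gsg; split_ifs <;> norm_num

lemma char_re_im (v : NNReal) (t : ℝ) :
    ∫ x, Real.cos (t * x) ∂(gaussianReal 0 v) = Real.exp (-(v * t ^ 2 / 2)) ∧
    ∫ x, Real.sin (t * x) ∂(gaussianReal 0 v) = 0 := by
  have h := charFun_gaussianReal (μ := 0) (v := v) t
  rw [charFun_apply_real] at h
  have hi : Integrable (fun x : ℝ => Complex.exp (t * x * Complex.I)) (gaussianReal 0 v) := by
    refine Integrable.of_bound (C := 1) (by fun_prop) (ae_of_all _ fun x => ?_)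
    have := Complex.norm_exp_ofReal_mul_I (t * x)
    push_cast at this
    exact this.le
  have e : Complex.exp (t * (0:ℝ) * Complex.I - v * t ^ 2 / 2)
      = ((Real.exp (-(v * t ^ 2 / 2)) : ℝ) : ℂ) := by
    push_cast; congr 1; ring
  rw [e] at h
  constructor
  · have h1 := integral_re hi
    simp only [RCLike.re_to_complex] at h1
    rw [h, Complex.ofReal_re] at h1
    rw [← h1]
    refine integral_congr_ae (ae_of_all _ fun x => ?_)
    have := Complex.exp_ofReal_mul_I_re (t * x)
    push_cast at this
    exact this.symm
  · have h1 := (integral_im (𝕜 := ℂ) hi)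
    simp only [RCLike.im_to_complex] at h1
    rw [h, Complex.ofReal_im] at h1
    refine Eq.trans ?_ h1
    refine integral_congr_ae (ae_of_all _ fun x => ?_)
    have := Complex.exp_ofReal_mul_I_im (t * x)
    push_cast at this
    exact this.symm

lemma gsg_mean : ∫ w, gsg w ∂(gaussianReal 0 1) = 0 := by
  have h1 : (gaussianReal 0 1).map (fun x : ℝ => -x) = gaussianReal 0 1 := by
    rw [gaussianReal_map_neg]; simp
  have h2 : ∫ w, gsg w ∂(gaussianReal 0 1) = ∫ w, gsg (-w) ∂(gaussianReal 0 1) := by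
    conv_lhs => rw [← h1]
    rw [integral_map (by fun_prop) gsg_meas.aestronglyMeasurable]
  have h3 : ∫ w, gsg (-w) ∂(gaussianReal 0 1) = ∫ w, - gsg w ∂(gaussianReal 0 1) := by
    have hna := nullSingletonClass_gaussianReal (μ := 0) (v := 1) (by norm_num)
    have h0 : ∀ᵐ w ∂(gaussianReal 0 1), w ≠ (0:ℝ) := by
      rw [ae_iff]; simp only [ne_eq, not_not, Set.ofPred_eq_eq_singleton]
      exact measure_singleton _
    refine integral_congr_ae ?_
    filter_upwards [h0] with w hw
    unfold gsg
    rcases lt_or_gt_of_ne hw with h | h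
    · rw [if_pos h, if_neg (by linarith)]; norm_num
    · rw [if_pos (by linarith), if_neg (by linarith)]
  rw [integral_neg] at h3
  linarith

lemma gauss_memLp (q : ℝ) (v : NNReal) (hq : 0 < q) :
    Integrable (fun w : ℝ => |w| ^ q) (gaussianReal 0 v) := by
  have h := (memLp_id_gaussianReal' (μ := 0) (v := v) (ENNReal.ofReal q) (by simp)).integrable_norm_rpow
    (by simpa using hq) (by simp)
  simpa [ENNReal.toReal_ofReal hq.le] using h

lemma gauss_int (v : NNReal) : Integrable (fun w : ℝ => w) (gaussianReal 0 v) :=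
  (memLp_id_gaussianReal' (μ := 0) (v := v) 1 (by simp)).integrable le_rfl

lemma gauss_int_sq (v : NNReal) : Integrable (fun w : ℝ => w ^ 2) (gaussianReal 0 v) :=
  (memLp_id_gaussianReal' (μ := 0) (v := v) 2 (by simp)).integrable_sq

lemma gauss_sq : ∫ w, w ^ 2 ∂(gaussianReal 0 1) = (1:ℝ) := by
  have h := variance_fun_id_gaussianReal (μ := 0) (v := 1)
  rw [variance_of_integral_eq_zero (by fun_prop) (by simp)] at h
  simpa using h

lemma gauss_abs : ∫ w, |w| ∂(gaussianReal 0 1) ≤ (1:ℝ) := by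
  have h : ∫ w, |w| ∂(gaussianReal 0 1) ≤ ∫ w, (1 + w ^ 2) / 2 ∂(gaussianReal 0 1) := by
    refine integral_mono (gauss_int 1).abs (((integrable_const _).add (gauss_int_sq 1)).div_const 2) ?_
    intro w
    have := sq_abs w
    simp only
    nlinarith [sq_nonneg (|w| - 1)]
  rw [integral_div, integral_add (integrable_const _) (gauss_int_sq 1), gauss_sq] at h
  simp at h
  linarith

/-- Key oscillation estimate. -/
lemma key_osc (v : NNReal) (δ : ℝ) (hδ : 0 < δ) (hδ2 : δ ≤ 1 / 2) (hv : (v : ℝ) = 1 - δ ^ 2) :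
    1 / 8 ≤ (∫ q, Real.cos (π / δ * (q.1 + δ * gfn (Real.cos (π / δ * q.1)) q.2))
        ∂((gaussianReal 0 v).prod (gaussianReal 0 1)))
      - ∫ x, Real.cos (π / δ * x) ∂(gaussianReal 0 1) := by
  set θ := π / δ with hθ
  have hθ6 : 6 ≤ θ := by
    rw [hθ, le_div_iff₀ hδ]; nlinarith [Real.pi_gt_three]
  have hθδ : ∀ w, θ * (δ * w) = π * w := by
    intro w; rw [hθ]; field_simp
  have hm : Measurable (fun q : ℝ × ℝ => Real.cos (θ * (q.1 + δ * gfn (Real.cos (θ * q.1)) q.2))) := by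
    have : Measurable (fun q : ℝ × ℝ => gfn (Real.cos (θ * q.1)) q.2) :=
      gfn_meas.comp (f := fun q : ℝ × ℝ => (Real.cos (θ * q.1), q.2)) (by fun_prop)
    fun_prop
  have hIntg : Integrable (fun q : ℝ × ℝ => Real.cos (θ * (q.1 + δ * gfn (Real.cos (θ * q.1)) q.2)))
      ((gaussianReal 0 v).prod (gaussianReal 0 1)) :=
    Integrable.of_bound (C := 1) hm.aestronglyMeasurable
      (ae_of_all _ fun x => by simpa using Real.abs_cos_le_one _)
  have cint : ∀ (w : NNReal) (t : ℝ), Integrable (fun x : ℝ => Real.cos (t * x)) (gaussianReal 0 w) :=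
    fun w t => Integrable.of_bound (C := 1) (by fun_prop)
      (ae_of_all _ fun x => by simpa using Real.abs_cos_le_one _)
  have sint : ∀ (w : NNReal) (t : ℝ), Integrable (fun x : ℝ => Real.sin (t * x)) (gaussianReal 0 w) :=
    fun w t => Integrable.of_bound (C := 1) (by fun_prop)
      (ae_of_all _ fun x => by simpa using Real.abs_sin_le_one _)
  rw [integral_prod _ hIntg]
  have inner : ∀ x : ℝ, 1 / 4 + Real.cos ((2 * θ) * x) / 4 - Real.cos (θ * x) / 2 ≤
      ∫ w, Real.cos (θ * (x + δ * gfn (Real.cos (θ * x)) w)) ∂(gaussianReal 0 1) := by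
    intro x
    have h2 : Real.cos ((2 * θ) * x) = 2 * Real.cos (θ * x) ^ 2 - 1 := by
      rw [← Real.cos_two_mul]; ring_nf
    have hle := Real.neg_one_le_cos (θ * x)
    by_cases hc : Real.cos (θ * x) < 0
    · have : ∀ w, Real.cos (θ * (x + δ * gfn (Real.cos (θ * x)) w)) = - Real.cos (θ * x) := by
        intro w
        rw [mul_add, hθδ]
        unfold gfn gsg
        rw [if_pos hc]
        split_ifs
        · rw [mul_neg_one, ← sub_eq_add_neg, Real.cos_sub_pi]
        · rw [mul_one, Real.cos_add_pi]
      simp_rw [this]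
      simp only [integral_const, smul_eq_mul, probReal_univ, one_mul]
      rw [h2]; nlinarith
    · have : ∀ w, Real.cos (θ * (x + δ * gfn (Real.cos (θ * x)) w)) =
          Real.cos (θ * x) * Real.cos (π * w) - Real.sin (θ * x) * Real.sin (π * w) := by
        intro w
        rw [mul_add, hθδ]
        unfold gfn
        rw [if_neg hc, Real.cos_add]
      simp_rw [this]
      rw [integral_sub ((cint 1 π).const_mul _) ((sint 1 π).const_mul _), integral_const_mul,
        integral_const_mul, (char_re_im 1 π).1, (char_re_im 1 π).2]
      push Not at hc
      have := mul_nonneg hc (Real.exp_pos (-(((1:NNReal):ℝ) * π ^ 2 / 2))).le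
      have hle' := Real.cos_le_one (θ * x)
      rw [h2]; nlinarith
  have hmono := integral_mono (μ := gaussianReal 0 v)
    (f := fun x => 1 / 4 + Real.cos ((2 * θ) * x) / 4 - Real.cos (θ * x) / 2)
    (((integrable_const _).add ((cint v (2 * θ)).div_const 4)).sub ((cint v θ).div_const 2))
    hIntg.integral_prod_left inner
  rw [integral_sub (by exact ((integrable_const _).add ((cint v (2 * θ)).div_const 4)))
      ((cint v θ).div_const 2),
    integral_add (integrable_const _) ((cint v (2 * θ)).div_const 4), integral_div, integral_div, integral_div,
    (char_re_im v (2 * θ)).1, (char_re_im v θ).1] at hmono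
  simp only [integral_const, smul_eq_mul, probReal_univ, one_mul] at hmono
  rw [(char_re_im 1 θ).1]
  have ebound : ∀ y : ℝ, 13 ≤ y → Real.exp (-y) ≤ 1 / 14 := by
    intro y hy
    rw [Real.exp_neg, inv_eq_one_div]
    exact one_div_le_one_div_of_le (by norm_num) (by linarith [Real.add_one_le_exp y])
  have hv34 : 3 / 4 ≤ (v : ℝ) := by rw [hv]; nlinarith
  have e1 := ebound (v * θ ^ 2 / 2) (by nlinarith [mul_self_nonneg (θ - 6)])
  have e2 := ebound (((1:NNReal):ℝ) * θ ^ 2 / 2) (by simp; nlinarith)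
  have e3 := Real.exp_pos (-(v * (2 * θ) ^ 2 / 2))
  linarith

/-- Easy direction of Kantorovich duality. -/
lemma wass_lower (μ ν : Measure ℝ) (hμ : Integrable (fun x : ℝ => x) μ)
    (hν : Integrable (fun x : ℝ => x) ν) (f : ℝ → ℝ) (hf : ∀ x y, |f x - f y| ≤ |x - y|)
    (hfm : Measurable f) (hfμ : Integrable f μ) (hfν : Integrable f ν)
    (hne : ∃ cpl : Measure (ℝ × ℝ), IsProbabilityMeasure cpl ∧
      cpl.map Prod.fst = μ ∧ cpl.map Prod.snd = ν) :
    ∫ x, f x ∂μ - ∫ x, f x ∂ν ≤ wassersteinDist 1 μ ν := by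
  unfold wassersteinDist
  obtain ⟨c0, h0, h1, h2⟩ := hne
  refine le_csInf ⟨_, c0, h0, h1, h2, rfl⟩ ?_
  rintro d ⟨c, hc, h1, h2, rfl⟩
  simp only [Real.rpow_one, div_one]
  have i1 : Integrable (fun q : ℝ × ℝ => q.1) c := by
    rw [← h1] at hμ; exact hμ.comp_measurable measurable_fst
  have i2 : Integrable (fun q : ℝ × ℝ => q.2) c := by
    rw [← h2] at hν; exact hν.comp_measurable measurable_snd
  have j1 : Integrable (fun q : ℝ × ℝ => f q.1) c := by
    rw [← h1] at hfμ; exact hfμ.comp_measurable measurable_fst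
  have j2 : Integrable (fun q : ℝ × ℝ => f q.2) c := by
    rw [← h2] at hfν; exact hfν.comp_measurable measurable_snd
  rw [← h1, ← h2, integral_map (by fun_prop) hfm.aestronglyMeasurable,
    integral_map (by fun_prop) hfm.aestronglyMeasurable, ← integral_sub j1 j2]
  exact integral_mono (j1.sub j2) (i1.sub i2).abs fun q => (le_abs_self _).trans (hf _ _)

lemma wass_upper {Ω : Type*} [MeasurableSpace Ω] (P : Measure Ω) [IsProbabilityMeasure P]
    (X Z : Ω → ℝ) (hX : Measurable X) (hZ : Measurable Z) :
    wassersteinDist 1 (P.map X) (P.map Z) ≤ ∫ ω, |X ω - Z ω| ∂P := by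
  unfold wassersteinDist
  refine csInf_le ⟨0, ?_⟩ ⟨P.map (fun ω => (X ω, Z ω)), ?_, ?_, ?_, ?_⟩
  · rintro d ⟨c, hc, h1, h2, rfl⟩
    simp only [Real.rpow_one, div_one]
    exact integral_nonneg fun _ => abs_nonneg _
  · exact Measure.isProbabilityMeasure_map (by fun_prop)
  · rw [Measure.map_map (by fun_prop) (by fun_prop)]; rfl
  · rw [Measure.map_map (by fun_prop) (by fun_prop)]; rfl
  · simp only [Real.rpow_one, div_one]
    rw [integral_map (by fun_prop) (by fun_prop)]

lemma sum_law {Ω : Type*} [MeasurableSpace Ω] {P : Measure Ω} [IsProbabilityMeasure P]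
    (u : ℕ → Ω → ℝ) (hu : ∀ i, Measurable (u i)) (hind : iIndepFun u P)
    (hlaw : ∀ i, 1 ≤ i → P.map (u i) = gaussianReal 0 1) (m : ℕ) :
    P.map (∑ i ∈ Finset.Icc 1 m, u i) = gaussianReal 0 m := by
  induction m with
  | zero =>
    simp only [zero_lt_one, Finset.Icc_eq_empty_of_lt, Finset.sum_empty, Nat.cast_zero,
      gaussianReal_zero_var]
    change P.map (fun _ => (0:ℝ)) = _
    rw [Measure.map_const]; simp
  | succ k ih =>
    rw [Finset.sum_Icc_succ_top (by omega)]
    have := gaussianReal_add_gaussianReal_of_indepFun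
      (hind.indepFun_finsetSum_of_notMem hu (s := Finset.Icc 1 k) (i := k + 1) (by simp)) ih
      (hlaw (k + 1) (by omega))
    rw [this]; simp

lemma ce_mul {Ω : Type*} {m m0 : MeasurableSpace Ω} {P : Measure Ω} [IsProbabilityMeasure P]
    (hm : m ≤ m0) (U : Ω → ℝ) (hU : Measurable U) (hlaw : P.map U = gaussianReal 0 1)
    (hind : Indep (MeasurableSpace.comap U inferInstance) m P)
    (a : Ω → ℝ) (ha : Measurable[m] a) (hb : ∀ ω, |a ω| ≤ 1)
    (h : ℝ → ℝ) (hh : Measurable h) (hi : Integrable h (gaussianReal 0 1)) :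
    P[fun ω => a ω * h (U ω) | m] =ᵐ[P] fun ω => a ω * ∫ w, h w ∂(gaussianReal 0 1) := by
  have hi' : Integrable (fun ω => h (U ω)) P := by
    rw [← hlaw] at hi; exact hi.comp_measurable hU
  have h1 : P[a * (fun ω => h (U ω)) | m] =ᵐ[P] a * P[fun ω => h (U ω) | m] :=
    condExp_stronglyMeasurable_mul_of_bound hm ha.stronglyMeasurable hi' 1
      (ae_of_all _ fun ω => by simpa using hb ω)
  have h2 : P[fun ω => h (U ω) | m] =ᵐ[P] fun _ => ∫ ω, h (U ω) ∂P :=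
    condExp_indep_eq hU.comap_le hm
      (hh.comp (comap_measurable U)).stronglyMeasurable hind
  have h3 : ∫ ω, h (U ω) ∂P = ∫ w, h w ∂(gaussianReal 0 1) := by
    rw [← hlaw, integral_map hU.aemeasurable hh.aestronglyMeasurable]
  refine (show (fun ω => a ω * h (U ω)) = a * (fun ω => h (U ω)) from rfl) ▸ h1.trans ?_
  filter_upwards [h2] with ω hω
  simp only [Pi.mul_apply]
  rw [hω, h3]

/-- Conditional mean and variance of the last increment. -/
lemma ce_gfn {Ω : Type*} {m m0 : MeasurableSpace Ω} {P : Measure Ω} [IsProbabilityMeasure P]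
    (hm : m ≤ m0) (U : Ω → ℝ) (hU : Measurable U) (hlaw : P.map U = gaussianReal 0 1)
    (hind : Indep (MeasurableSpace.comap U inferInstance) m P)
    (c : Ω → ℝ) (hc : Measurable[m] c) (δ : ℝ) :
    P[fun ω => δ * gfn (c ω) (U ω) | m] =ᵐ[P] 0 ∧
    P[fun ω => (δ * gfn (c ω) (U ω)) ^ 2 | m] =ᵐ[P] fun _ => δ ^ 2 := by
  set a : Ω → ℝ := fun ω => if c ω < 0 then 1 else 0 with hadef
  set b : Ω → ℝ := fun ω => if c ω < 0 then 0 else 1 with hbdef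
  have hs : MeasurableSet[m] {ω | c ω < 0} := hc measurableSet_Iio
  have ha : Measurable[m] a := Measurable.ite hs measurable_const measurable_const
  have hb : Measurable[m] b := Measurable.ite hs measurable_const measurable_const
  have hab : ∀ ω, |a ω| ≤ 1 := fun ω => by simp only [hadef]; split_ifs <;> simp
  have hbb : ∀ ω, |b ω| ≤ 1 := fun ω => by simp only [hbdef]; split_ifs <;> simp
  have ig : Integrable gsg (gaussianReal 0 1) :=
    Integrable.of_bound (C := 1) gsg_meas.aestronglyMeasurable
      (ae_of_all _ fun x => by simp [gsg_abs])
  have main : ∀ (g h : ℝ → ℝ), Measurable g → Measurable h → Integrable g (gaussianReal 0 1) →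
      Integrable h (gaussianReal 0 1) →
      P[fun ω => a ω * g (U ω) + b ω * h (U ω) | m] =ᵐ[P]
        fun ω => a ω * (∫ w, g w ∂(gaussianReal 0 1)) + b ω * ∫ w, h w ∂(gaussianReal 0 1) := by
    intro g h hg hh ig ih
    have hIntg : ∀ (a : Ω → ℝ) (g : ℝ → ℝ), Measurable[m] a → (∀ ω, |a ω| ≤ 1) →
        Integrable g (gaussianReal 0 1) → Integrable (fun ω => a ω * g (U ω)) P := by
      intro a g ha hab ig
      have : Integrable (fun ω => g (U ω)) P := by
        rw [← hlaw] at ig; exact ig.comp_measurable hU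
      exact this.bdd_mul (c := 1) (ha.mono hm le_rfl).aestronglyMeasurable (ae_of_all _ hab)
    refine (condExp_add (hIntg a g ha hab ig) (hIntg b h hb hbb ih) m).trans ?_
    filter_upwards [ce_mul hm U hU hlaw hind a ha hab g hg ig,
      ce_mul hm U hU hlaw hind b hb hbb h hh ih] with ω h1 h2
    simp only [Pi.add_apply]
    rw [h1, h2]
  constructor
  · have e : (fun ω => δ * gfn (c ω) (U ω)) =
        fun ω => a ω * (fun w => δ * gsg w) (U ω) + b ω * (fun w => δ * w) (U ω) := by
      ext ω; simp only [hadef, hbdef, gfn]; split_ifs <;> ring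
    rw [e]
    refine (main (fun w => δ * gsg w) (fun w => δ * w) (gsg_meas.const_mul δ) (by fun_prop)
      (ig.const_mul δ) ((gauss_int 1).const_mul δ)).trans ?_
    rw [integral_const_mul, integral_const_mul, gsg_mean, integral_id_gaussianReal]
    simp only [mul_zero, add_zero]; rfl
  · have e : (fun ω => (δ * gfn (c ω) (U ω)) ^ 2) =
        fun ω => a ω * (fun _ => δ ^ 2) (U ω) + b ω * (fun w => δ ^ 2 * w ^ 2) (U ω) := by
      ext ω; simp only [hadef, hbdef, gfn]; split_ifs
      · rw [mul_pow, gsg_sq]; ring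
      · ring
    rw [e]
    refine (main (fun _ => δ ^ 2) (fun w => δ ^ 2 * w ^ 2) (by fun_prop) (by fun_prop)
      (integrable_const _) ((gauss_int_sq 1).const_mul _)).trans ?_
    rw [integral_const_mul, gauss_sq]
    refine ae_of_all _ fun ω => ?_
    simp only [hadef, hbdef, integral_const, probReal_univ]
    split_ifs <;> simp

lemma gfn_abs_le (c w : ℝ) : |gfn c w| ≤ 1 + |w| := by
  unfold gfn; split_ifs
  · rw [gsg_abs]; linarith [abs_nonneg w]
  · linarith

lemma gfn_sub_le (c w : ℝ) : |gfn c w - w| ≤ 1 + |w| := by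
  unfold gfn; split_ifs
  · refine (abs_sub _ _).trans ?_
    rw [gsg_abs]
  · simp; positivity

lemma gfn_pow_le (c w p : ℝ) : |gfn c w| ^ p ≤ 1 + |w| ^ p := by
  have := Real.rpow_nonneg (abs_nonneg w) p
  unfold gfn; split_ifs
  · rw [gsg_abs, Real.one_rpow]; linarith
  · linarith

lemma pow_ge (x p : ℝ) (hp : 2 < p) : 1 + (p / 2) * (x ^ 2 - 1) ≤ |x| ^ p := by
  have h := one_add_mul_self_le_rpow_one_add (s := x ^ 2 - 1) (by nlinarith [sq_nonneg x])
    (p := p / 2) (by linarith)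
  have e : (1 + (x ^ 2 - 1)) ^ (p / 2) = |x| ^ p := by
    rw [add_sub_cancel, ← sq_abs, ← Real.rpow_natCast, ← Real.rpow_mul (abs_nonneg x)]
    congr 1; push_cast; ring
  rw [← e]; exact h

lemma iid_exists : ∃ (Ω : Type) (_m0 : MeasurableSpace Ω) (P : Measure Ω)
    (_ : IsProbabilityMeasure P) (u : ℕ → Ω → ℝ), (∀ i, Measurable (u i)) ∧ iIndepFun u P ∧
    (∀ ω, u 0 ω = 0) ∧ ∀ i, 1 ≤ i → P.map (u i) = gaussianReal 0 1 := by
  have hm : ∀ i : ℕ, Measurable (fun x : ℝ => if i = 0 then 0 else x) := by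
    intro i; split_ifs <;> fun_prop
  refine ⟨ℕ → ℝ, inferInstance, Measure.infinitePi (fun _ => gaussianReal 0 1), inferInstance,
    fun i ω => (fun x : ℝ => if i = 0 then 0 else x) (ω i), fun i => ?_, ?_, ?_, ?_⟩
  · exact (hm i).comp (measurable_pi_apply i)
  · exact iIndepFun_infinitePi (X := fun (i : ℕ) (x : ℝ) => if i = 0 then 0 else x) hm
  · simp
  · intro i hi
    have : (fun ω : ℕ → ℝ => if i = 0 then 0 else ω i) = fun ω => ω i := by
      ext ω; rw [if_neg (by omega)]
    simp only [this]
    exact Measure.infinitePi_map_eval _ i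

set_option maxHeartbeats 1000000 in
lemma construction (p : ℝ) (hp : 2 < p) (m : ℕ) (δ s : ℝ) (hδ : 0 < δ)
    (hδ2 : δ ≤ 1 / 2) (hs : 0 ≤ s) (hms : m * s ^ 2 = 1 - δ ^ 2) :
    ∃ (Ω : Type) (m0 : MeasurableSpace Ω) (μ : Measure Ω) (_ : IsProbabilityMeasure μ)
      (F : ℕ → MeasurableSpace Ω) (Y : ℕ → Ω → ℝ),
      IsMDS μ F (m + 1) Y ∧
      (∑ i ∈ Finset.Icc 1 (m + 1), ∫ ω, (Y i ω) ^ 2 ∂μ) = 1 ∧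
      ((fun ω => (∑ i ∈ Finset.Icc 1 (m + 1), (μ[fun ω' => (Y i ω') ^ 2 | F (i - 1)]) ω))
          =ᵐ[μ] (fun _ => (1 : ℝ))) ∧
      δ ^ p ≤ (∑ i ∈ Finset.Icc 1 (m + 1), ∫ ω, |Y i ω| ^ p ∂μ) ∧
      (∑ i ∈ Finset.Icc 1 (m + 1), ∫ ω, |Y i ω| ^ p ∂μ) ≤
        m * s ^ p * (∫ w, |w| ^ p ∂(gaussianReal 0 1)) +
          δ ^ p * (1 + ∫ w, |w| ^ p ∂(gaussianReal 0 1)) ∧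
      δ / 32 ≤ wassersteinDist 1 (μ.map fun ω => (∑ i ∈ Finset.Icc 1 (m + 1), Y i ω)) stdGaussian ∧
      wassersteinDist 1 (μ.map fun ω => (∑ i ∈ Finset.Icc 1 (m + 1), Y i ω)) stdGaussian
        ≤ 2 * δ := by
  obtain ⟨Ω, m0, P, hP, u, hu, hind, -, hlaw⟩ := iid_exists
  set F := Filtration.natural u (fun i => (hu i).stronglyMeasurable) with hF
  set S : Ω → ℝ := fun ω => s * ∑ i ∈ Finset.Icc 1 m, u i ω with hS
  set U : Ω → ℝ := u (m + 1) with hU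
  set c : Ω → ℝ := fun ω => Real.cos (π / δ * S ω) with hc
  set Z : Ω → ℝ := fun ω => δ * gfn (c ω) (U ω) with hZ
  set Y : ℕ → Ω → ℝ := fun i => if i ≤ m then fun ω => s * u i ω else Z with hY
  set M := ∫ w, |w| ^ p ∂(gaussianReal 0 1) with hM
  have hYs : ∀ i, i ≤ m → Y i = fun ω => s * u i ω := fun i hi => by simp only [hY]; rw [if_pos hi]
  have hYl : Y (m + 1) = Z := by simp only [hY]; rw [if_neg (by omega)]
  have huF : ∀ i j, i ≤ j → Measurable[F j] (u i) := by
    intro i j hij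
    have : MeasurableSpace.comap (u i) inferInstance ≤ F j :=
      le_iSup₂_of_le (f := fun k (_ : k ≤ j) => MeasurableSpace.comap (u k) inferInstance)
        i hij le_rfl
    exact (comap_measurable (u i)).mono this le_rfl
  have hSF : Measurable[F m] S :=
    Measurable.const_mul (Finset.measurable_fun_sum _
      fun i hi => huF i m (Finset.mem_Icc.1 hi).2) s
  have hcF : Measurable[F m] c := Real.measurable_cos.comp (hSF.const_mul _)
  have hSm : Measurable S := hSF.mono (F.le m) le_rfl
  have hcm : Measurable c := hcF.mono (F.le m) le_rfl
  have hUm : Measurable U := hu _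
  have hUlaw : P.map U = gaussianReal 0 1 := hlaw _ (by omega)
  have hgF : Measurable[F (m + 1)] Z := by
    have h1 : Measurable[F (m + 1)] (fun ω => (c ω, U ω)) :=
      Measurable.prodMk (hcF.mono (F.mono (Nat.le_succ m)) le_rfl) (huF _ _ le_rfl)
    exact (gfn_meas.comp h1).const_mul δ
  have hZm : Measurable Z := hgF.mono (F.le _) le_rfl
  have hYF : ∀ i, i ≤ m + 1 → Measurable[F i] (Y i) := by
    intro i hi
    by_cases h : i ≤ m
    · rw [hYs i h]; exact (huF i i le_rfl).const_mul s
    · obtain rfl : i = m + 1 := by omega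
      rw [hYl]; exact hgF
  have hindF : ∀ i, 1 ≤ i → Indep (MeasurableSpace.comap (u i) inferInstance) (F (i - 1)) P :=
    fun i hi => hind.indep_comap_natural_of_lt _ (by omega)
  -- transfer of integrals
  have tr : ∀ i, 1 ≤ i → ∀ f : ℝ → ℝ, Measurable f → ∫ ω, f (u i ω) ∂P = ∫ w, f w ∂(gaussianReal 0 1) := by
    intro i hi f hf
    rw [← hlaw i hi, integral_map (hu i).aemeasurable hf.aestronglyMeasurable]
  have tri : ∀ i, 1 ≤ i → ∀ f : ℝ → ℝ, Integrable f (gaussianReal 0 1) →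
      Integrable (fun ω => f (u i ω)) P := by
    intro i hi f hf
    rw [← hlaw i hi] at hf; exact hf.comp_measurable (hu i)
  have hpow : Measurable (fun w : ℝ => |w| ^ p) := by fun_prop
  have hZabs : ∀ ω, |Z ω| ≤ δ * (1 + |U ω|) := by
    intro ω; simp only [hZ]
    rw [abs_mul, abs_of_pos hδ]
    exact mul_le_mul_of_nonneg_left (gfn_abs_le _ _) hδ.le
  have uL2 : ∀ i, 1 ≤ i → MemLp (u i) 2 P := fun i hi =>
    (memLp_two_iff_integrable_sq (hu i).aestronglyMeasurable).2 (tri i hi _ (gauss_int_sq 1))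
  have ZL2 : MemLp Z 2 P := by
    have h1 : MemLp (fun ω => |U ω|) 2 P := (uL2 (m + 1) (by omega)).norm
    have h0 : MemLp (fun _ : Ω => (1 : ℝ)) 2 P := memLp_const 1
    have h2 : MemLp (fun ω => 1 + |U ω|) 2 P := h0.add h1
    have h3 : MemLp (fun ω => δ * (1 + |U ω|)) 2 P := h2.const_mul δ
    refine MemLp.mono h3 hZm.aestronglyMeasurable (ae_of_all _ fun ω => ?_)
    rw [Real.norm_eq_abs, Real.norm_eq_abs]
    exact (hZabs ω).trans (le_abs_self _)
  have hsmall : ∀ i, 1 ≤ i → i ≤ m → P[Y i | F (i - 1)] =ᵐ[P] 0 ∧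
      P[fun ω => (Y i ω) ^ 2 | F (i - 1)] =ᵐ[P] fun _ => s ^ 2 := by
    intro i hi him
    rw [hYs i him]
    constructor
    · have := ce_mul (F.le (i - 1)) (u i) (hu i) (hlaw i hi) (hindF i hi) (fun _ => 1)
        measurable_const (by simp) (fun w => s * w) (by fun_prop) ((gauss_int 1).const_mul s)
      rw [integral_const_mul, integral_id_gaussianReal] at this
      simp only [one_mul, mul_zero] at this
      exact this
    · have := ce_mul (F.le (i - 1)) (u i) (hu i) (hlaw i hi) (hindF i hi) (fun _ => 1)
        measurable_const (by simp) (fun w => s ^ 2 * w ^ 2) (by fun_prop)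
        ((gauss_int_sq 1).const_mul _)
      rw [integral_const_mul, gauss_sq] at this
      simp only [one_mul, mul_one] at this
      simp only [mul_pow]
      exact this
  have hlast := ce_gfn (F.le m) U hUm hUlaw (hindF (m + 1) (by omega)) c hcF δ
  have hsmall2 : ∀ i, 1 ≤ i → i ≤ m → ∫ ω, (Y i ω) ^ 2 ∂P = s ^ 2 := by
    intro i hi him
    rw [hYs i him]
    simp only [mul_pow]
    rw [integral_const_mul, tr i hi (fun w => w ^ 2) (by fun_prop), gauss_sq, mul_one]
  have hlast2 : ∫ ω, (Z ω) ^ 2 ∂P = δ ^ 2 := by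
    rw [← integral_condExp (F.le m), integral_congr_ae hlast.2]; simp
  have hZp : Integrable (fun ω => |Z ω| ^ p) P := by
    refine Integrable.mono' (g := fun ω => δ ^ p * (1 + |U ω| ^ p))
      (((integrable_const _).add (tri (m + 1) (by omega) _ (gauss_memLp p 1 (by linarith)))).const_mul _)
      (hpow.comp hZm).aestronglyMeasurable (ae_of_all _ fun ω => ?_)
    rw [Real.norm_of_nonneg (by positivity)]
    simp only [hZ]
    rw [abs_mul, abs_of_pos hδ, Real.mul_rpow hδ.le (abs_nonneg _)]
    exact mul_le_mul_of_nonneg_left (gfn_pow_le _ _ _) (by positivity)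
  have hZint : Integrable (fun ω => (Z ω) ^ 2) P := ZL2.integrable_sq
  have hZplow : δ ^ p ≤ ∫ ω, |Z ω| ^ p ∂P := by
    have h1 : ∫ ω, δ ^ p * (1 + (p / 2) * ((Z ω) ^ 2 / δ ^ 2 - 1)) ∂P ≤ ∫ ω, |Z ω| ^ p ∂P := by
      refine integral_mono ?_ hZp fun ω => ?_
      · exact ((integrable_const _).add (((hZint.div_const _).sub (integrable_const _)).const_mul _)).const_mul _
      · have := pow_ge (Z ω / δ) p hp
        rw [abs_div, abs_of_pos hδ, Real.div_rpow (abs_nonneg _) hδ.le, div_pow,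
          le_div_iff₀ (by positivity)] at this
        simp only
        linarith
    rw [integral_const_mul, integral_add (integrable_const _)
      (by exact ((hZint.div_const _).sub (integrable_const _)).const_mul _), integral_const_mul,
      integral_sub (hZint.div_const _) (integrable_const _), integral_div, hlast2,
      div_self (by positivity)] at h1
    simpa using h1
  have hZpup : ∫ ω, |Z ω| ^ p ∂P ≤ δ ^ p * (1 + M) := by
    have h1 : ∫ ω, |Z ω| ^ p ∂P ≤ ∫ ω, δ ^ p * (1 + |U ω| ^ p) ∂P := by
      refine integral_mono hZp
        (((integrable_const _).add (tri (m + 1) (by omega) _ (gauss_memLp p 1 (by linarith)))).const_mul _)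
        fun ω => ?_
      simp only [hZ]
      rw [abs_mul, abs_of_pos hδ, Real.mul_rpow hδ.le (abs_nonneg _)]
      exact mul_le_mul_of_nonneg_left (gfn_pow_le _ _ _) (by positivity)
    rw [integral_const_mul, integral_add (integrable_const _)
      (tri (m + 1) (by omega) _ (gauss_memLp p 1 (by linarith))),
      tr (m + 1) (by omega) _ hpow] at h1
    simpa using h1
  have hsmallp : ∀ i, 1 ≤ i → i ≤ m → ∫ ω, |Y i ω| ^ p ∂P = s ^ p * M := by
    intro i hi him
    rw [hYs i him]
    simp only [abs_mul, abs_of_nonneg hs]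
    simp_rw [fun ω => Real.mul_rpow (z := p) hs (abs_nonneg (u i ω))]
    rw [integral_const_mul, tr i hi _ hpow]
  have hsump : ∑ i ∈ Finset.Icc 1 (m + 1), ∫ ω, |Y i ω| ^ p ∂P =
      m * s ^ p * M + ∫ ω, |Z ω| ^ p ∂P := by
    rw [Finset.sum_Icc_succ_top (by omega), hYl,
      Finset.sum_congr rfl fun i hi => hsmallp i (Finset.mem_Icc.1 hi).1 (Finset.mem_Icc.1 hi).2]
    simp [mul_assoc]
  have hM0 : 0 ≤ M := integral_nonneg fun w => by positivity
  -- laws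
  let v : NNReal := NNReal.mk (1 - δ ^ 2) (by nlinarith)
  have hv : (v : ℝ) = 1 - δ ^ 2 := rfl
  have hSlaw : P.map S = gaussianReal 0 v := by
    have h1 := sum_law u hu hind hlaw m
    have h2 : S = (fun x => s * x) ∘ (∑ i ∈ Finset.Icc 1 m, u i) := by
      ext ω; simp [hS]
    have h3 : Measurable (∑ i ∈ Finset.Icc 1 m, u i) := by
      have h4 : (∑ i ∈ Finset.Icc 1 m, u i) = fun ω => ∑ i ∈ Finset.Icc 1 m, u i ω := by
        ext ω; simp
      rw [h4]
      exact Finset.measurable_fun_sum _ fun i _ => hu i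
    rw [h2, ← Measure.map_map (by fun_prop) h3, h1,
      gaussianReal_map_const_mul, mul_zero]
    congr 1
    apply NNReal.coe_injective
    push_cast
    rw [hv, ← hms]
    simp [mul_comm]
  have hSU : IndepFun S U P := by
    have h := hind.indepFun_finsetSum_of_notMem hu (s := Finset.Icc 1 m) (i := m + 1) (by simp)
    have h' := h.comp (φ := fun x => s * x) (ψ := id) (by fun_prop) measurable_id
    have h2 : S = (fun x => s * x) ∘ (∑ i ∈ Finset.Icc 1 m, u i) := by
      ext ω; simp [hS]
    rw [h2]
    exact h'
  set T : Ω → ℝ := fun ω => S ω + δ * U ω with hT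
  have hTm : Measurable T := hSm.add (hUm.const_mul δ)
  have hTlaw : P.map T = _root_.stdGaussian := by
    have h1 : P.map (fun ω => δ * U ω) = gaussianReal 0 (NNReal.mk (δ ^ 2) (sq_nonneg δ)) := by
      have : (fun ω => δ * U ω) = (fun x => δ * x) ∘ U := rfl
      rw [this, ← Measure.map_map (by fun_prop) hUm, hUlaw, gaussianReal_map_const_mul]
      simp
    have h2 := gaussianReal_add_gaussianReal_of_indepFun
      (hSU.comp (φ := id) (ψ := fun x => δ * x) measurable_id (by fun_prop)) hSlaw h1
    have e : v + NNReal.mk (δ ^ 2) (sq_nonneg δ) = 1 := by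
      apply NNReal.coe_injective; push_cast; rw [hv]; simp
    rw [e, add_zero] at h2
    exact h2
  set X : Ω → ℝ := fun ω => S ω + Z ω with hX
  have hXm : Measurable X := hSm.add hZm
  have hXsum : (fun ω => ∑ i ∈ Finset.Icc 1 (m + 1), Y i ω) = X := by
    ext ω
    rw [Finset.sum_Icc_succ_top (by omega), hYl]
    simp only [hX, hS]
    rw [Finset.mul_sum]
    congr 1
    exact Finset.sum_congr rfl fun i hi => by rw [hYs i (Finset.mem_Icc.1 hi).2]
  have hSint : Integrable S P := by
    have := gauss_int v
    rw [← hSlaw] at this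
    exact this.comp_measurable hSm
  have hXint : Integrable X P := hSint.add (ZL2.integrable (by norm_num))
  have hUint : Integrable U P := tri (m + 1) (by omega) _ (gauss_int 1)
  refine ⟨Ω, m0, P, hP, F, Y, ⟨F.le, fun _ _ h => F.mono h, fun i _ hi => hYF i hi, ?_, ?_⟩, ?_, ?_, ?_, ?_, ?_, ?_⟩
  · intro i h1 h2
    by_cases h : i ≤ m
    · rw [hYs i h]; exact (uL2 i h1).const_mul s
    · obtain rfl : i = m + 1 := by omega
      rw [hYl]; exact ZL2
  · intro i h1 h2
    by_cases h : i ≤ m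
    · exact (hsmall i h1 h).1
    · obtain rfl : i = m + 1 := by omega
      rw [hYl]; exact hlast.1
  · rw [Finset.sum_Icc_succ_top (by omega), hYl, hlast2,
      Finset.sum_congr rfl fun i hi => hsmall2 i (Finset.mem_Icc.1 hi).1 (Finset.mem_Icc.1 hi).2]
    simp; linarith
  · have hall : ∀ᵐ ω ∂P, ∀ i ∈ Finset.Icc 1 m, (P[fun ω' => (Y i ω') ^ 2 | F (i - 1)]) ω = s ^ 2 := by
      rw [Finset.eventually_all]
      exact fun i hi => (hsmall i (Finset.mem_Icc.1 hi).1 (Finset.mem_Icc.1 hi).2).2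
    filter_upwards [hall, hlast.2] with ω h1 h2
    rw [Finset.sum_Icc_succ_top (by omega), hYl, Finset.sum_congr rfl h1]
    simp only [Nat.add_sub_cancel]
    rw [h2]
    simp; linarith
  · rw [hsump]
    have : 0 ≤ m * s ^ p * M := by positivity
    linarith
  · rw [hsump]; linarith
  · rw [hXsum]
    have hθ : 0 < π / δ := div_pos Real.pi_pos hδ
    have hcb : ∀ (ν : Measure ℝ) [IsProbabilityMeasure ν],
        Integrable (fun x => δ / π * Real.cos (π / δ * x)) ν := fun ν _ =>
      (Integrable.of_bound (C := 1) (by fun_prop)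
        (ae_of_all _ fun x => by simpa using Real.abs_cos_le_one _)).const_mul _
    have hPX : IsProbabilityMeasure (P.map X) := Measure.isProbabilityMeasure_map hXm.aemeasurable
    have hsG : IsProbabilityMeasure _root_.stdGaussian := by unfold _root_.stdGaussian; infer_instance
    have hw := wass_lower (P.map X) stdGaussian
      ((integrable_map_measure (by fun_prop) hXm.aemeasurable).2 hXint) (gauss_int 1)
      (fun x => δ / π * Real.cos (π / δ * x)) ?_ (by fun_prop) (hcb _) (hcb _)
      ⟨P.map (fun ω => (X ω, T ω)), Measure.isProbabilityMeasure_map (by fun_prop),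
        by rw [Measure.map_map (by fun_prop) (by fun_prop)]; rfl,
        by rw [Measure.map_map (by fun_prop) (by fun_prop), ← hTlaw]; rfl⟩
    · have hk := key_osc v δ hδ hδ2 hv
      have hprod : P.map (fun ω => (S ω, U ω)) = (gaussianReal 0 v).prod (gaussianReal 0 1) := by
        rw [← hSlaw, ← hUlaw]
        exact (indepFun_iff_map_prod_eq_prod_map_map hSm.aemeasurable hUm.aemeasurable).1 hSU
      have hm : Measurable (fun q : ℝ × ℝ =>
          Real.cos (π / δ * (q.1 + δ * gfn (Real.cos (π / δ * q.1)) q.2))) := by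
        have : Measurable (fun q : ℝ × ℝ => gfn (Real.cos (π / δ * q.1)) q.2) :=
          gfn_meas.comp (f := fun q : ℝ × ℝ => (Real.cos (π / δ * q.1), q.2)) (by fun_prop)
        fun_prop
      rw [← hprod, integral_map (by fun_prop) hm.aestronglyMeasurable] at hk
      rw [integral_const_mul, integral_const_mul, ← mul_sub,
        integral_map hXm.aemeasurable (by fun_prop)] at hw
      refine le_trans ?_ hw
      have h4 : δ / 32 ≤ δ / π * (1 / 8) := by
        rw [div_mul_eq_mul_div, div_le_div_iff₀ (by norm_num) Real.pi_pos]
        nlinarith [Real.pi_le_four]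
      refine h4.trans (mul_le_mul_of_nonneg_left hk (div_pos hδ Real.pi_pos).le)
    · intro x y
      have h1 : |Real.cos (π / δ * x) - Real.cos (π / δ * y)| ≤ |π / δ * x - π / δ * y| :=
        Real.abs_cos_sub_cos_le _ _
      rw [← mul_sub, abs_mul, abs_of_pos (div_pos hδ Real.pi_pos)]
      rw [← mul_sub, abs_mul, abs_of_pos hθ] at h1
      calc _ ≤ δ / π * (π / δ * |x - y|) := mul_le_mul_of_nonneg_left h1 (div_pos hδ Real.pi_pos).le
        _ = |x - y| := by field_simp
  · rw [hXsum, ← hTlaw]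
    refine (wass_upper P X T hXm hTm).trans ?_
    have h1 : ∫ ω, |X ω - T ω| ∂P ≤ ∫ ω, δ * (1 + |U ω|) ∂P := by
      refine integral_mono (hXint.sub (hSint.add (hUint.const_mul δ))).abs
        (((integrable_const _).add hUint.abs).const_mul δ) fun ω => ?_
      simp only [hX, hT, hZ]
      rw [add_sub_add_left_eq_sub, ← mul_sub, abs_mul, abs_of_pos hδ]
      exact mul_le_mul_of_nonneg_left (gfn_sub_le _ _) hδ.le
    refine h1.trans ?_
    rw [integral_const_mul, integral_add (integrable_const _) hUint.abs,
      tr (m + 1) (by omega) (fun w => |w|) (by fun_prop)]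
    simp only [integral_const, probReal_univ, smul_eq_mul, mul_one]
    nlinarith [gauss_abs]

lemma eventually_n (p : ℝ) (hp : 2 < p) : ∃ N₀ : ℕ, ∀ n : ℕ, N₀ < n →
    2 ≤ Real.log n ∧ 2 ≤ n ∧ Real.log n ^ p ≤ ((n : ℝ) / 2) ^ (p / 2 - 1) := by
  have ha : 0 < p / 2 - 1 := by linarith
  have h1 := (isLittleO_log_rpow_rpow_atTop p ha).def
    (c := ((2:ℝ) ^ (p / 2 - 1))⁻¹) (by positivity)
  have h2 := (tendsto_natCast_atTop_atTop (R := ℝ)).eventually h1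
  have h3 := (Real.tendsto_log_atTop.comp (tendsto_natCast_atTop_atTop (R := ℝ))).eventually_ge_atTop 2
  obtain ⟨N, hN⟩ := eventually_atTop.1 ((h2.and h3).and (eventually_ge_atTop 2))
  refine ⟨N, fun n hn => ?_⟩
  obtain ⟨⟨a, b⟩, c⟩ := hN n hn.le
  simp only [Function.comp] at b
  refine ⟨b, c, ?_⟩
  rw [Real.norm_of_nonneg (Real.rpow_nonneg (by linarith) _),
    Real.norm_of_nonneg (by positivity)] at a
  rw [Real.div_rpow (by positivity) (by norm_num), div_eq_inv_mul]
  exact a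

/-- Proposition 2.5(1): optimality of the `W₁` rate `L_p`. -/
theorem w1_optimal_Lp (p : ℝ) (hp : 2 < p) :
    ∃ (N₀ : ℕ) (c C : ℝ), 0 < c ∧ 0 < C ∧
      ∀ n : ℕ, N₀ < n →
        ∃ (Ω : Type) (m0 : MeasurableSpace Ω) (μ : Measure Ω) (_ : IsProbabilityMeasure μ)
          (F : ℕ → MeasurableSpace Ω) (Y : ℕ → Ω → ℝ) (sn : ℝ),
          IsMDS μ F n Y ∧ 0 < sn ∧
          sn ^ 2 = (∑ i ∈ Finset.Icc 1 n, ∫ ω, (Y i ω) ^ 2 ∂μ) ∧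
          ((fun ω => (∑ i ∈ Finset.Icc 1 n, (μ[fun ω' => (Y i ω') ^ 2 | F (i - 1)]) ω) / sn ^ 2)
          =ᵐ[μ] (fun _ => (1 : ℝ))) ∧
          ((∑ i ∈ Finset.Icc 1 n, ∫ ω, |Y i ω| ^ p ∂μ) ^ (1 / p) / sn) ≤ C / Real.log n ∧
          c * ((∑ i ∈ Finset.Icc 1 n, ∫ ω, |Y i ω| ^ p ∂μ) ^ (1 / p) / sn) ≤ wassersteinDist 1 (μ.map fun ω => (∑ i ∈ Finset.Icc 1 n, Y i ω) / sn) stdGaussian ∧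
          wassersteinDist 1 (μ.map fun ω => (∑ i ∈ Finset.Icc 1 n, Y i ω) / sn) stdGaussian ≤ C * ((∑ i ∈ Finset.Icc 1 n, ∫ ω, |Y i ω| ^ p ∂μ) ^ (1 / p) / sn) := by
  obtain ⟨N₀, hN⟩ := eventually_n p hp
  set M := ∫ w, |w| ^ p ∂(gaussianReal 0 1) with hM
  have hM0 : 0 ≤ M := integral_nonneg fun w => by positivity
  set K := (1 + 2 * M) ^ (1 / p) with hK
  have hK0 : 0 < K := by positivity
  have hp0 : 0 < p := by linarith
  refine ⟨N₀, 1 / (32 * K), K + 2, by positivity, by positivity, fun n hn => ?_⟩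
  obtain ⟨hlog, hn2, hpw⟩ := hN n hn
  obtain ⟨m, rfl⟩ : ∃ m, n = m + 1 := ⟨n - 1, by omega⟩
  have hm1 : (1:ℝ) ≤ m := by exact_mod_cast (by omega : 1 ≤ m)
  have hm0 : (0:ℝ) < m := by linarith
  set l := Real.log ((m + 1 : ℕ) : ℝ) with hl
  have hl0 : 0 < l := by linarith
  set δ := 1 / l with hδdef
  have hδ : 0 < δ := by positivity
  have hδ2 : δ ≤ 1 / 2 := one_div_le_one_div_of_le (by norm_num) hlog
  have hd : 0 ≤ 1 - δ ^ 2 := by nlinarith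
  set s := Real.sqrt ((1 - δ ^ 2) / m) with hs
  have hs2 : s ^ 2 = (1 - δ ^ 2) / m := Real.sq_sqrt (by positivity)
  have hs0 : 0 ≤ s := Real.sqrt_nonneg _
  have hms : m * s ^ 2 = 1 - δ ^ 2 := by rw [hs2]; field_simp
  have hsp : m * s ^ p ≤ δ ^ p := by
    have h1 : s ^ p = (s ^ 2) ^ (p / 2) := by
      rw [← Real.rpow_natCast, ← Real.rpow_mul hs0]; congr 1; push_cast; ring
    have h2 : s ^ 2 ≤ 1 / m := by
      rw [hs2]; exact div_le_div_of_nonneg_right (by nlinarith) hm0.le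
    have h3 : s ^ p ≤ (1 / m) ^ (p / 2) := by
      rw [h1]; exact Real.rpow_le_rpow (by positivity) h2 (by positivity)
    have h4 : l ^ p ≤ (m:ℝ) ^ (p / 2 - 1) := by
      refine hpw.trans (Real.rpow_le_rpow (by positivity) ?_ (by linarith))
      push_cast; linarith
    have h5 : m * (1 / (m:ℝ)) ^ (p / 2) = 1 / (m:ℝ) ^ (p / 2 - 1) := by
      rw [Real.div_rpow (by norm_num) hm0.le, Real.one_rpow, Real.rpow_sub_one hm0.ne']
      field_simp
    have h6 : δ ^ p = 1 / l ^ p := by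
      rw [hδdef, Real.div_rpow (by norm_num) hl0.le, Real.one_rpow]
    calc m * s ^ p ≤ m * (1 / (m:ℝ)) ^ (p / 2) := mul_le_mul_of_nonneg_left h3 hm0.le
      _ = 1 / (m:ℝ) ^ (p / 2 - 1) := h5
      _ ≤ 1 / l ^ p := one_div_le_one_div_of_le (by positivity) h4
      _ = δ ^ p := h6.symm
  obtain ⟨Ω, m0, μ, hμ, F, Y, hmds, hsum, hV, hlo, hup, hw1, hw2⟩ :=
    construction p hp m δ s hδ hδ2 hs0 hms
  refine ⟨Ω, m0, μ, hμ, F, Y, 1, hmds, one_pos, by rw [hsum]; norm_num, ?_, ?_⟩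
  · simpa using hV
  simp only [div_one]
  set Q := ∑ i ∈ Finset.Icc 1 (m + 1), ∫ ω, |Y i ω| ^ p ∂μ with hQ
  have hδp : 0 < δ ^ p := by positivity
  have hQ0 : 0 ≤ Q := by linarith
  have hQup : Q ≤ δ ^ p * (1 + 2 * M) := by
    refine hup.trans ?_
    have := mul_le_mul_of_nonneg_right hsp hM0
    linarith
  have e : (δ ^ p) ^ (1 / p) = δ := by
    rw [← Real.rpow_mul hδ.le, mul_one_div_cancel hp0.ne', Real.rpow_one]
  have hL1 : δ ≤ Q ^ (1 / p) := by
    conv_lhs => rw [← e]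
    exact Real.rpow_le_rpow hδp.le hlo (by positivity)
  have hL2 : Q ^ (1 / p) ≤ K * δ := by
    refine (Real.rpow_le_rpow hQ0 hQup (by positivity)).trans ?_
    rw [Real.mul_rpow hδp.le (by positivity), e, mul_comm]
  refine ⟨?_, ?_, ?_⟩
  · refine hL2.trans ?_
    rw [hδdef, mul_one_div]
    exact div_le_div_of_nonneg_right (by linarith) hl0.le
  · refine le_trans ?_ hw1
    calc 1 / (32 * K) * Q ^ (1 / p) ≤ 1 / (32 * K) * (K * δ) :=
          mul_le_mul_of_nonneg_left hL2 (by positivity)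
      _ = δ / 32 := by field_simp
  · refine hw2.trans ?_
    nlinarith
end
end

section
/- Let r ≥ 1 be an integer, let f: ℝ → ℝ be (r−1)-times differentiable with f^{(r−1)} 1-Lipschitz, let σ > 0, and define f_σ(x) = E[f(x + σN)] where N is a standard normal random variable. Then for every integer k ≥ r, f_σ is k-times differentiable and sup_{x∈ℝ} |f_σ^{(k)}(x)| ≤ C_{k+1−r} · σ^{r−k}, where C_m = ∫_ℝ |u · φ^{(m)}(u)| du and φ(u) = (2π)^{-1/2} e^{-u²/2} is the standard normal density. -/
open MeasureTheory ProbabilityTheory Real Filter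

noncomputable section

open scoped ENNReal

/-- Polynomial growth. -/
def PGrow (F : ℝ → ℝ) : Prop := ∃ (C : ℝ) (n : ℕ), 0 ≤ C ∧ ∀ x, |F x| ≤ C * (1 + |x|) ^ n

/-- Rapid decay. -/
def RDecay (ψ : ℝ → ℝ) : Prop := ∀ n : ℕ, ∃ C : ℝ, 0 ≤ C ∧ ∀ u, (1 + |u|) ^ n * |ψ u| ≤ C

lemma pgrow_poly (P : Polynomial ℤ) : PGrow (fun x => Polynomial.aeval x P) := by
  induction P using Polynomial.induction_on' with
  | add p q hp hq =>
    obtain ⟨C, n, hC, h1⟩ := hp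
    obtain ⟨D, m, hD, h2⟩ := hq
    refine ⟨C + D, n + m, by positivity, fun x => ?_⟩
    have hx : (1:ℝ) ≤ 1 + |x| := by linarith [abs_nonneg x]
    have a1 : (1 + |x|) ^ n ≤ (1 + |x|) ^ (n + m) := pow_le_pow_right₀ hx (by omega)
    have a2 : (1 + |x|) ^ m ≤ (1 + |x|) ^ (n + m) := pow_le_pow_right₀ hx (by omega)
    have := mul_le_mul_of_nonneg_left a1 hC
    have := mul_le_mul_of_nonneg_left a2 hD
    have h1 := h1 x
    have h2 := h2 x
    simp only [map_add] at *
    have := abs_add_le (Polynomial.aeval x p) (Polynomial.aeval x q)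
    linarith
  | monomial n a =>
    refine ⟨|(a:ℝ)|, n, abs_nonneg _, fun x => ?_⟩
    simp only [Polynomial.aeval_monomial, abs_mul, abs_pow]
    have : |x| ^ n ≤ (1 + |x|) ^ n := pow_le_pow_left₀ (abs_nonneg x) (by linarith) n
    have := mul_le_mul_of_nonneg_left this (abs_nonneg (a:ℝ))
    simpa using this

lemma exp_bound (N : ℕ) (u : ℝ) :
    (1 + |u|) ^ N * Real.exp (-(u ^ 2 / 2)) ≤ N.factorial * Real.exp (3 / 2) := by
  have h := Real.pow_div_factorial_le_exp (x := 1 + |u|) (by positivity) N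
  rw [div_le_iff₀ (by positivity)] at h
  have h3 : Real.exp (1 + |u|) * Real.exp (-(u ^ 2 / 2)) ≤ Real.exp (3 / 2) := by
    rw [← Real.exp_add]
    apply Real.exp_le_exp.2
    nlinarith [sq_nonneg (|u| - 1), sq_abs u]
  calc _ ≤ (Real.exp (1 + |u|) * N.factorial) * Real.exp (-(u ^ 2 / 2)) := by gcongr
    _ = N.factorial * (Real.exp (1 + |u|) * Real.exp (-(u ^ 2 / 2))) := by ring
    _ ≤ _ := by gcongr

/-- The standard normal density. -/
def gphi (v : ℝ) : ℝ := Real.exp (-(v ^ 2) / 2) / Real.sqrt (2 * Real.pi)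

lemma gphi_contDiff : ContDiff ℝ ⊤ gphi := by
  unfold gphi
  fun_prop

lemma gphi_iter (m : ℕ) (u : ℝ) : iteratedDeriv m gphi u =
    (Real.sqrt (2 * Real.pi))⁻¹ *
      ((-1 : ℝ) ^ m * Polynomial.aeval u (Polynomial.hermite m) * Real.exp (-(u ^ 2 / 2))) := by
  have : gphi = fun v => (Real.sqrt (2 * Real.pi))⁻¹ * (fun y => Real.exp (-(y ^ 2 / 2))) v := by
    ext v
    simp only [gphi, neg_div]
    rw [div_eq_inv_mul]
  rw [this, iteratedDeriv_const_mul_field, iteratedDeriv_eq_iterate,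
    Polynomial.deriv_gaussian_eq_hermite_mul_gaussian]

lemma gphi_hasDeriv (m : ℕ) (u : ℝ) :
    HasDerivAt (iteratedDeriv m gphi) (iteratedDeriv (m + 1) gphi u) u := by
  rw [iteratedDeriv_succ]
  apply DifferentiableAt.hasDerivAt
  exact (gphi_contDiff.differentiable_iteratedDeriv m (by
    exact_mod_cast WithTop.coe_lt_top _)) u

lemma gphi_decay (m : ℕ) : RDecay (iteratedDeriv m gphi) := by
  intro n
  obtain ⟨C, d, hC, h⟩ := pgrow_poly (Polynomial.hermite m)
  refine ⟨(Real.sqrt (2 * Real.pi))⁻¹ * (C * ((n + d).factorial * Real.exp (3 / 2))),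
    by positivity, fun u => ?_⟩
  have e := exp_bound (n + d) u
  rw [gphi_iter, abs_mul, abs_mul, abs_mul, abs_pow, abs_neg, abs_one, one_pow, one_mul,
    abs_of_nonneg (Real.exp_pos _).le, abs_of_nonneg (by positivity : 0 ≤ (Real.sqrt (2 * Real.pi))⁻¹)]
  calc _ = (Real.sqrt (2 * Real.pi))⁻¹ * ((1 + |u|) ^ n * Real.exp (-(u ^ 2 / 2)) *
          |Polynomial.aeval u (Polynomial.hermite m)|) := by ring
    _ ≤ (Real.sqrt (2 * Real.pi))⁻¹ * ((1 + |u|) ^ n * Real.exp (-(u ^ 2 / 2)) *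
          (C * (1 + |u|) ^ d)) := by
        gcongr
        exact h u
    _ = (Real.sqrt (2 * Real.pi))⁻¹ * (C * ((1 + |u|) ^ (n + d) * Real.exp (-(u ^ 2 / 2)))) := by
        ring
    _ ≤ _ := by gcongr

lemma unif_bound {F ψ : ℝ → ℝ} (hF : PGrow F) (hψ : RDecay ψ) {σ : ℝ} (hσ : 0 < σ) (x₀ : ℝ) :
    ∃ B : ℝ, ∀ x ∈ Metric.ball x₀ 1, ∀ z, |F z * ψ ((z - x) / σ)| ≤ B * (1 + z ^ 2)⁻¹ := by
  obtain ⟨C, n, hC, h⟩ := hF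
  obtain ⟨D, hD, h'⟩ := hψ (n + 2)
  set K : ℝ := 2 + |x₀| + σ with hK
  refine ⟨C * K ^ (n + 2) * D, fun x hx z => ?_⟩
  set u := (z - x) / σ with hu
  have hz : z = x + σ * u := by rw [hu]; field_simp; ring
  have hx1 : |x| ≤ |x₀| + 1 := by
    have h1 : |x - x₀| < 1 := by simpa [Real.dist_eq] using hx
    have h2 := abs_add_le (x - x₀) x₀
    simp only [sub_add_cancel] at h2
    linarith
  have hzK : 1 + |z| ≤ K * (1 + |u|) := by
    have h1 : |z| ≤ |x| + σ * |u| := by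
      rw [hz]
      refine (abs_add_le _ _).trans ?_
      rw [abs_mul, abs_of_pos hσ]
    nlinarith [abs_nonneg u, abs_nonneg x₀, mul_nonneg (abs_nonneg u) (abs_nonneg x₀)]
  rw [← div_eq_mul_inv, le_div_iff₀ (by positivity), abs_mul]
  have hz2 : 1 + z ^ 2 ≤ (1 + |z|) ^ 2 := by nlinarith [abs_nonneg z, sq_abs z]
  calc |F z| * |ψ u| * (1 + z ^ 2) ≤ (C * (1 + |z|) ^ n) * |ψ u| * (1 + |z|) ^ 2 := by
        gcongr
        exact h z
    _ = C * (1 + |z|) ^ (n + 2) * |ψ u| := by ring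
    _ ≤ C * (K * (1 + |u|)) ^ (n + 2) * |ψ u| := by gcongr
    _ = C * K ^ (n + 2) * ((1 + |u|) ^ (n + 2) * |ψ u|) := by rw [mul_pow]; ring
    _ ≤ _ := by
        gcongr
        exact h' u

lemma sm_integrable {F ψ : ℝ → ℝ} (hF : PGrow F) (hFc : Continuous F) (hψ : RDecay ψ)
    (hψc : Continuous ψ) {σ : ℝ} (hσ : 0 < σ) (x : ℝ) :
    Integrable (fun z => F z * ψ ((z - x) / σ)) := by
  obtain ⟨B, hB⟩ := unif_bound hF hψ hσ x
  refine (integrable_inv_one_add_sq.const_mul B).mono'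
    (Continuous.aestronglyMeasurable (by fun_prop)) (ae_of_all _ fun z => ?_)
  exact hB x (Metric.mem_ball_self one_pos) z

lemma sm_hasDeriv {F ψ ψ' : ℝ → ℝ} (hF : PGrow F) (hFc : Continuous F) (hψ : RDecay ψ)
    (hψd : ∀ u, HasDerivAt ψ (ψ' u) u) (hψ' : RDecay ψ') (hψ'c : Continuous ψ')
    {σ : ℝ} (hσ : 0 < σ) (x : ℝ) :
    HasDerivAt (fun x => ∫ z, F z * ψ ((z - x) / σ))
      (-σ⁻¹ * ∫ z, F z * ψ' ((z - x) / σ)) x := by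
  have hψc : Continuous ψ := continuous_iff_continuousAt.2 fun u => (hψd u).continuousAt
  obtain ⟨B, hB⟩ := unif_bound hF hψ' hσ x
  rw [← integral_const_mul]
  refine (hasDerivAt_integral_of_dominated_loc_of_deriv_le
    (F := fun x z => F z * ψ ((z - x) / σ))
    (F' := fun x z => -σ⁻¹ * (F z * ψ' ((z - x) / σ)))
    (bound := fun z => σ⁻¹ * (B * (1 + z ^ 2)⁻¹))
    (Metric.ball_mem_nhds x one_pos) ?_ (sm_integrable hF hFc hψ hψc hσ x) ?_ ?_ ?_ ?_).2
  · exact Eventually.of_forall fun y => Continuous.aestronglyMeasurable (by fun_prop)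
  · exact Continuous.aestronglyMeasurable (by fun_prop)
  · refine ae_of_all _ fun z y hy => ?_
    rw [Real.norm_eq_abs, abs_mul, abs_neg, abs_of_pos (inv_pos.2 hσ)]
    have := hB y hy z
    gcongr
  · exact (integrable_inv_one_add_sq.const_mul B).const_mul _
  · refine ae_of_all _ fun z y hy => ?_
    have h1 : HasDerivAt (fun y => (z - y) / σ) (-1 / σ) y :=
      ((hasDerivAt_id y).const_sub z).div_const σ
    have h2 := ((hψd ((z - y) / σ)).comp y h1).const_mul (F z)
    refine h2.congr_deriv ?_
    ring

lemma sm_parts {F F' ψ ψ' : ℝ → ℝ} (hF : PGrow F) (hFd : ∀ u, HasDerivAt F (F' u) u)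
    (hF' : PGrow F') (hF'c : Continuous F') (hψ : RDecay ψ)
    (hψd : ∀ u, HasDerivAt ψ (ψ' u) u) (hψ' : RDecay ψ') (hψ'c : Continuous ψ')
    {σ : ℝ} (hσ : 0 < σ) (x : ℝ) :
    (∫ z, F z * ψ' ((z - x) / σ)) = -σ * ∫ z, F' z * ψ ((z - x) / σ) := by
  have hψc : Continuous ψ := continuous_iff_continuousAt.2 fun u => (hψd u).continuousAt
  have hFc : Continuous F := continuous_iff_continuousAt.2 fun u => (hFd u).continuousAt
  have key := integral_mul_deriv_eq_deriv_mul_of_integrable (u := F) (u' := F')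
    (v := fun z => ψ ((z - x) / σ)) (v' := fun z => σ⁻¹ * ψ' ((z - x) / σ))
    (fun z _ => hFd z) (fun z _ => by
      have h1 : HasDerivAt (fun z => (z - x) / σ) (1 / σ) z :=
        ((hasDerivAt_id z).sub_const x).div_const σ
      have h2 := (hψd ((z - x) / σ)).comp z h1
      refine h2.congr_deriv ?_
      ring)
    (by
      convert (sm_integrable hF hFc hψ' hψ'c hσ x).const_mul σ⁻¹ using 1
      ext z
      simp only [Pi.mul_apply]
      ring)
    (sm_integrable hF' hF'c hψ hψc hσ x) (sm_integrable hF hFc hψ hψc hσ x)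
  have e : (fun z => F z * (σ⁻¹ * ψ' ((z - x) / σ))) =
      fun z => σ⁻¹ * (F z * ψ' ((z - x) / σ)) := by
    ext z
    ring
  rw [e, integral_const_mul] at key
  rw [neg_mul, ← mul_neg, ← key, mul_inv_cancel_left₀ hσ.ne']

lemma pgrow_of_deriv {F F' : ℝ → ℝ} (hFd : ∀ u, HasDerivAt F (F' u) u) (hF' : PGrow F') :
    PGrow F := by
  obtain ⟨C, n, hC, h⟩ := hF'
  refine ⟨|F 0| + C, n + 1, by positivity, fun x => ?_⟩
  have h1 : ‖F x - F 0‖ ≤ (C * (1 + |x|) ^ n) * ‖x - 0‖ := by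
    refine (convex_Icc (-|x|) |x|).norm_image_sub_le_of_norm_hasDerivWithin_le
      (fun y _ => (hFd y).hasDerivWithinAt) (fun y hy => ?_) ?_ ?_
    · have hy' : |y| ≤ |x| := abs_le.2 hy
      refine (h y).trans ?_
      gcongr
    · simp
    · exact ⟨neg_abs_le x, le_abs_self x⟩
  rw [sub_zero, Real.norm_eq_abs, Real.norm_eq_abs] at h1
  have h2 : |F x| ≤ |F 0| + |F x - F 0| := by
    have := abs_add_le (F 0) (F x - F 0)
    rwa [add_sub_cancel] at this
  have h3 : (1:ℝ) ≤ (1 + |x|) ^ (n + 1) := one_le_pow₀ (by linarith [abs_nonneg x])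
  have h4 : (C * (1 + |x|) ^ n) * |x| ≤ C * (1 + |x|) ^ (n + 1) := by
    rw [pow_succ, ← mul_assoc]
    gcongr
    linarith
  nlinarith [abs_nonneg (F 0)]

lemma pgrow_lip {h : ℝ → ℝ} (hl : LipschitzWith 1 h) : PGrow h := by
  refine ⟨|h 0| + 1, 1, by positivity, fun x => ?_⟩
  have h1 := hl.dist_le_mul x 0
  simp only [Real.dist_eq, sub_zero, NNReal.coe_one, one_mul] at h1
  have h2 : |h x| ≤ |h 0| + |h x - h 0| := by
    have := abs_add_le (h 0) (h x - h 0)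
    rwa [add_sub_cancel] at this
  nlinarith [abs_nonneg (h 0), abs_nonneg x, mul_nonneg (abs_nonneg (h 0)) (abs_nonneg x)]

lemma subst_int (G : ℝ → ℝ) {σ : ℝ} (hσ : 0 < σ) (x : ℝ) :
    (∫ z, G ((z - x) / σ)) = σ * ∫ u, G u := by
  rw [integral_sub_right_eq_self (fun z => G (z / σ)) x, Measure.integral_comp_div,
    abs_of_pos hσ, smul_eq_mul]

lemma gphi_cont (m : ℕ) : Continuous (iteratedDeriv m gphi) :=
  continuous_iff_continuousAt.2 fun u => (gphi_hasDeriv m u).continuousAt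

lemma smooth_eq (f : ℝ → ℝ) {σ : ℝ} (hσ : 0 < σ) (x : ℝ) :
    (∫ y, f (x + σ * y) ∂stdGaussian) = σ⁻¹ * ∫ z, f z * iteratedDeriv 0 gphi ((z - x) / σ) := by
  have := subst_int (fun u => f (x + σ * u) * gphi u) hσ x
  have e : (fun z => f (x + σ * ((z - x) / σ)) * gphi ((z - x) / σ)) =
      fun z => f z * iteratedDeriv 0 gphi ((z - x) / σ) := by
    ext z
    rw [mul_div_cancel₀ _ hσ.ne', add_sub_cancel, iteratedDeriv_zero]
  rw [e] at this
  rw [this, inv_mul_cancel_left₀ hσ.ne', _root_.stdGaussian,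
    integral_gaussianReal_eq_integral_smul one_ne_zero]
  congr 1
  ext y
  simp only [gaussianPDFReal, gphi, smul_eq_mul, NNReal.coe_one, mul_one, sub_zero]
  rw [div_eq_inv_mul]
  ring

lemma smooth_iter {f : ℝ → ℝ} (hF : PGrow f) (hFc : Continuous f) {σ : ℝ} (hσ : 0 < σ) (k : ℕ) :
    iteratedDeriv k (fun x => ∫ y, f (x + σ * y) ∂stdGaussian) =
      fun x => σ⁻¹ * (-σ⁻¹) ^ k * ∫ z, f z * iteratedDeriv k gphi ((z - x) / σ) := by
  induction k with
  | zero =>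
    ext x
    rw [iteratedDeriv_zero, smooth_eq f hσ, pow_zero, mul_one]
  | succ k ih =>
    rw [iteratedDeriv_succ, ih]
    ext x
    rw [((sm_hasDeriv hF hFc (gphi_decay k) (gphi_hasDeriv k) (gphi_decay (k + 1))
      (gphi_cont (k + 1)) hσ x).const_mul _).deriv]
    ring

lemma parts_iter (s : ℕ) {f : ℝ → ℝ} (hf : ContDiff ℝ s f)
    (hg : PGrow (iteratedDeriv s f)) {σ : ℝ} (hσ : 0 < σ) (x : ℝ) :
    PGrow f ∧ ∀ m, (∫ z, f z * iteratedDeriv (s + m) gphi ((z - x) / σ)) =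
      (-σ) ^ s * ∫ z, iteratedDeriv s f z * iteratedDeriv m gphi ((z - x) / σ) := by
  induction s generalizing f with
  | zero => simpa using hg
  | succ s ih =>
    have hf' : ContDiff ℝ s (deriv f) := (contDiff_succ_iff_deriv.1 (by exact_mod_cast hf)).2.2
    have hd : ∀ u, HasDerivAt f (deriv f u) u := fun u =>
      ((contDiff_succ_iff_deriv (n := (s : ℕ)).1 (by exact_mod_cast hf)).1 u).hasDerivAt
    rw [iteratedDeriv_succ'] at hg ⊢
    obtain ⟨g1, h1⟩ := ih hf' hg
    have g0 := pgrow_of_deriv hd g1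
    refine ⟨g0, fun m => ?_⟩
    have := sm_parts g0 hd g1 hf'.continuous (gphi_decay (s + m)) (gphi_hasDeriv (s + m))
      (gphi_decay (s + m + 1)) (gphi_cont (s + m + 1)) hσ x
    rw [show s + 1 + m = s + m + 1 by ring, this, h1]
    ring

lemma lip_bound {h : ℝ → ℝ} (hl : LipschitzWith 1 h) {σ : ℝ} (hσ : 0 < σ) (m : ℕ) (x : ℝ) :
    |∫ z, h z * iteratedDeriv (m + 1) gphi ((z - x) / σ)| ≤
      σ ^ 2 * ∫ u, |u * iteratedDeriv (m + 1) gphi u| := by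
  set ψ := iteratedDeriv (m + 1) gphi with hψ
  have c1 : PGrow (fun _ : ℝ => (1:ℝ)) := ⟨1, 0, by norm_num, fun x => by simp⟩
  have c0 : PGrow (fun _ : ℝ => (0:ℝ)) := ⟨1, 0, by norm_num, fun x => by simp⟩
  have z0 := sm_parts c1 (fun u => hasDerivAt_const u (1:ℝ)) c0 continuous_const (gphi_decay m)
    (gphi_hasDeriv m) (gphi_decay (m + 1)) (gphi_cont (m + 1)) hσ x
  simp only [one_mul, zero_mul, integral_zero, mul_zero] at z0
  have i1 := sm_integrable (pgrow_lip hl) hl.continuous (gphi_decay (m + 1))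
    (gphi_cont (m + 1)) hσ x
  have i2 := sm_integrable c1 continuous_const (gphi_decay (m + 1)) (gphi_cont (m + 1)) hσ x
  simp only [one_mul] at i2
  have e : (∫ z, h z * ψ ((z - x) / σ)) = ∫ z, (h z - h x) * ψ ((z - x) / σ) := by
    simp only [sub_mul]
    rw [integral_sub i1 (i2.const_mul _), integral_const_mul, z0, mul_zero, sub_zero]
  have pid : PGrow (fun z : ℝ => z - x) :=
    pgrow_lip (LipschitzWith.of_dist_le_mul fun a b => by simp)
  have i3 := sm_integrable pid (by fun_prop) (gphi_decay (m + 1)) (gphi_cont (m + 1)) hσ x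
  rw [e]
  have s := subst_int (fun u => |σ * u * ψ u|) hσ x
  have e2 : (∫ u, |σ * u * ψ u|) = σ * ∫ u, |u * ψ u| := by
    rw [← integral_const_mul]
    congr 1
    ext u
    rw [mul_assoc, abs_mul, abs_of_pos hσ]
  rw [e2, ← mul_assoc, ← sq] at s
  rw [← s]
  refine abs_integral_le_integral_abs.trans (integral_mono_of_nonneg
    (ae_of_all _ fun z => abs_nonneg _) ?_ (ae_of_all _ fun z => ?_))
  · convert i3.abs using 1
    ext z
    rw [mul_div_cancel₀ _ hσ.ne']
  · simp only
    rw [mul_div_cancel₀ _ hσ.ne', abs_mul, abs_mul]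
    have := hl.dist_le_mul z x
    simp only [Real.dist_eq, NNReal.coe_one, one_mul] at this
    gcongr

/-- Lemma 3.3: regularity of the Gaussian smoothing `f_σ(x) = E[f(x+σN)]`. -/
theorem gaussian_smoothing_bound (r : ℕ) (hr : 1 ≤ r) (f : ℝ → ℝ)
    (hf : ContDiff ℝ (r - 1 : ℕ) f) (hlip : LipschitzWith 1 (iteratedDeriv (r - 1) f))
    (σ : ℝ) (hσ : 0 < σ) (k : ℕ) (hk : r ≤ k) :
    ContDiff ℝ (k : ℕ∞) (fun x => ∫ y, f (x + σ * y) ∂stdGaussian) ∧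
    ∀ x : ℝ,
      |iteratedDeriv k (fun x' => ∫ y, f (x' + σ * y) ∂stdGaussian) x| ≤
        (∫ u, |u * iteratedDeriv (k + 1 - r)
            (fun v => Real.exp (-(v ^ 2) / 2) / Real.sqrt (2 * Real.pi)) u|) *
          σ ^ ((r : ℝ) - (k : ℝ)) := by
  obtain ⟨s, rfl⟩ : ∃ s, r = s + 1 := ⟨r - 1, by omega⟩
  obtain ⟨m, rfl⟩ : ∃ m, k = s + 1 + m := ⟨k - (s + 1), by omega⟩
  simp only [Nat.add_sub_cancel] at hf hlip
  have hg := pgrow_lip hlip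
  have hF := (parts_iter s hf hg hσ 0).1
  constructor
  · refine contDiff_of_differentiable_iteratedDeriv fun j _ => ?_
    rw [smooth_iter hF hf.continuous hσ j]
    intro x
    exact ((sm_hasDeriv hF hf.continuous (gphi_decay j) (gphi_hasDeriv j) (gphi_decay (j + 1))
      (gphi_cont (j + 1)) hσ x).const_mul _).differentiableAt
  · intro x
    rw [smooth_iter hF hf.continuous hσ]
    have e1 : s + 1 + m + 1 - (s + 1) = m + 1 := by omega
    rw [e1]
    change _ ≤ (∫ u, |u * iteratedDeriv (m + 1) gphi u|) * _
    have p := (parts_iter s hf hg hσ x).2 (m + 1)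
    rw [show s + (m + 1) = s + 1 + m by ring] at p
    simp only
    rw [p]
    have b := lip_bound hlip hσ m x
    have hs : σ ^ (((s + 1 : ℕ) : ℝ) - ((s + 1 + m : ℕ) : ℝ)) = (σ⁻¹) ^ m := by
      rw [show (((s + 1 : ℕ) : ℝ) - ((s + 1 + m : ℕ) : ℝ)) = -(m : ℝ) by push_cast; ring,
        Real.rpow_neg hσ.le, Real.rpow_natCast, inv_pow]
    rw [hs, abs_mul, abs_mul, abs_mul, abs_pow, abs_pow, abs_neg, abs_neg,
      abs_of_pos (inv_pos.2 hσ), abs_of_pos hσ]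
    calc _ ≤ σ⁻¹ * σ⁻¹ ^ (s + 1 + m) * (σ ^ s *
          (σ ^ 2 * ∫ u, |u * iteratedDeriv (m + 1) gphi u|)) := by gcongr
      _ = _ := by
        rw [pow_add, pow_add, inv_pow σ s]
        field_simp
end
end
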